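/- Let x₀ < x₁ and T > 0. Let F : ℝ × ℝ × ℝ × [x₀,x₁] × [0,T] → ℝ, written F = F(r,p,q,x,t), be infinitely differentiable with ∂F/∂r > 0 everywhere (parabolicity). Let u, φ : [x₀,x₁] × [0,T] → ℝ be infinitely differentiable, both satisfying the equation w_t = F(w_{xx}, w_x, w, x, t) pointwise, and suppose u(xᵢ,t) ≠ φ(xᵢ,t) for i = 0,1 and all t ∈ [0,T] (no intersections on the lateral boundary). For t ∈ [0,T] let Z(t) = {x ∈ [x₀,x₁] : u(x,t) = φ(x,t)} be the set of intersections. Then: (a) Z(t) is a finite set for every t ∈ (0,T]; and (b) if at some time t̃ ∈ (0,T) there is x̃ ∈ (x₀,x₁) with u(x̃,t̃) = φ(x̃,t̃) and u_x(x̃,t̃) = φ_x(x̃,t̃) (a tangential intersection), then for all t₁, t₂ with 0 < t₁ < t̃ < t₂ ≤ T, the cardinality of Z(t₂) is strictly smaller than the cardinality of Z(t₁). -/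

import Mathlib

open Set Filter Topology MeasureTheory
open scoped ContDiff

theorem continuousOn_section {E G : Type} [TopologicalSpace E] [TopologicalSpace G] {s : Set E}
    {k : Set ℝ} {g : E → ℝ → G}
    (hg : ContinuousOn (Function.uncurry g) (s ×ˢ k)) {z : E} (hz : z ∈ s) :
    ContinuousOn (g z) k :=
  hg.comp (f := fun θ : ℝ => (z, θ)) (by fun_prop) fun _ hθ => ⟨hz, hθ⟩

theorem intervalIntegrable_section {E G : Type} [TopologicalSpace E] [NormedAddCommGroup G]
    {s : Set E} {c d : ℝ} (hcd : c ≤ d) {g : E → ℝ → G}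
    (hg : ContinuousOn (Function.uncurry g) (s ×ˢ Icc c d)) {z : E} (hz : z ∈ s) :
    IntervalIntegrable (g z) volume c d := by
  apply ContinuousOn.intervalIntegrable
  rw [uIcc_of_le hcd]
  exact continuousOn_section hg hz

section ParametricIntegral

variable {E G : Type} [NormedAddCommGroup E] [NormedSpace ℝ E]
  [NormedAddCommGroup G] [NormedSpace ℝ G]

theorem hasFDerivWithinAt_integral_param {s : Set E} (hs : Convex ℝ s) {c d : ℝ} (hcd : c ≤ d)
    {g : E → ℝ → G} {g' : E → ℝ → E →L[ℝ] G}
    (hg : ∀ z ∈ s, ∀ θ ∈ Icc c d, HasFDerivWithinAt (fun y => g y θ) (g' z θ) s z)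
    (hgc : ContinuousOn (Function.uncurry g) (s ×ˢ Icc c d))
    (hgc' : ContinuousOn (Function.uncurry g') (s ×ˢ Icc c d)) {z : E} (hz : z ∈ s) :
    HasFDerivWithinAt (fun y => ∫ θ in c..d, g y θ) (∫ θ in c..d, g' z θ) s z := by
  rw [hasFDerivWithinAt_iff_isLittleO, Asymptotics.isLittleO_iff]
  intro ε hε
  obtain ⟨δ, hδ, hδε⟩ : ∃ δ > 0, δ * |d - c| ≤ ε :=
    ⟨ε / (|d - c| + 1), by positivity, by
      rw [div_mul_eq_mul_div, div_le_iff₀ (by positivity)]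
      nlinarith [abs_nonneg (d - c)]⟩
  obtain ⟨v, hv, hvδ⟩ := isCompact_Icc.mem_uniformity_of_prod hgc' hz
    (Metric.dist_mem_uniformity hδ)
  obtain ⟨r, hr, hrv⟩ := Metric.mem_nhdsWithin_iff.1 hv
  filter_upwards [inter_mem self_mem_nhdsWithin
    (mem_nhdsWithin_of_mem_nhds (Metric.ball_mem_nhds z hr))]
    with y hy
  have hI := intervalIntegrable_section hcd hgc' hz
  rw [ContinuousLinearMap.intervalIntegral_apply hI,
    ← intervalIntegral.integral_sub (intervalIntegrable_section hcd hgc hy.1)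
      (intervalIntegrable_section hcd hgc hz), ← intervalIntegral.integral_sub
      ((intervalIntegrable_section hcd hgc hy.1).sub (intervalIntegrable_section hcd hgc hz))
      (by
        apply ContinuousOn.intervalIntegrable
        rw [uIcc_of_le hcd]
        exact (continuousOn_section hgc' hz).clm_apply continuousOn_const)]
  have key : ∀ θ ∈ Set.uIoc c d, ‖g y θ - g z θ - g' z θ (y - z)‖ ≤ δ * ‖y - z‖ := by
    intro θ hθ
    rw [uIoc_of_le hcd] at hθ
    have hθ' : θ ∈ Icc c d := Ioc_subset_Icc_self hθ
    refine (hs.inter (convex_ball z r)).norm_image_sub_le_of_norm_hasFDerivWithin_le'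
      (f := fun y => g y θ) (f' := fun y => g' y θ) (C := δ)
      (fun x hx => (hg x hx.1 θ hθ').mono inter_subset_left) (fun x hx => ?_)
      ⟨hz, Metric.mem_ball_self hr⟩ hy
    have := hvδ x (hrv ⟨hx.2, hx.1⟩) θ hθ'
    simp only [mem_ofPred_eq, dist_eq_norm] at this
    exact this.le
  calc _ ≤ (δ * ‖y - z‖) * |d - c| := intervalIntegral.norm_integral_le_of_norm_le_const key
    _ = (δ * |d - c|) * ‖y - z‖ := by ring
    _ ≤ ε * ‖y - z‖ := by gcongr

theorem contDiffOn_nat_integral_param {s : Set E} (hs : Convex ℝ s) (hu : UniqueDiffOn ℝ s)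
    {c d : ℝ}
    (hcd : c < d) (n : ℕ) : ∀ {G : Type} [NormedAddCommGroup G] [NormedSpace ℝ G] [CompleteSpace G]
    {g : E → ℝ → G}, ContDiffOn ℝ ∞ (Function.uncurry g) (s ×ˢ Icc c d) →
    ContDiffOn ℝ n (fun y => ∫ θ in c..d, g y θ) s := by
  have hU : UniqueDiffOn ℝ (s ×ˢ Icc c d) := hu.prod (uniqueDiffOn_Icc hcd)
  have main : ∀ {G : Type} [NormedAddCommGroup G] [NormedSpace ℝ G] [CompleteSpace G]
    {g : E → ℝ → G}, ContDiffOn ℝ ∞ (Function.uncurry g) (s ×ˢ Icc c d) →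
    ∃ g' : E → ℝ → E →L[ℝ] G, ContDiffOn ℝ ∞ (Function.uncurry g') (s ×ˢ Icc c d) ∧
      ∀ z ∈ s, HasFDerivWithinAt (fun y => ∫ θ in c..d, g y θ) (∫ θ in c..d, g' z θ) s z := by
    intro G _ _ _ g hg
    have h1 : ContDiffOn ℝ ∞ (fun p : E × ℝ =>
        (fderivWithin ℝ (Function.uncurry g) (s ×ˢ Icc c d) p).comp
          (ContinuousLinearMap.inl ℝ E ℝ)) (s ×ˢ Icc c d) :=
      (hg.fderivWithin hU (by simp)).clm_comp contDiffOn_const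
    refine ⟨fun z θ => (fderivWithin ℝ (Function.uncurry g) (s ×ˢ Icc c d) (z, θ)).comp
          (ContinuousLinearMap.inl ℝ E ℝ), h1, fun z hz => ?_⟩
    refine hasFDerivWithinAt_integral_param (g' := fun z θ => (fderivWithin ℝ (Function.uncurry g)
      (s ×ˢ Icc c d) (z, θ)).comp (ContinuousLinearMap.inl ℝ E ℝ)) hs hcd.le
      (fun z hz θ hθ => ?_) hg.continuousOn
      h1.continuousOn hz
    have h2 := (hg.differentiableOn (by simp) (z, θ) ⟨hz, hθ⟩).hasFDerivWithinAt
    exact h2.comp (f := fun y : E => (y, θ)) z (hasFDerivAt_prodMk_left z θ).hasFDerivWithinAt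
      fun y hy => ⟨hy, hθ⟩
  induction n with
  | zero =>
    intro G _ _ _ g hg
    obtain ⟨g', -, h⟩ := main hg
    exact contDiffOn_zero.2 fun z hz => (h z hz).continuousWithinAt
  | succ n ih =>
    intro G _ _ _ g hg
    obtain ⟨g', hg', h⟩ := main hg
    rw [Nat.cast_succ, contDiffOn_succ_iff_hasFDerivWithinAt_of_uniqueDiffOn hu]
    exact ⟨by simp, _, ih hg', h⟩

theorem contDiffOn_integral_param {s : Set E} (hs : Convex ℝ s) (hu : UniqueDiffOn ℝ s) {c d : ℝ}
    [CompleteSpace G] (hcd : c < d) {g : E → ℝ → G}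
    (hg : ContDiffOn ℝ ∞ (Function.uncurry g) (s ×ˢ Icc c d)) :
    ContDiffOn ℝ ∞ (fun y => ∫ θ in c..d, g y θ) s :=
  contDiffOn_infty.2 fun n => contDiffOn_nat_integral_param hs hu hcd n hg

end ParametricIntegral

/-- The closed space-time rectangle `[x₀, x₁] × [0, T]`. -/
def rect (x₀ x₁ T : ℝ) : Set (ℝ × ℝ) := Icc x₀ x₁ ×ˢ Icc 0 T

/-- Partial derivative in the space variable, within the set `S`. -/
noncomputable def pdx (S : Set (ℝ × ℝ)) (f : ℝ × ℝ → ℝ) (z : ℝ × ℝ) : ℝ :=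
  fderivWithin ℝ f S z (1, 0)

/-- Partial derivative in the time variable, within the set `S`. -/
noncomputable def pdt (S : Set (ℝ × ℝ)) (f : ℝ × ℝ → ℝ) (z : ℝ × ℝ) : ℝ :=
  fderivWithin ℝ f S z (0, 1)

theorem convex_rect (x₀ x₁ T : ℝ) : Convex ℝ (rect x₀ x₁ T) :=
  (convex_Icc _ _).prod (convex_Icc _ _)

theorem isCompact_rect (x₀ x₁ T : ℝ) : IsCompact (rect x₀ x₁ T) :=
  isCompact_Icc.prod isCompact_Icc

theorem uniqueDiffOn_rect {x₀ x₁ T : ℝ} (hx : x₀ < x₁) (hT : 0 < T) :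
    UniqueDiffOn ℝ (rect x₀ x₁ T) :=
  (uniqueDiffOn_Icc hx).prod (uniqueDiffOn_Icc hT)

theorem mem_closure_interior_rect {x₀ x₁ T : ℝ} (hx : x₀ < x₁) (hT : 0 < T) {z : ℝ × ℝ}
    (hz : z ∈ rect x₀ x₁ T) : z ∈ closure (interior (rect x₀ x₁ T)) := by
  rw [rect, interior_prod_eq, interior_Icc, interior_Icc, closure_prod_eq, closure_Ioo hx.ne,
    closure_Ioo hT.ne]
  exact hz

theorem exists_bound_on_rect {x₀ x₁ T : ℝ} {f : ℝ × ℝ → ℝ} (hf : ContinuousOn f (rect x₀ x₁ T)) :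
    ∃ C, 0 ≤ C ∧ ∀ z ∈ rect x₀ x₁ T, |f z| ≤ C := by
  obtain ⟨C, hC⟩ := (isCompact_rect x₀ x₁ T).exists_bound_of_continuousOn hf
  exact ⟨max C 0, le_max_right _ _, fun z hz => (hC z hz).trans (le_max_left _ _)⟩

section Calculus

variable {x₀ x₁ T : ℝ} {f g : ℝ × ℝ → ℝ}

local notation "S" => rect x₀ x₁ T

theorem ContDiffOn.pdx (hx : x₀ < x₁) (hT : 0 < T) (hf : ContDiffOn ℝ ∞ f S) :
    ContDiffOn ℝ ∞ (pdx S f) S :=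
  (hf.fderivWithin (uniqueDiffOn_rect hx hT) (by simp)).clm_apply contDiffOn_const

theorem ContDiffOn.pdt (hx : x₀ < x₁) (hT : 0 < T) (hf : ContDiffOn ℝ ∞ f S) :
    ContDiffOn ℝ ∞ (pdt S f) S :=
  (hf.fderivWithin (uniqueDiffOn_rect hx hT) (by simp)).clm_apply contDiffOn_const

theorem ContDiffOn.pdx_iterate (hx : x₀ < x₁) (hT : 0 < T) (hf : ContDiffOn ℝ ∞ f S) (j : ℕ) :
    ContDiffOn ℝ ∞ ((_root_.pdx S)^[j] f) S := by
  induction j with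
  | zero => exact hf
  | succ j ih => rw [Function.iterate_succ_apply']; exact ih.pdx hx hT

theorem ContDiffOn.hasFDerivWithinAt_rect (hf : ContDiffOn ℝ ∞ f S) {z : ℝ × ℝ} (hz : z ∈ S) :
    HasFDerivWithinAt f (fderivWithin ℝ f S z) S z :=
  (hf.differentiableOn (by simp) z hz).hasFDerivWithinAt

theorem ContDiffOn.hasDerivWithinAt_pdx (hf : ContDiffOn ℝ ∞ f S) {x t : ℝ} (hz : (x, t) ∈ S) :
    HasDerivWithinAt (fun y => f (y, t)) (_root_.pdx S f (x, t)) (Icc x₀ x₁) x :=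
  (hf.hasFDerivWithinAt_rect hz).comp_hasDerivWithinAt (f := fun y => (y, t)) x
    ((hasDerivWithinAt_id x _).prodMk (hasDerivWithinAt_const x _ t)) fun _ hy => ⟨hy, hz.2⟩

theorem ContDiffOn.hasDerivWithinAt_pdt (hf : ContDiffOn ℝ ∞ f S) {x t : ℝ} (hz : (x, t) ∈ S) :
    HasDerivWithinAt (fun s => f (x, s)) (_root_.pdt S f (x, t)) (Icc 0 T) t :=
  (hf.hasFDerivWithinAt_rect hz).comp_hasDerivWithinAt (f := fun s => (x, s)) t
    ((hasDerivWithinAt_const t _ x).prodMk (hasDerivWithinAt_id t _)) fun _ hy => ⟨hz.1, hy⟩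

theorem pdx_eq_of_hasDerivWithinAt (hx : x₀ < x₁) (hf : ContDiffOn ℝ ∞ f S) {x t c : ℝ}
    (hz : (x, t) ∈ S) (h : HasDerivWithinAt (fun y => f (y, t)) c (Icc x₀ x₁) x) :
    pdx S f (x, t) = c :=
  (uniqueDiffOn_Icc hx x hz.1).eq_deriv _ (hf.hasDerivWithinAt_pdx hz) h

theorem pdt_eq_of_hasDerivWithinAt (hT : 0 < T) (hf : ContDiffOn ℝ ∞ f S) {x t c : ℝ}
    (hz : (x, t) ∈ S) (h : HasDerivWithinAt (fun s => f (x, s)) c (Icc 0 T) t) :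
    pdt S f (x, t) = c :=
  (uniqueDiffOn_Icc hT t hz.2).eq_deriv _ (hf.hasDerivWithinAt_pdt hz) h

theorem pdx_congr (h : EqOn f g S) : EqOn (pdx S f) (pdx S g) S := fun z hz => by
  rw [pdx, pdx, fderivWithin_congr h (h hz)]

theorem pdx_add (hx : x₀ < x₁) (hf : ContDiffOn ℝ ∞ f S)
    (hg : ContDiffOn ℝ ∞ g S) {z : ℝ × ℝ} (hz : z ∈ S) :
    pdx S (fun z => f z + g z) z = pdx S f z + pdx S g z :=
  pdx_eq_of_hasDerivWithinAt hx (hf.add hg) (x := z.1) (t := z.2) hz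
    ((hf.hasDerivWithinAt_pdx hz).add (hg.hasDerivWithinAt_pdx hz))

theorem pdx_sub (hx : x₀ < x₁) (hf : ContDiffOn ℝ ∞ f S)
    (hg : ContDiffOn ℝ ∞ g S) {z : ℝ × ℝ} (hz : z ∈ S) :
    pdx S (fun z => f z - g z) z = pdx S f z - pdx S g z :=
  pdx_eq_of_hasDerivWithinAt hx (hf.sub hg) (x := z.1) (t := z.2) hz
    ((hf.hasDerivWithinAt_pdx hz).sub (hg.hasDerivWithinAt_pdx hz))

theorem pdt_sub (hT : 0 < T) (hf : ContDiffOn ℝ ∞ f S)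
    (hg : ContDiffOn ℝ ∞ g S) {z : ℝ × ℝ} (hz : z ∈ S) :
    pdt S (fun z => f z - g z) z = pdt S f z - pdt S g z :=
  pdt_eq_of_hasDerivWithinAt hT (hf.sub hg) (x := z.1) (t := z.2) hz
    ((hf.hasDerivWithinAt_pdt hz).sub (hg.hasDerivWithinAt_pdt hz))

theorem pdx_mul (hx : x₀ < x₁) (hf : ContDiffOn ℝ ∞ f S)
    (hg : ContDiffOn ℝ ∞ g S) {z : ℝ × ℝ} (hz : z ∈ S) :
    pdx S (fun z => f z * g z) z = pdx S f z * g z + f z * pdx S g z :=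
  pdx_eq_of_hasDerivWithinAt hx (hf.mul hg) (x := z.1) (t := z.2) hz
    ((hf.hasDerivWithinAt_pdx hz).mul (hg.hasDerivWithinAt_pdx hz))

theorem pdx_pdt_comm (hx : x₀ < x₁) (hT : 0 < T) (hf : ContDiffOn ℝ ∞ f S) {z : ℝ × ℝ}
    (hz : z ∈ S) : pdx S (pdt S f) z = pdt S (pdx S f) z := by
  have hU := uniqueDiffOn_rect hx hT
  have hd : DifferentiableWithinAt ℝ (fderivWithin ℝ f S) S z :=
    ((hf.fderivWithin hU (m := ∞) (by simp)).differentiableOn (by simp)) z hz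
  have key : ∀ a b : ℝ × ℝ, fderivWithin ℝ (fun y => fderivWithin ℝ f S y a) S z b =
      fderivWithin ℝ (fderivWithin ℝ f S) S z b a := by
    intro a b
    rw [fderivWithin_clm_apply (hU z hz) hd (differentiableWithinAt_const a)]
    simp
  have hsymm : IsSymmSndFDerivWithinAt ℝ f S z :=
    (hf z hz).isSymmSndFDerivWithinAt
      (by rw [minSmoothness_of_isRCLikeNormedField]; exact ENat.LEInfty.out) hU
      (mem_closure_interior_rect hx hT hz) hz
  change fderivWithin ℝ (fun y => fderivWithin ℝ f S y (0, 1)) S z (1, 0) =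
    fderivWithin ℝ (fun y => fderivWithin ℝ f S y (1, 0)) S z (0, 1)
  rw [key, key]
  exact hsymm.eq _ _

theorem pdt_congr (h : EqOn f g S) : EqOn (pdt S f) (pdt S g) S := fun z hz => by
  rw [pdt, pdt, fderivWithin_congr h (h hz)]

end Calculus

/-- Heat polynomials: `heatPoly a m` is the parabolically homogeneous solution of degree `m` of
`P_t = a P_xx`, normalized by `P(x, 0) = x ^ m / m!`. -/
noncomputable def heatPoly (a : ℝ) : ℕ → ℝ → ℝ → ℝ
  | 0, _, _ => 1
  | 1, x, _ => x
  | m + 2, x, t => (x * heatPoly a (m + 1) x t + 2 * a * t * heatPoly a m x t) / (m + 2)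

section HeatPoly

variable {a : ℝ}

theorem heatPoly_zero (x t : ℝ) : heatPoly a 0 x t = 1 := by rw [heatPoly]

theorem heatPoly_one (x t : ℝ) : heatPoly a 1 x t = x := by rw [heatPoly]

theorem heatPoly_add_two (m : ℕ) (x t : ℝ) : heatPoly a (m + 2) x t =
    (x * heatPoly a (m + 1) x t + 2 * a * t * heatPoly a m x t) / (m + 2) := by rw [heatPoly]

theorem contDiff_heatPoly (m : ℕ) :
    ContDiff ℝ ∞ (fun z : ℝ × ℝ => heatPoly a m z.1 z.2) := by
  induction m using Nat.twoStepInduction with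
  | zero => simp only [heatPoly_zero]; fun_prop
  | one => simp only [heatPoly_one]; fun_prop
  | more m h0 h1 => simp only [heatPoly_add_two]; fun_prop

theorem hasDerivAt_heatPoly_fst (m : ℕ) (x t : ℝ) :
    HasDerivAt (fun y => heatPoly a (m + 1) y t) (heatPoly a m x t) x := by
  induction m using Nat.twoStepInduction with
  | zero => simp only [zero_add, heatPoly_one, heatPoly_zero]; exact hasDerivAt_id x
  | one =>
    simp only [heatPoly_add_two 0, heatPoly_one, heatPoly_zero, zero_add]
    refine ((((hasDerivAt_id' x).fun_mul (hasDerivAt_id' x)).add_const (2 * a * t * 1)).div_const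
      ((0 : ℕ) + 2 : ℝ)).congr_deriv ?_
    simp
  | more m h0 h1 =>
    simp only [heatPoly_add_two (m + 1)]
    refine ((((hasDerivAt_id' x).fun_mul h1).fun_add (h0.const_mul (2 * a * t))).div_const
      ((m + 1 : ℕ) + 2 : ℝ)).congr_deriv ?_
    have h := heatPoly_add_two (a := a) m x t
    rw [eq_div_iff (by positivity)] at h
    rw [div_eq_iff (by positivity)]
    push_cast
    linear_combination -h

theorem hasDerivAt_heatPoly_snd (m : ℕ) (x t : ℝ) :
    HasDerivAt (fun s => heatPoly a (m + 2) x s) (a * heatPoly a m x t) t := by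
  induction m using Nat.twoStepInduction with
  | zero =>
    simp only [heatPoly_add_two 0, heatPoly_one, heatPoly_zero, zero_add]
    refine (((((hasDerivAt_id' t).const_mul (2 * a)).mul_const 1).const_add (x * x)).div_const
      ((0 : ℕ) + 2 : ℝ)).congr_deriv ?_
    norm_num
  | one =>
    simp only [heatPoly_add_two 1, heatPoly_add_two 0, heatPoly_one, heatPoly_zero, zero_add]
    refine ((((((((hasDerivAt_id' t).const_mul (2 * a)).mul_const 1).const_add (x * x)).div_const
      ((0 : ℕ) + 2 : ℝ)).const_mul x).fun_add (((hasDerivAt_id' t).const_mul (2 * a)).mul_const x)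
      ).div_const ((1 : ℕ) + 2 : ℝ)).congr_deriv ?_
    push_cast; ring
  | more m h0 h1 =>
    simp only [heatPoly_add_two (m + 2)]
    refine (((h1.const_mul x).fun_add (((hasDerivAt_id' t).const_mul (2 * a)).fun_mul h0)).div_const
      ((m + 2 : ℕ) + 2 : ℝ)).congr_deriv ?_
    have h := heatPoly_add_two (a := a) m x t
    rw [eq_div_iff (by positivity)] at h
    rw [div_eq_iff (by positivity)]
    push_cast
    linear_combination -a * h

theorem heatPoly_at_zero (m : ℕ) (x : ℝ) : heatPoly a m x 0 = x ^ m / m.factorial := by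
  induction m using Nat.twoStepInduction with
  | zero => simp [heatPoly_zero]
  | one => simp [heatPoly_one]
  | more m h0 h1 =>
    rw [heatPoly_add_two, h1, Nat.factorial_succ (m + 1)]
    have : ((m + 1).factorial : ℝ) ≠ 0 := by positivity
    have : ((m : ℝ) + 2) ≠ 0 := by positivity
    push_cast
    field_simp
    ring

theorem heatPoly_neg (m : ℕ) (x t : ℝ) : heatPoly a m (-x) t = (-1) ^ m * heatPoly a m x t := by
  induction m using Nat.twoStepInduction with
  | zero => simp [heatPoly_zero]
  | one => simp [heatPoly_one]
  | more m h0 h1 => rw [heatPoly_add_two, heatPoly_add_two, h0, h1]; ring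

theorem heatPoly_homogeneous (m : ℕ) (r x t : ℝ) :
    heatPoly a m (r * x) (r ^ 2 * t) = r ^ m * heatPoly a m x t := by
  induction m using Nat.twoStepInduction with
  | zero => simp [heatPoly_zero]
  | one => simp [heatPoly_one]
  | more m h0 h1 => rw [heatPoly_add_two, heatPoly_add_two, h0, h1]; ring

theorem heatPoly_lower_bound (ha : 0 < a) (n : ℕ) : ∃ c > 0, ∀ x t : ℝ, 0 ≤ t →
    c * (x ^ 2 + t) ^ n ≤ heatPoly a (2 * n) x t ∧ 0 ≤ x * heatPoly a (2 * n + 1) x t ∧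
    x ^ 2 * heatPoly a (2 * n) x t / (2 * n + 1) ≤ x * heatPoly a (2 * n + 1) x t := by
  induction n with
  | zero =>
    refine ⟨1, one_pos, fun x t ht => ?_⟩
    simp only [mul_zero, zero_add, heatPoly_zero, heatPoly_one, pow_zero]
    refine ⟨by norm_num, mul_self_nonneg x, le_of_eq ?_⟩
    norm_num; ring
  | succ n ih =>
    obtain ⟨c, hc, h⟩ := ih
    refine ⟨min (1 / (2 * (n : ℝ) + 1)) (2 * a) / (2 * n + 2) * c, by positivity, fun x t ht => ?_⟩
    obtain ⟨h1, h2, h3⟩ := h x t ht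
    set d := min (1 / (2 * n + 1 : ℝ)) (2 * a) with hd
    have hd0 : 0 < d := by positivity
    have hP : 0 ≤ heatPoly a (2 * n) x t := le_trans (by positivity) h1
    have hQ : d * (x ^ 2 + t) * (c * (x ^ 2 + t) ^ n) ≤
        x * heatPoly a (2 * n + 1) x t + 2 * a * t * heatPoly a (2 * n) x t := by
      have e1 : d * x ^ 2 * heatPoly a (2 * n) x t ≤ x * heatPoly a (2 * n + 1) x t := by
        refine le_trans ?_ h3
        rw [mul_div_assoc, mul_comm d, mul_assoc]
        refine mul_le_mul_of_nonneg_left ?_ (sq_nonneg x)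
        rw [mul_comm, div_eq_mul_one_div]
        exact mul_le_mul_of_nonneg_left (min_le_left _ _) hP
      have e2 : d * t * heatPoly a (2 * n) x t ≤ 2 * a * t * heatPoly a (2 * n) x t := by
        gcongr
        exact min_le_right _ _
      have e3 : d * (x ^ 2 + t) * (c * (x ^ 2 + t) ^ n) ≤
        d * (x ^ 2 + t) * heatPoly a (2 * n) x t := by gcongr
      nlinarith
    have hR : d / (2 * n + 2) * c * (x ^ 2 + t) ^ (n + 1) ≤ heatPoly a (2 * (n + 1)) x t := by
      rw [mul_add, heatPoly_add_two, le_div_iff₀ (by positivity)]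
      refine le_trans (le_of_eq ?_) hQ
      push_cast
      field_simp
      ring
    have hP' : 0 ≤ heatPoly a (2 * (n + 1)) x t := le_trans (by positivity) hR
    have hS : x ^ 2 * heatPoly a (2 * (n + 1)) x t / (2 * (n + 1 : ℕ) + 1) ≤
        x * heatPoly a (2 * (n + 1) + 1) x t := by
      rw [show 2 * (n + 1) + 1 = (2 * n + 1) + 2 by ring, heatPoly_add_two, ← mul_div_assoc,
        show 2 * n + 1 + 1 = 2 * (n + 1) by ring]
      rw [show (2 * ((n + 1 : ℕ) : ℝ) + 1) = ((2 * n + 1 : ℕ) + 2 : ℝ) by push_cast; ring]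
      refine div_le_div_of_nonneg_right ?_ (by positivity)
      have := mul_nonneg (mul_nonneg (mul_nonneg zero_le_two ha.le) ht) h2
      linarith
    exact ⟨hR, le_trans (by positivity) hS, hS⟩

theorem exists_heatPoly_neg_aux (ha : 0 < a) (k : ℕ) : ∃ y : ℝ, 0 ≤ y ∧
    heatPoly a (k + 1) y (-1) = 0 ∧ (∀ x > y, 0 < heatPoly a (k + 1) x (-1)) ∧
    ∀ x ≥ y, 0 < heatPoly a k x (-1) := by
  induction k with
  | zero => exact ⟨0, le_rfl, by simp [heatPoly_one], fun x hx => by simpa [heatPoly_one] using hx,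
      fun x hx => by simp [heatPoly_zero]⟩
  | succ k ih =>
    obtain ⟨y, hy, h0, hpos, hk⟩ := ih
    have hneg : heatPoly a (k + 2) y (-1) < 0 := by
      rw [heatPoly_add_two, h0]
      apply div_neg_of_neg_of_pos _ (by positivity)
      nlinarith [hk y le_rfl, mul_pos ha (hk y le_rfl)]
    have hcont : Continuous fun x => heatPoly a (k + 2) x (-1) :=
      continuous_iff_continuousAt.2 fun x => (hasDerivAt_heatPoly_fst (k + 1) x (-1)).continuousAt
    have hmono : StrictMonoOn (fun x => heatPoly a (k + 2) x (-1)) (Ici y) := by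
      refine strictMonoOn_of_deriv_pos (convex_Ici y) hcont.continuousOn fun x hx => ?_
      rw [interior_Ici] at hx
      rw [(hasDerivAt_heatPoly_fst (k + 1) x (-1)).deriv]
      exact hpos x hx
    obtain ⟨X, hX, hXpos⟩ : ∃ X > y, 0 < heatPoly a (k + 2) X (-1) := by
      have hc : Continuous fun r : ℝ => heatPoly a (k + 2) 1 (r ^ 2 * (-1)) :=
        (contDiff_heatPoly (k + 2)).continuous.comp
          (g := fun z : ℝ × ℝ => heatPoly a (k + 2) z.1 z.2)
          (f := fun r : ℝ => ((1 : ℝ), r ^ 2 * (-1))) (by fun_prop)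
      have h1 : ∀ᶠ r in 𝓝[>] (0 : ℝ), 0 < heatPoly a (k + 2) 1 (r ^ 2 * (-1)) := by
        refine (hc.tendsto 0).eventually (eventually_gt_nhds ?_) |>.filter_mono nhdsWithin_le_nhds
        rw [zero_pow two_ne_zero, zero_mul, heatPoly_at_zero]
        positivity
      have h2 : ∀ᶠ r in 𝓝[>] (0 : ℝ), r < (y + 1)⁻¹ :=
        (eventually_lt_nhds (by positivity)).filter_mono nhdsWithin_le_nhds
      obtain ⟨r, ⟨hr1, hr2⟩, hr3⟩ := ((h1.and h2).and self_mem_nhdsWithin).exists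
      refine ⟨r⁻¹, ?_, ?_⟩
      · rw [lt_inv_comm₀ hr3 (by positivity)] at hr2
        linarith
      · have := heatPoly_homogeneous (a := a) (k + 2) r r⁻¹ (-1)
        rw [mul_inv_cancel₀ hr3.ne'] at this
        rw [this] at hr1
        exact pos_of_mul_pos_right hr1 (by positivity)
    obtain ⟨y', hy', hz⟩ := intermediate_value_Icc hX.le hcont.continuousOn
      (show (0 : ℝ) ∈ Icc _ _ from ⟨hneg.le, hXpos.le⟩)
    have hyy' : y < y' := lt_of_le_of_ne hy'.1 fun h => by subst h; exact hneg.ne hz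
    exact ⟨y', hy.trans hyy'.le, hz, fun x hx => hz ▸ hmono hyy'.le (hyy'.trans hx).le hx,
      fun x hx => hpos x (hyy'.trans_le hx)⟩

theorem exists_heatPoly_neg (ha : 0 < a) (k : ℕ) : ∃ y : ℝ, 0 ≤ y ∧
    heatPoly a (k + 2) y (-1) < 0 := by
  obtain ⟨y, hy, h0, -, hk⟩ := exists_heatPoly_neg_aux ha k
  refine ⟨y, hy, ?_⟩
  rw [heatPoly_add_two, h0]
  apply div_neg_of_neg_of_pos _ (by positivity)
  nlinarith [hk y le_rfl, mul_pos ha (hk y le_rfl)]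

end HeatPoly

/-- `w` is a smooth solution on the rectangle of the linear parabolic equation
`w_t = a w_xx + b w_x + c w` with smooth coefficients and `a > 0`. -/
structure LinearParabolic (x₀ x₁ T : ℝ) (w a b c : ℝ × ℝ → ℝ) : Prop where
  hx : x₀ < x₁
  hT : 0 < T
  sol : ContDiffOn ℝ ∞ w (rect x₀ x₁ T)
  coeff_a : ContDiffOn ℝ ∞ a (rect x₀ x₁ T)
  coeff_b : ContDiffOn ℝ ∞ b (rect x₀ x₁ T)
  coeff_c : ContDiffOn ℝ ∞ c (rect x₀ x₁ T)
  pos : ∀ z ∈ rect x₀ x₁ T, 0 < a z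
  eqn : ∀ z ∈ rect x₀ x₁ T, pdt (rect x₀ x₁ T) w z =
    a z * pdx (rect x₀ x₁ T) (pdx (rect x₀ x₁ T) w) z + b z * pdx (rect x₀ x₁ T) w z + c z * w z

/-- Parabolic distance between two space-time points. -/
noncomputable def parDist (z₀ z : ℝ × ℝ) : ℝ := |z.1 - z₀.1| + √|z.2 - z₀.2|

theorem parDist_nonneg (z₀ z : ℝ × ℝ) : 0 ≤ parDist z₀ z := by unfold parDist; positivity

theorem abs_fst_le_parDist (z₀ z : ℝ × ℝ) : |z.1 - z₀.1| ≤ parDist z₀ z := by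
  unfold parDist; linarith [Real.sqrt_nonneg |z.2 - z₀.2|]

theorem abs_snd_le_parDist_sq (z₀ z : ℝ × ℝ) : |z.2 - z₀.2| ≤ parDist z₀ z ^ 2 := by
  have h1 : √|z.2 - z₀.2| ≤ parDist z₀ z := by
    unfold parDist; linarith [abs_nonneg (z.1 - z₀.1)]
  calc |z.2 - z₀.2| = √|z.2 - z₀.2| ^ 2 := (Real.sq_sqrt (abs_nonneg _)).symm
    _ ≤ _ := by gcongr

theorem continuous_parDist (z₀ : ℝ × ℝ) : Continuous (parDist z₀) := by
  unfold parDist; fun_prop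

/-- `g = O(d ^ e)` on the rectangle, with `d` the parabolic distance to `z₀`. -/
def ParOrder (S : Set (ℝ × ℝ)) (z₀ : ℝ × ℝ) (e : ℕ) (g : ℝ × ℝ → ℝ) : Prop :=
  ∃ C, 0 ≤ C ∧ ∀ z ∈ S, |g z| ≤ C * parDist z₀ z ^ e

/-- Combinations with smooth coefficients of the derivatives `∂ₓⁱ w`, `i < n`. -/
inductive DerivComb (S : Set (ℝ × ℝ)) (w : ℝ × ℝ → ℝ) (n : ℕ) : (ℝ × ℝ → ℝ) → Prop
  | term (c : ℝ × ℝ → ℝ) (hc : ContDiffOn ℝ ∞ c S) (i : ℕ) (hi : i < n) :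
      DerivComb S w n (fun z => c z * (pdx S)^[i] w z)
  | add (g h : ℝ × ℝ → ℝ) (hg : DerivComb S w n g) (hh : DerivComb S w n h) :
      DerivComb S w n (fun z => g z + h z)
  | congr (g h : ℝ × ℝ → ℝ) (hg : DerivComb S w n g) (hgh : EqOn h g S) : DerivComb S w n h

section ParOrder

variable {x₀ x₁ T : ℝ} {z₀ : ℝ × ℝ} {e e' : ℕ} {g h : ℝ × ℝ → ℝ}

local notation "S" => rect x₀ x₁ T

theorem ParOrder.add {s : Set (ℝ × ℝ)} (hg : ParOrder s z₀ e g) (hh : ParOrder s z₀ e h) :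
    ParOrder s z₀ e (fun z => g z + h z) := by
  obtain ⟨C, hC, hg⟩ := hg
  obtain ⟨C', hC', hh⟩ := hh
  refine ⟨C + C', by positivity, fun z hz => (abs_add_le _ _).trans ?_⟩
  rw [add_mul]
  exact add_le_add (hg z hz) (hh z hz)

theorem ParOrder.mul {s : Set (ℝ × ℝ)} (hg : ParOrder s z₀ e g) (hh : ParOrder s z₀ e' h) :
    ParOrder s z₀ (e + e') (fun z => g z * h z) := by
  obtain ⟨C, hC, hg⟩ := hg
  obtain ⟨C', hC', hh⟩ := hh
  refine ⟨C * C', by positivity, fun z hz => ?_⟩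
  have := parDist_nonneg z₀ z
  rw [abs_mul, pow_add, mul_mul_mul_comm]
  exact mul_le_mul (hg z hz) (hh z hz) (abs_nonneg _) (by positivity)

theorem ParOrder.congr {s : Set (ℝ × ℝ)} (hg : ParOrder s z₀ e g) (hgh : EqOn h g s) :
    ParOrder s z₀ e h := by
  obtain ⟨C, hC, hg⟩ := hg
  exact ⟨C, hC, fun z hz => hgh hz ▸ hg z hz⟩

theorem ParOrder.mono (hg : ParOrder S z₀ e g) (he : e' ≤ e) : ParOrder S z₀ e' g := by
  obtain ⟨C, hC, hg⟩ := hg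
  obtain ⟨K, hK, hd⟩ := exists_bound_on_rect (x₀ := x₀) (x₁ := x₁) (T := T)
    (continuous_parDist z₀).continuousOn
  refine ⟨C * K ^ (e - e'), by positivity, fun z hz => (hg z hz).trans ?_⟩
  have h0 := parDist_nonneg z₀ z
  have h1 := (le_abs_self _).trans (hd z hz)
  calc C * parDist z₀ z ^ e = C * (parDist z₀ z ^ (e - e') * parDist z₀ z ^ e') := by
        rw [← pow_add, Nat.sub_add_cancel he]
    _ ≤ C * (K ^ (e - e') * parDist z₀ z ^ e') := by gcongr
    _ = _ := by ring

theorem ParOrder.of_continuousOn (hg : ContinuousOn g S) : ParOrder S z₀ 0 g := by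
  obtain ⟨C, hC, h⟩ := exists_bound_on_rect hg
  exact ⟨C, hC, fun z hz => by simpa using h z hz⟩

theorem ParOrder.smul_continuousOn (hg : ContinuousOn g S) (hh : ParOrder S z₀ e h) :
    ParOrder S z₀ e (fun z => g z * h z) := by
  simpa using (ParOrder.of_continuousOn hg).mul hh

theorem ParOrder.of_partials (hz₀ : z₀ ∈ S) (hg : ContDiffOn ℝ ∞ g S) (h0 : g z₀ = 0)
    (hgx : ParOrder S z₀ e (pdx S g)) (hgt : ParOrder S z₀ (e - 1) (pdt S g)) :
    ParOrder S z₀ (e + 1) g := by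
  obtain ⟨C₁, hC₁, h₁⟩ := hgx
  obtain ⟨C₂, hC₂, h₂⟩ := hgt
  have hX : ∀ z ∈ S, |g z - g (z₀.1, z.2)| ≤ C₁ * parDist z₀ z ^ (e + 1) := by
    intro z hz
    have hsub : uIcc z₀.1 z.1 ⊆ Icc x₀ x₁ := uIcc_subset_Icc hz₀.1 hz.1
    have key := Convex.norm_image_sub_le_of_norm_hasDerivWithin_le
      (f := fun y => g (y, z.2)) (f' := fun y => pdx S g (y, z.2)) (s := uIcc z₀.1 z.1)
      (C := C₁ * parDist z₀ z ^ e) (x := z₀.1) (y := z.1)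
      (fun y hy => (hg.hasDerivWithinAt_pdx (x := y) (t := z.2) ⟨hsub hy, hz.2⟩).mono hsub)
      (fun y hy => by
        refine (h₁ (y, z.2) ⟨hsub hy, hz.2⟩).trans ?_
        have : parDist z₀ (y, z.2) ≤ parDist z₀ z := by
          exact add_le_add_left (abs_sub_left_of_mem_uIcc hy) _
        have := parDist_nonneg z₀ (y, z.2)
        gcongr) (convex_uIcc _ _) left_mem_uIcc right_mem_uIcc
    refine key.trans ?_
    rw [pow_succ, ← mul_assoc]
    have := parDist_nonneg z₀ z
    exact mul_le_mul_of_nonneg_left (abs_fst_le_parDist z₀ z) (by positivity)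
  have hT : ∀ z ∈ S, |g (z₀.1, z.2)| ≤ C₂ * parDist z₀ z ^ (e - 1 + 2) := by
    intro z hz
    have hsub : uIcc z₀.2 z.2 ⊆ Icc 0 T := uIcc_subset_Icc hz₀.2 hz.2
    have key := Convex.norm_image_sub_le_of_norm_hasDerivWithin_le
      (f := fun s => g (z₀.1, s)) (f' := fun s => pdt S g (z₀.1, s)) (s := uIcc z₀.2 z.2)
      (C := C₂ * parDist z₀ z ^ (e - 1)) (x := z₀.2) (y := z.2)
      (fun s hs => (hg.hasDerivWithinAt_pdt (x := z₀.1) (t := s) ⟨hz₀.1, hsub hs⟩).mono hsub)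
      (fun s hs => by
        refine (h₂ (z₀.1, s) ⟨hz₀.1, hsub hs⟩).trans ?_
        have : parDist z₀ (z₀.1, s) ≤ parDist z₀ z := by
          unfold parDist
          simp only [sub_self, abs_zero]
          gcongr ?_ + √?_
          · exact abs_nonneg _
          · exact abs_sub_left_of_mem_uIcc hs
        have := parDist_nonneg z₀ (z₀.1, s)
        gcongr) (convex_uIcc _ _) left_mem_uIcc right_mem_uIcc
    simp only [Prod.mk.eta, h0, sub_zero, Real.norm_eq_abs] at key
    refine key.trans ?_
    rw [pow_add, ← mul_assoc]
    have := parDist_nonneg z₀ z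
    exact mul_le_mul_of_nonneg_left (abs_snd_le_parDist_sq z₀ z) (by positivity)
  have hX' : ParOrder S z₀ (e + 1) fun z => g z - g (z₀.1, z.2) := ⟨C₁, hC₁, hX⟩
  have hT' : ParOrder S z₀ (e - 1 + 2) fun z => g (z₀.1, z.2) := ⟨C₂, hC₂, hT⟩
  exact (hX'.add (hT'.mono (e' := e + 1) (by omega))).congr fun z _ => by simp

theorem ParOrder.of_derivComb {w : ℝ × ℝ → ℝ} {n : ℕ} (hg : DerivComb S w n g)
    (hw : ∀ i < n, ParOrder S z₀ e ((pdx S)^[i] w)) : ParOrder S z₀ e g := by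
  induction hg with
  | term c hc i hi => exact (hw i hi).smul_continuousOn hc.continuousOn
  | add g h _ _ ihg ihh => exact ihg.add ihh
  | congr g h _ hgh ihg => exact ihg.congr hgh

theorem ParOrder.heatPoly (a : ℝ) (m : ℕ) :
    ParOrder S z₀ m (fun z => _root_.heatPoly a m (z.1 - z₀.1) (z.2 - z₀.2)) := by
  induction m using Nat.twoStepInduction with
  | zero => simp only [heatPoly_zero]; exact .of_continuousOn continuousOn_const
  | one =>
    simp only [heatPoly_one]
    exact ⟨1, zero_le_one, fun z _ => by simpa using abs_fst_le_parDist z₀ z⟩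
  | more m h0 h1 =>
    have hX : ParOrder S z₀ 1 (fun z => z.1 - z₀.1) :=
      ⟨1, zero_le_one, fun z _ => by simpa using abs_fst_le_parDist z₀ z⟩
    have hT : ParOrder S z₀ 2 (fun z => z.2 - z₀.2) :=
      ⟨1, zero_le_one, fun z _ => by simpa using abs_snd_le_parDist_sq z₀ z⟩
    have e1 := hX.mul h1
    have e2 := hT.mul h0
    rw [show 1 + (m + 1) = m + 2 by ring] at e1
    rw [add_comm] at e2
    refine ((e1.smul_continuousOn (g := fun _ => 1 / ((m : ℝ) + 2)) continuousOn_const).add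
      (e2.smul_continuousOn (g := fun _ => 2 * a / ((m : ℝ) + 2)) continuousOn_const)).congr ?_
    intro z _
    simp only [heatPoly_add_two]
    ring

end ParOrder

namespace DerivComb

variable {x₀ x₁ T : ℝ} {w g : ℝ × ℝ → ℝ} {n : ℕ}

local notation "S" => rect x₀ x₁ T

theorem contDiffOn (hx : x₀ < x₁) (hT : 0 < T) (hw : ContDiffOn ℝ ∞ w S)
    (hg : DerivComb S w n g) : ContDiffOn ℝ ∞ g S := by
  induction hg with
  | term c hc i hi => exact hc.mul (hw.pdx_iterate hx hT i)
  | add g h _ _ ihg ihh => exact ihg.add ihh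
  | congr g h _ hgh ihg => exact ihg.congr hgh

theorem pdx (hx : x₀ < x₁) (hT : 0 < T) (hw : ContDiffOn ℝ ∞ w S)
    (hg : DerivComb S w n g) : DerivComb S w (n + 1) (pdx S g) := by
  induction hg with
  | term c hc i hi =>
    refine .congr _ _ (.add _ _ (.term _ (hc.pdx hx hT) i (hi.trans (Nat.lt_succ_self n)))
      (.term c hc (i + 1) (Nat.succ_lt_succ hi))) fun z hz => ?_
    rw [Function.iterate_succ_apply']
    exact pdx_mul hx hc (hw.pdx_iterate hx hT i) hz
  | add g h hg hh ihg ihh =>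
    exact (ihg.add _ _ ihh).congr _ _ fun z hz =>
      pdx_add hx (hg.contDiffOn hx hT hw) (hh.contDiffOn hx hT hw) hz
  | congr g h _ hgh ihg => exact ihg.congr _ _ (pdx_congr hgh)

end DerivComb

namespace LinearParabolic

variable {x₀ x₁ T : ℝ} {w a b c : ℝ × ℝ → ℝ}

local notation "S" => rect x₀ x₁ T

/-- All spatial derivatives solve the same equation up to derivatives of lower order. -/
theorem pdt_pdx_iterate (H : LinearParabolic x₀ x₁ T w a b c) (j : ℕ) :
    ∃ g, DerivComb S w (j + 2) g ∧
      ∀ z ∈ S, pdt S ((pdx S)^[j] w) z = a z * (pdx S)^[j + 2] w z + g z := by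
  obtain ⟨hx, hT, hw, ha, hb, hc, -, heq⟩ := H
  induction j with
  | zero =>
    refine ⟨_, .add _ _ (.term b hb 1 (by norm_num)) (.term c hc 0 (by norm_num)), fun z hz => ?_⟩
    rw [Function.iterate_zero, id, heq z hz, add_assoc]
    rfl
  | succ j ih =>
    obtain ⟨g, hg, h⟩ := ih
    have hj := hw.pdx_iterate hx hT j
    have hj2 := hw.pdx_iterate hx hT (j + 2)
    refine ⟨_, .add _ _ (.term _ (ha.pdx hx hT) (j + 2) (Nat.lt_succ_self _)) (hg.pdx hx hT hw),
      fun z hz => ?_⟩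
    rw [Function.iterate_succ_apply', ← pdx_pdt_comm hx hT hj hz, pdx_congr h hz,
      pdx_add hx (ha.mul hj2) (hg.contDiffOn hx hT hw) hz, pdx_mul hx ha hj2 hz,
      show j + 1 + 2 = (j + 2) + 1 by ring, Function.iterate_succ_apply' _ (j + 2)]
    ring

variable {z₀ : ℝ × ℝ} {k : ℕ}

theorem parOrder_pdx_iterate_of_le (H : LinearParabolic x₀ x₁ T w a b c) (hz₀ : z₀ ∈ S)
    (hk : ∀ i < k, (pdx S)^[i] w z₀ = 0) (n : ℕ) :
    ∀ i, ParOrder S z₀ (min n (k - i)) ((pdx S)^[i] w) := by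
  induction n with
  | zero =>
    intro i
    rw [Nat.zero_min]
    exact .of_continuousOn (H.sol.pdx_iterate H.hx H.hT i).continuousOn
  | succ n ih =>
    intro i
    have hs := H.sol.pdx_iterate H.hx H.hT i
    rcases le_or_gt k i with hi | hi
    · rw [Nat.sub_eq_zero_of_le hi, Nat.min_zero]
      exact .of_continuousOn hs.continuousOn
    · have he : min (n + 1) (k - i) = min n (k - (i + 1)) + 1 := by omega
      rw [he]
      obtain ⟨g, hg, hpde⟩ := H.pdt_pdx_iterate i
      refine .of_partials hz₀ hs (hk i hi) ?_ ?_
      · rw [← Function.iterate_succ_apply' (pdx S)]; exact ih (i + 1)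
      · refine ParOrder.congr (ParOrder.add ?_ ?_) hpde
        · exact ((ih (i + 2)).smul_continuousOn H.coeff_a.continuousOn).mono (by omega)
        · exact .of_derivComb hg fun l hl => (ih l).mono (by omega)

theorem parOrder_pdx_iterate (H : LinearParabolic x₀ x₁ T w a b c) (hz₀ : z₀ ∈ S)
    (hk : ∀ i < k, (pdx S)^[i] w z₀ = 0) (i : ℕ) : ParOrder S z₀ (k - i) ((pdx S)^[i] w) := by
  simpa using H.parOrder_pdx_iterate_of_le hz₀ hk k i |>.mono (e' := k - i) (by omega)

/-- The parabolic Taylor expansion at a point where `w` vanishes to order `k` in space. -/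
theorem parOrder_sub_heatPoly (H : LinearParabolic x₀ x₁ T w a b c) (hz₀ : z₀ ∈ S)
    (hk : ∀ i < k, (pdx S)^[i] w z₀ = 0) (m : ℕ) (hm : m ≤ k) :
    ParOrder S z₀ (m + 1) (fun z => (pdx S)^[k - m] w z -
      (pdx S)^[k] w z₀ * heatPoly (a z₀) m (z.1 - z₀.1) (z.2 - z₀.2)) := by
  set κ := (pdx S)^[k] w z₀ with hκ
  have hP : ∀ m, ContDiffOn ℝ ∞
      (fun z : ℝ × ℝ => κ * heatPoly (a z₀) m (z.1 - z₀.1) (z.2 - z₀.2)) S := fun m =>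
    (contDiff_const.mul ((contDiff_heatPoly (a := a z₀) m).comp
      (f := fun z : ℝ × ℝ => (z.1 - z₀.1, z.2 - z₀.2)) (by fun_prop))).contDiffOn
  have hE : ∀ m, ContDiffOn ℝ ∞ (fun z => (pdx S)^[k - m] w z -
      κ * heatPoly (a z₀) m (z.1 - z₀.1) (z.2 - z₀.2)) S := fun m =>
    (H.sol.pdx_iterate H.hx H.hT (k - m)).sub (hP m)
  have hPx : ∀ m, ∀ z ∈ S, pdx S (fun z => κ * heatPoly (a z₀) (m + 1) (z.1 - z₀.1) (z.2 - z₀.2)) z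
      = κ * heatPoly (a z₀) m (z.1 - z₀.1) (z.2 - z₀.2) := fun m z hz =>
    pdx_eq_of_hasDerivWithinAt H.hx (hP (m + 1)) (x := z.1) (t := z.2) hz
      (((hasDerivAt_heatPoly_fst (a := a z₀) m _ (z.2 - z₀.2)).comp_sub_const z.1
        z₀.1).hasDerivWithinAt.const_mul κ)
  have hPt : ∀ m, ∀ z ∈ S, pdt S (fun z => κ * heatPoly (a z₀) (m + 2) (z.1 - z₀.1) (z.2 - z₀.2)) z
      = κ * (a z₀ * heatPoly (a z₀) m (z.1 - z₀.1) (z.2 - z₀.2)) := fun m z hz =>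
    pdt_eq_of_hasDerivWithinAt H.hT (hP (m + 2)) (x := z.1) (t := z.2) hz
      (((hasDerivAt_heatPoly_snd (a := a z₀) m (z.1 - z₀.1) _).comp_sub_const z.2
        z₀.2).hasDerivWithinAt.const_mul κ)
  have hEx : ∀ m, m + 1 ≤ k → EqOn (pdx S fun z => (pdx S)^[k - (m + 1)] w z -
      κ * heatPoly (a z₀) (m + 1) (z.1 - z₀.1) (z.2 - z₀.2)) (fun z => (pdx S)^[k - m] w z -
      κ * heatPoly (a z₀) m (z.1 - z₀.1) (z.2 - z₀.2)) S := by
    intro m hm z hz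
    rw [pdx_sub H.hx (H.sol.pdx_iterate H.hx H.hT _) (hP (m + 1)) hz, hPx m z hz,
      ← Function.iterate_succ_apply' (pdx S), show (k - (m + 1)).succ = k - m by omega]
  have h0 : ∀ m, m + 1 ≤ k → (pdx S)^[k - (m + 1)] w z₀ -
      κ * heatPoly (a z₀) (m + 1) (z₀.1 - z₀.1) (z₀.2 - z₀.2) = 0 := by
    intro m hm
    rw [hk _ (by omega), sub_self, sub_self, heatPoly_at_zero]
    simp
  have ha1 : ParOrder S z₀ 1 (fun z => a z - a z₀) := by
    have hs : ContDiffOn ℝ ∞ (fun z => a z - a z₀) S := H.coeff_a.sub contDiffOn_const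
    exact .of_partials (e := 0) hz₀ hs (sub_self _)
      (.of_continuousOn (hs.pdx H.hx H.hT).continuousOn)
      (.of_continuousOn (hs.pdt H.hx H.hT).continuousOn)
  induction m using Nat.twoStepInduction with
  | zero =>
    refine .of_partials (e := 0) hz₀ (hE 0) ?_
      (.of_continuousOn ((hE 0).pdx H.hx H.hT).continuousOn)
      (.of_continuousOn ((hE 0).pdt H.hx H.hT).continuousOn)
    simp [heatPoly_zero, hκ]
  | one =>
    refine .of_partials (e := 1) hz₀ (hE 1) (h0 0 hm) ?_
      (.of_continuousOn ((hE 1).pdt H.hx H.hT).continuousOn)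
    refine ParOrder.congr ?_ (hEx 0 hm)
    refine .of_partials (e := 0) hz₀ (hE 0) ?_
      (.of_continuousOn ((hE 0).pdx H.hx H.hT).continuousOn)
      (.of_continuousOn ((hE 0).pdt H.hx H.hT).continuousOn)
    simp [heatPoly_zero, hκ]
  | more m ih0 ih1 =>
    refine .of_partials (e := m + 2) hz₀ (hE _) (h0 (m + 1) hm)
      ((ih1 (by omega)).congr (hEx (m + 1) hm)) ?_
    obtain ⟨g, hg, hpde⟩ := H.pdt_pdx_iterate (k - (m + 2))
    have e1 := (ih0 (by omega)).smul_continuousOn H.coeff_a.continuousOn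
    have e2 := (ha1.mul (ParOrder.heatPoly (a z₀) m)).smul_continuousOn (x₀ := x₀) (x₁ := x₁)
      (T := T) (g := fun _ => κ) continuousOn_const
    rw [add_comm 1 m] at e2
    have e3 : ParOrder S z₀ (m + 1) g := .of_derivComb hg fun l hl =>
      (H.parOrder_pdx_iterate hz₀ hk l).mono (by omega)
    refine ((e1.add e2).add e3).congr fun z hz => ?_
    rw [pdt_sub H.hT (H.sol.pdx_iterate H.hx H.hT _) (hP (m + 2)) hz, hPt m z hz, hpde z hz,
      show k - (m + 2) + 2 = k - m by omega]
    ring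

end LinearParabolic

section LocalZeros

variable {x₀ x₁ T : ℝ} {w a b c g : ℝ × ℝ → ℝ} {z₀ : ℝ × ℝ} {α κ : ℝ}

local notation "S" => rect x₀ x₁ T

theorem parDist_pos {z₀ z : ℝ × ℝ} (h : z ≠ z₀) : 0 < parDist z₀ z := by
  unfold parDist
  by_contra! h0
  have h1 := abs_nonneg (z.1 - z₀.1)
  have h2 := Real.sqrt_nonneg |z.2 - z₀.2|
  have h3 : |z.1 - z₀.1| = 0 := by linarith
  have h4 : √|z.2 - z₀.2| = 0 := by linarith
  rw [Real.sqrt_eq_zero (abs_nonneg _), abs_eq_zero, sub_eq_zero] at h4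
  rw [abs_eq_zero, sub_eq_zero] at h3
  exact h (Prod.ext h3 h4)

/-- Forward in time, an even leading heat polynomial determines the sign. -/
theorem pos_near_of_even (hα : 0 < α) (hκ : κ ≠ 0) (n : ℕ)
    (h : ParOrder S z₀ (2 * n + 1)
      (fun z => g z - κ * heatPoly α (2 * n) (z.1 - z₀.1) (z.2 - z₀.2))) :
    ∃ ρ > 0, ∀ z ∈ S, z₀.2 ≤ z.2 → z ≠ z₀ → parDist z₀ z < ρ → 0 < κ * g z := by
  obtain ⟨C, hC, h⟩ := h
  obtain ⟨d, hd, hlow⟩ := heatPoly_lower_bound hα n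
  refine ⟨|κ| * d / 2 ^ n / (C + 1), by positivity, fun z hz ht hne hσ => ?_⟩
  have hσ0 := parDist_pos hne
  set σ := parDist z₀ z with hσdef
  set X := z.1 - z₀.1
  set τ := z.2 - z₀.2
  have hτ : 0 ≤ τ := sub_nonneg.2 ht
  have h1 : σ ^ 2 ≤ 2 * (X ^ 2 + τ) := by
    have e1 : σ = |X| + √τ := by rw [hσdef, parDist, abs_of_nonneg hτ]
    have e2 := Real.sq_sqrt hτ
    have e3 := sq_abs X
    rw [e1]
    nlinarith [sq_nonneg (|X| - √τ)]
  have h2 : σ ^ (2 * n) / 2 ^ n ≤ (X ^ 2 + τ) ^ n := by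
    rw [pow_mul, ← div_pow]
    gcongr
    linarith
  have h3 := (hlow X τ hτ).1
  have h4 := h z hz
  rw [lt_div_iff₀ (by positivity)] at hσ
  have h5 : C * σ < |κ| * d / 2 ^ n := by nlinarith
  have hκ' : 0 < |κ| := abs_pos.2 hκ
  have h6 : |κ * (g z - κ * heatPoly α (2 * n) X τ)| ≤ |κ| * (C * σ ^ (2 * n + 1)) := by
    rw [abs_mul]; gcongr
  have h7 : κ ^ 2 * (d * (σ ^ (2 * n) / 2 ^ n)) ≤ κ ^ 2 * heatPoly α (2 * n) X τ := by
    refine mul_le_mul_of_nonneg_left (le_trans ?_ h3) (sq_nonneg κ)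
    gcongr
  have h8 : 0 < |κ| * σ ^ (2 * n) * (|κ| * d / 2 ^ n - C * σ) :=
    mul_pos (by positivity) (by linarith)
  have h9 : |κ| * σ ^ (2 * n) * (|κ| * d / 2 ^ n - C * σ) =
      κ ^ 2 * (d * (σ ^ (2 * n) / 2 ^ n)) - |κ| * (C * σ ^ (2 * n + 1)) := by
    rw [← sq_abs κ]; ring
  have h10 := (abs_le.1 h6).1
  nlinarith

/-- The sign of a function on a parabola through `z₀` is that of its leading heat polynomial. -/
theorem sign_on_parabola (hκ : κ ≠ 0) (k : ℕ) (X τ : ℝ) (hP : heatPoly α k X τ ≠ 0)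
    (h : ParOrder S z₀ (k + 1) (fun z => g z - κ * heatPoly α k (z.1 - z₀.1) (z.2 - z₀.2))) :
    ∃ ρ > 0, ∀ r, 0 < r → r < ρ → (z₀.1 + r * X, z₀.2 + r ^ 2 * τ) ∈ S →
      0 < κ * heatPoly α k X τ * g (z₀.1 + r * X, z₀.2 + r ^ 2 * τ) := by
  obtain ⟨C, hC, h⟩ := h
  set P := heatPoly α k X τ with hPdef
  obtain ⟨L, hLdef⟩ : ∃ L, L = |X| + √|τ| := ⟨_, rfl⟩
  have hL : 0 ≤ L := by rw [hLdef]; positivity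
  refine ⟨|κ * P| / (C * L ^ (k + 1) + 1), by positivity, fun r hr hrρ hz => ?_⟩
  have h1 := h _ hz
  simp only [add_sub_cancel_left] at h1
  rw [heatPoly_homogeneous, ← hPdef] at h1
  have h2 : parDist z₀ (z₀.1 + r * X, z₀.2 + r ^ 2 * τ) = r * L := by
    unfold parDist
    simp only [add_sub_cancel_left, abs_mul, abs_of_pos hr, abs_of_pos (pow_pos hr 2)]
    rw [Real.sqrt_mul (by positivity), Real.sqrt_sq hr.le, ← mul_add, hLdef]
  rw [h2] at h1
  set G := g (z₀.1 + r * X, z₀.2 + r ^ 2 * τ)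
  have hκP : κ * P ≠ 0 := mul_ne_zero hκ hP
  have hκP' : 0 < |κ * P| := abs_pos.2 hκP
  rw [lt_div_iff₀ (by positivity)] at hrρ
  have h3 : C * L ^ (k + 1) * r < |κ * P| := by nlinarith
  have h4 : |κ * P * (G - κ * (r ^ k * P))| ≤ |κ * P| * (C * (r * L) ^ (k + 1)) := by
    rw [abs_mul]; gcongr
  have h5 := (abs_le.1 h4).1
  have h6 : 0 < |κ * P| * r ^ k * (|κ * P| - C * L ^ (k + 1) * r) :=
    mul_pos (by positivity) (by linarith)
  have h7 : |κ * P| * r ^ k * (|κ * P| - C * L ^ (k + 1) * r) =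
      (κ * P) ^ 2 * r ^ k - |κ * P| * (C * (r * L) ^ (k + 1)) := by
    linear_combination r ^ k * sq_abs (κ * P)
  nlinarith

theorem exists_zero_of_mul_neg {f : ℝ → ℝ} {u v : ℝ} (huv : u ≤ v) (hf : ContinuousOn f (Icc u v))
    (h : f u * f v < 0) : ∃ x ∈ Ioo u v, f x = 0 := by
  rcases mul_neg_iff.1 h with ⟨h1, h2⟩ | ⟨h1, h2⟩
  · exact intermediate_value_Ioo' huv hf ⟨h2, h1⟩
  · exact intermediate_value_Ioo huv hf ⟨h1, h2⟩

namespace LinearParabolic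

variable {k : ℕ}

/-- Just after a zero of finite order there is at most one zero nearby. -/
theorem subsingleton_zeros_after (H : LinearParabolic x₀ x₁ T w a b c) (hz₀ : z₀ ∈ S)
    (hk : ∀ i < k, (pdx S)^[i] w z₀ = 0) (hk1 : 1 ≤ k) (hκ : (pdx S)^[k] w z₀ ≠ 0) :
    ∃ ρ > 0, ∀ t ∈ Icc 0 T, z₀.2 ≤ t → t < z₀.2 + ρ →
      {x ∈ Icc x₀ x₁ | |x - z₀.1| < ρ ∧ w (x, t) = 0}.Subsingleton := by
  have hα := H.pos z₀ hz₀
  obtain ⟨n, hn | hn⟩ := Nat.even_or_odd' k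
  · have hE := H.parOrder_sub_heatPoly hz₀ hk k le_rfl
    rw [Nat.sub_self, Function.iterate_zero, id, hn] at hE
    rw [hn] at hκ
    obtain ⟨ρ, hρ, hpos⟩ := pos_near_of_even hα hκ n hE
    refine ⟨min (ρ / 2) ((ρ / 2) ^ 2), by positivity, fun t ht ht1 ht2 => ?_⟩
    have key : ∀ x ∈ {x ∈ Icc x₀ x₁ | |x - z₀.1| < min (ρ / 2) ((ρ / 2) ^ 2) ∧ w (x, t) = 0},
        x = z₀.1 := by
      rintro x ⟨hx, hxρ, hw⟩
      by_contra hne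
      have := hpos (x, t) ⟨hx, ht⟩ ht1 (fun h => hne (by rw [← h])) ?_
      · rw [hw, mul_zero] at this
        exact this.false
      · unfold parDist
        have h1 := hxρ.trans_le (min_le_left _ _)
        have h2 : √|t - z₀.2| < ρ / 2 := by
          rw [Real.sqrt_lt' (by positivity), abs_of_nonneg (by linarith)]
          linarith [min_le_right (ρ / 2) ((ρ / 2) ^ 2)]
        simp only
        linarith
    intro x hx y hy
    rw [key x hx, key y hy]
  · have hE := H.parOrder_sub_heatPoly hz₀ hk (2 * n) (by omega)
    rw [show k - 2 * n = 1 by omega] at hE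
    obtain ⟨ρ, hρ, hpos⟩ := pos_near_of_even hα hκ n hE
    refine ⟨min (ρ / 2) ((ρ / 2) ^ 2), by positivity, fun t ht ht1 ht2 => ?_⟩
    have rolle : ∀ u ∈ Icc x₀ x₁, ∀ v ∈ Icc x₀ x₁, u < v → w (u, t) = 0 → w (v, t) = 0 →
        |u - z₀.1| < min (ρ / 2) ((ρ / 2) ^ 2) → |v - z₀.1| < min (ρ / 2) ((ρ / 2) ^ 2) →
        t = z₀.2 ∧ z₀.1 ∈ Ioo u v := by
      intro u hu v hv huv hwu hwv huρ hvρ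
      have hsub : Icc u v ⊆ Icc x₀ x₁ := Icc_subset_Icc hu.1 hv.2
      obtain ⟨ξ, hξ, hξ0⟩ := exists_hasDerivAt_eq_zero (f := fun x => w (x, t))
        (f' := fun x => pdx S w (x, t)) huv
        (fun x hx => ((H.sol.hasDerivWithinAt_pdx (x := x) (t := t)
          ⟨hsub hx, ht⟩).continuousWithinAt).mono hsub) (by simp only [hwu, hwv])
        (fun x hx => (H.sol.hasDerivWithinAt_pdx (x := x) (t := t)
          ⟨hsub (Ioo_subset_Icc_self hx), ht⟩).hasDerivAt
          (Icc_mem_nhds (hu.1.trans_lt hx.1) (hx.2.trans_le hv.2)))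
      have heq : (ξ, t) = z₀ := by
        by_contra hne
        have := hpos (ξ, t) ⟨hsub (Ioo_subset_Icc_self hξ), ht⟩ ht1 hne ?_
        · rw [Function.iterate_one, hξ0, mul_zero] at this
          exact this.false
        · unfold parDist
          have h1 : |ξ - z₀.1| < ρ / 2 := by
            have h3 := abs_lt.1 (huρ.trans_le (min_le_left _ _))
            have h4 := abs_lt.1 (hvρ.trans_le (min_le_left _ _))
            exact abs_lt.2 ⟨by linarith [hξ.1], by linarith [hξ.2]⟩
          have h2 : √|t - z₀.2| < ρ / 2 := by
            rw [Real.sqrt_lt' (by positivity), abs_of_nonneg (by linarith)]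
            linarith [min_le_right (ρ / 2) ((ρ / 2) ^ 2)]
          simp only
          linarith
      subst heq
      exact ⟨rfl, hξ⟩
    have no : ∀ u ∈ {x ∈ Icc x₀ x₁ | |x - z₀.1| < min (ρ / 2) ((ρ / 2) ^ 2) ∧ w (x, t) = 0},
        ∀ v ∈ {x ∈ Icc x₀ x₁ | |x - z₀.1| < min (ρ / 2) ((ρ / 2) ^ 2) ∧ w (x, t) = 0},
        ¬ u < v := by
      rintro u ⟨hu, huρ, hwu⟩ v ⟨hv, hvρ, hwv⟩ huv
      obtain ⟨rfl, h1⟩ := rolle u hu v hv huv hwu hwv huρ hvρ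
      have h0 : w (z₀.1, z₀.2) = 0 := hk 0 hk1
      have := (rolle u hu z₀.1 hz₀.1 h1.1 hwu h0 huρ (by rw [sub_self, abs_zero]; positivity)).2
      exact this.2.false
    intro u hu v hv
    exact le_antisymm (not_lt.1 (no v hv u hu)) (not_lt.1 (no u hu v hv))

/-- Just before a zero of order `k` there are at least `min k 2` zeros nearby. -/
theorem exists_zeros_before (H : LinearParabolic x₀ x₁ T w a b c) (hz₀ : z₀ ∈ S)
    (hz₀x : z₀.1 ∈ Ioo x₀ x₁)
    (hk : ∀ i < k, (pdx S)^[i] w z₀ = 0) (hk1 : 1 ≤ k) (hκ : (pdx S)^[k] w z₀ ≠ 0) :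
    ∃ ρ > 0, ∀ ε, 0 < ε → ε < ρ → ∃ δ > 0, ∀ t ∈ Icc 0 T, z₀.2 - δ < t → t < z₀.2 →
      ∃ x ∈ Icc x₀ x₁, ∃ y ∈ Icc x₀ x₁, |x - z₀.1| < ε ∧ |y - z₀.1| < ε ∧
        w (x, t) = 0 ∧ w (y, t) = 0 ∧ (2 ≤ k → x < y) := by
  have hα := H.pos z₀ hz₀
  have hE := H.parOrder_sub_heatPoly hz₀ hk k le_rfl
  rw [Nat.sub_self, Function.iterate_zero, id] at hE
  set κ := (pdx S)^[k] w z₀ with hκdef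
  obtain ⟨ρ₁, hρ₁, hr⟩ := sign_on_parabola hκ k 1 0 (by rw [heatPoly_at_zero]; positivity) hE
  obtain ⟨ρ₂, hρ₂, hl⟩ := sign_on_parabola hκ k (-1) 0 (by rw [heatPoly_at_zero]; positivity) hE
  have hxl := sub_pos.2 hz₀x.1
  have hxr := sub_pos.2 hz₀x.2
  have hcont : ContinuousOn w S := H.sol.continuousOn
  have hcx : ∀ t ∈ Icc 0 T, ContinuousOn (fun x => w (x, t)) (Icc x₀ x₁) := fun t ht =>
    hcont.comp (f := fun x => (x, t)) (by fun_prop) fun x hx => ⟨hx, ht⟩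
  refine ⟨min (min ρ₁ ρ₂) (min (z₀.1 - x₀) (x₁ - z₀.1)), by positivity, fun ε hε hερ => ?_⟩
  simp only [lt_min_iff] at hερ
  obtain ⟨⟨he1, he2⟩, he3, he4⟩ := hερ
  have hmr : z₀.1 + ε ∈ Icc x₀ x₁ := ⟨by linarith, by linarith⟩
  have hml : z₀.1 - ε ∈ Icc x₀ x₁ := ⟨by linarith, by linarith⟩
  have sr : 0 < κ * w (z₀.1 + ε, z₀.2) := by
    have := hr ε hε he1 ⟨by simpa using hmr, by simpa using hz₀.2⟩
    simp only [mul_one, mul_zero, add_zero, heatPoly_at_zero, one_pow] at this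
    rw [mul_right_comm] at this
    exact pos_of_mul_pos_left this (by positivity)
  have sl : 0 < κ * (-1) ^ k * w (z₀.1 - ε, z₀.2) := by
    have := hl ε hε he2 ⟨by simpa [← sub_eq_add_neg] using hml, by simpa using hz₀.2⟩
    simp only [mul_neg, mul_one, mul_zero, add_zero, heatPoly_at_zero, ← sub_eq_add_neg] at this
    rw [← mul_div_assoc, div_mul_eq_mul_div] at this
    exact (div_pos_iff_of_pos_right (by positivity)).1 this
  have hct : ∀ x ∈ Icc x₀ x₁, ContinuousWithinAt (fun t => w (x, t)) (Icc 0 T) z₀.2 :=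
    fun x hx => (hcont.comp (f := fun t => (x, t)) (by fun_prop) fun t ht => ⟨hx, ht⟩) _ hz₀.2
  have ev1 : ∀ᶠ t in 𝓝[Icc 0 T] z₀.2, 0 < κ * w (z₀.1 + ε, t) :=
    ((hct _ hmr).const_mul κ).eventually (eventually_gt_nhds sr)
  have ev2 : ∀ᶠ t in 𝓝[Icc 0 T] z₀.2, 0 < κ * (-1) ^ k * w (z₀.1 - ε, t) :=
    ((hct _ hml).const_mul _).eventually (eventually_gt_nhds sl)
  obtain ⟨δ₁, hδ₁, hev⟩ := Metric.mem_nhdsWithin_iff.1 (ev1.and ev2)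
  rcases hk1.eq_or_lt with rfl | hk2
  · refine ⟨δ₁, hδ₁, fun t ht ht1 ht2 => ?_⟩
    obtain ⟨h1, h2⟩ := hev (a := t)
      ⟨by rw [Metric.mem_ball, Real.dist_eq, abs_lt]; constructor <;> linarith, ht⟩
    obtain ⟨x, hx, hx0⟩ := exists_zero_of_mul_neg (f := fun x => w (x, t))
      (show z₀.1 - ε ≤ z₀.1 + ε by linarith) ((hcx t ht).mono (Icc_subset_Icc hml.1 hmr.2)) (by
        have := mul_pos h1 h2
        by_contra! hc
        nlinarith [mul_nonneg (sq_nonneg κ) hc])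
    have hxm : x ∈ Icc x₀ x₁ := ⟨hml.1.trans hx.1.le, hx.2.le.trans hmr.2⟩
    have hxε : |x - z₀.1| < ε := abs_lt.2 ⟨by linarith [hx.1], by linarith [hx.2]⟩
    exact ⟨x, hxm, x, hxm, hxε, hxε, hx0, hx0, fun h => by omega⟩
  · obtain ⟨k, rfl⟩ : ∃ j, k = j + 2 := ⟨k - 2, by omega⟩
    obtain ⟨y, hy, hPy⟩ := exists_heatPoly_neg hα k
    obtain ⟨ρ₃, hρ₃, hr'⟩ := sign_on_parabola hκ _ y (-1) hPy.ne hE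
    obtain ⟨ρ₄, hρ₄, hl'⟩ := sign_on_parabola hκ _ (-y) (-1)
      (by rw [heatPoly_neg]; exact mul_ne_zero (by positivity) hPy.ne) hE
    set δ₂ := min (min ρ₃ ρ₄) (ε / (y + 1)) with hδ₂
    have hδ₂0 : 0 < δ₂ := by positivity
    refine ⟨min δ₁ (δ₂ ^ 2), by positivity, fun t ht ht1 ht2 => ?_⟩
    have hd1 := min_le_left δ₁ (δ₂ ^ 2)
    have hd2 := min_le_right δ₁ (δ₂ ^ 2)
    obtain ⟨h1, h2⟩ := hev (a := t)
      ⟨by rw [Metric.mem_ball, Real.dist_eq, abs_lt]; constructor <;> linarith, ht⟩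
    set r := √(z₀.2 - t) with hrdef
    have hr0 : 0 < r := Real.sqrt_pos.2 (by linarith)
    have hr2 : r ^ 2 = z₀.2 - t := Real.sq_sqrt (by linarith)
    have hrδ : r < δ₂ := by
      rw [hrdef, Real.sqrt_lt' hδ₂0]; linarith
    simp only [hδ₂, lt_min_iff] at hrδ
    obtain ⟨⟨hr3, hr4⟩, hr5⟩ := hrδ
    rw [lt_div_iff₀ (by positivity)] at hr5
    have hry : r * y < ε := by nlinarith
    have hry0 : 0 ≤ r * y := by positivity
    have htt : z₀.2 + r ^ 2 * (-1) = t := by rw [hr2]; ring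
    have hmr' : z₀.1 + r * y ∈ Icc x₀ x₁ := ⟨by linarith, by linarith⟩
    have hml' : z₀.1 - r * y ∈ Icc x₀ x₁ := ⟨by linarith, by linarith⟩
    have s1 := hr' r hr0 hr3 (by rw [htt]; exact ⟨hmr', ht⟩)
    have s2 := hl' r hr0 hr4 (by rw [htt, mul_neg, ← sub_eq_add_neg]; exact ⟨hml', ht⟩)
    rw [htt] at s1 s2
    rw [heatPoly_neg, mul_neg, ← sub_eq_add_neg] at s2
    obtain ⟨u, hu, hu0⟩ := exists_zero_of_mul_neg (f := fun x => w (x, t))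
      (show z₀.1 - ε ≤ z₀.1 - r * y by linarith) ((hcx t ht).mono (Icc_subset_Icc hml.1 hml'.2)) (by
        have h3 := mul_pos h2 s2
        have h4 : ((-1 : ℝ) ^ (k + 2)) ^ 2 = 1 := by rw [← pow_mul, mul_comm, pow_mul]; norm_num
        by_contra! hc
        have h5 := mul_nonneg (mul_nonneg (sq_nonneg κ) hc) (neg_nonneg.2 hPy.le)
        have h6 : κ * (-1) ^ (k + 2) * w (z₀.1 - ε, t) * (κ * ((-1) ^ (k + 2) *
          heatPoly (a z₀) (k + 2) y (-1)) * w (z₀.1 - r * y, t)) = ((-1 : ℝ) ^ (k + 2)) ^ 2 *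
          (κ ^ 2 * (w (z₀.1 - ε, t) * w (z₀.1 - r * y, t)) *
          heatPoly (a z₀) (k + 2) y (-1)) := by ring
        rw [h6, h4] at h3
        linarith)
    obtain ⟨v, hv, hv0⟩ := exists_zero_of_mul_neg (f := fun x => w (x, t))
      (show z₀.1 + r * y ≤ z₀.1 + ε by linarith) ((hcx t ht).mono (Icc_subset_Icc hmr'.1 hmr.2)) (by
        have h3 := mul_pos h1 s1
        by_contra! hc
        have h5 := mul_nonneg (mul_nonneg (sq_nonneg κ) hc) (neg_nonneg.2 hPy.le)
        linarith)
    exact ⟨u, ⟨by linarith [hu.1], by linarith [hu.2]⟩, v, ⟨by linarith [hv.1], by linarith [hv.2]⟩,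
      abs_lt.2 ⟨by linarith [hu.1], by linarith [hu.2]⟩,
      abs_lt.2 ⟨by linarith [hv.1], by linarith [hv.2]⟩, hu0, hv0,
      fun _ => by linarith [hu.2, hv.1]⟩

end LinearParabolic

end LocalZeros

/-- Growth lemma behind the parabolic frequency function `s * D / H`, `s = T + ε - t`: almost
monotonicity of the frequency bounds `H` at the final time from below by a power of `ε`. -/
theorem frequency_lower_bound {T C N₀ : ℝ} (hT : 0 < T) (hC : 0 ≤ C) (hN₀ : 0 ≤ N₀) :
    ∃ K : ℕ, ∃ c > 0, ∀ ε, 0 < ε → ε ≤ 1 → ∀ H D H' D' : ℝ → ℝ,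
      (∀ t ∈ Icc 0 T, HasDerivWithinAt H (H' t) (Icc 0 T) t) →
      (∀ t ∈ Icc 0 T, HasDerivWithinAt D (D' t) (Icc 0 T) t) →
      (∀ t ∈ Icc 0 T, 0 < H t) → (∀ t ∈ Icc 0 T, 0 ≤ D t) →
      (∀ t ∈ Icc 0 T, (T + ε - t) * D' t * H t - D t * H t - (T + ε - t) * D t * H' t ≤
        C * H t * (H t + (T + ε - t) * D t)) →
      (∀ t ∈ Icc 0 T, -(C * D t + (C + C / (T + ε - t)) * H t) ≤ H' t) →
      (T + ε) * D 0 ≤ N₀ * H 0 → c * H 0 * ε ^ K ≤ H T := by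
  set N := (1 + N₀) * Real.exp (C * T) with hN
  have hN0 : 0 ≤ N := by positivity
  obtain ⟨K, hK⟩ := exists_nat_ge (C * (1 + N))
  refine ⟨K, Real.exp (-(C * T)) / (T + 1) ^ K, by positivity, ?_⟩
  intro ε hε hε1 H D H' D' hH hD hHpos hDpos h1 h2 h0
  have hs : ∀ t ∈ Icc 0 T, 0 < T + ε - t := fun t ht => by linarith [ht.2]
  have h0T : (0 : ℝ) ∈ Icc 0 T := ⟨le_rfl, hT.le⟩
  have hTT : T ∈ Icc 0 T := ⟨hT.le, le_rfl⟩
  have hsd : ∀ t, HasDerivWithinAt (fun t => T + ε - t) (-1) (Icc 0 T) t := fun t =>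
    (hasDerivWithinAt_id t _).const_sub (T + ε)
  have hfreq : ∀ t ∈ Icc 0 T, H t + (T + ε - t) * D t ≤ N * H t := by
    let g : ℝ → ℝ := fun t => (1 + (T + ε - t) * D t / H t) * Real.exp (-(C * t))
    have hg : ∀ t ∈ Icc 0 T, HasDerivWithinAt g
        ((((-1) * D t + (T + ε - t) * D' t) * H t - (T + ε - t) * D t * H' t) / H t ^ 2 *
          Real.exp (-(C * t)) + (1 + (T + ε - t) * D t / H t) *
          (Real.exp (-(C * t)) * (-(C * 1)))) (Icc 0 T) t := fun t ht =>
      ((((hsd t).mul (hD t ht)).div (hH t ht) (hHpos t ht).ne').const_add 1).mul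
        (((hasDerivWithinAt_id t _).const_mul C).neg.exp)
    have hanti : AntitoneOn g (Icc 0 T) := by
      refine antitoneOn_of_deriv_nonpos (convex_Icc _ _)
        (fun t ht => (hg t ht).continuousWithinAt) ?_ ?_
      · rw [interior_Icc]
        intro t ht
        exact ((hg t (Ioo_subset_Icc_self ht)).hasDerivAt
          (Icc_mem_nhds ht.1 ht.2)).differentiableAt.differentiableWithinAt
      · rw [interior_Icc]
        intro t ht
        have ht' := Ioo_subset_Icc_self ht
        rw [((hg t ht').hasDerivAt (Icc_mem_nhds ht.1 ht.2)).deriv]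
        have hH0 := hHpos t ht'
        have e : ((((-1) * D t + (T + ε - t) * D' t) * H t - (T + ε - t) * D t * H' t) / H t ^ 2 *
            Real.exp (-(C * t)) + (1 + (T + ε - t) * D t / H t) *
            (Real.exp (-(C * t)) * (-(C * 1)))) = Real.exp (-(C * t)) / H t ^ 2 *
            ((T + ε - t) * D' t * H t - D t * H t - (T + ε - t) * D t * H' t -
              C * H t * (H t + (T + ε - t) * D t)) := by
          field_simp
          ring
        rw [e]
        exact mul_nonpos_of_nonneg_of_nonpos (by positivity) (by linarith [h1 t ht'])
    intro t ht
    have hH0 := hHpos t ht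
    have h3 := hanti h0T ht ht.1
    have h4 : g 0 ≤ 1 + N₀ := by
      simp only [g, mul_zero, neg_zero, Real.exp_zero, mul_one, sub_zero]
      have : (T + ε) * D 0 / H 0 ≤ N₀ := by rwa [div_le_iff₀ (hHpos 0 h0T)]
      linarith
    have h5 : 1 + (T + ε - t) * D t / H t ≤ N := by
      have h6 : (1 + (T + ε - t) * D t / H t) * Real.exp (-(C * t)) ≤ 1 + N₀ := h3.trans h4
      rw [Real.exp_neg, ← div_eq_mul_inv, div_le_iff₀ (Real.exp_pos _)] at h6
      refine h6.trans (mul_le_mul_of_nonneg_left (Real.exp_le_exp.2 ?_) (by linarith))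
      exact mul_le_mul_of_nonneg_left ht.2 hC
    calc H t + (T + ε - t) * D t = (1 + (T + ε - t) * D t / H t) * H t := by field_simp
      _ ≤ N * H t := by gcongr
  let L : ℝ → ℝ := fun t => H t / (T + ε - t) ^ K * Real.exp (C * t)
  have hL : ∀ t ∈ Icc 0 T, HasDerivWithinAt L
      ((H' t * (T + ε - t) ^ K - H t * (K * (T + ε - t) ^ (K - 1) * (-1))) /
        ((T + ε - t) ^ K) ^ 2 * Real.exp (C * t) + H t / (T + ε - t) ^ K *
        (Real.exp (C * t) * (C * 1))) (Icc 0 T) t := fun t ht =>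
    ((hH t ht).div ((hsd t).pow K) (pow_ne_zero _ (hs t ht).ne')).mul
      (((hasDerivWithinAt_id t _).const_mul C).exp)
  have hmono : MonotoneOn L (Icc 0 T) := by
    refine monotoneOn_of_deriv_nonneg (convex_Icc _ _)
      (fun t ht => (hL t ht).continuousWithinAt) ?_ ?_
    · rw [interior_Icc]
      intro t ht
      exact ((hL t (Ioo_subset_Icc_self ht)).hasDerivAt
        (Icc_mem_nhds ht.1 ht.2)).differentiableAt.differentiableWithinAt
    · rw [interior_Icc]
      intro t ht
      have ht' := Ioo_subset_Icc_self ht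
      rw [((hL t ht').hasDerivAt (Icc_mem_nhds ht.1 ht.2)).deriv]
      have hst := hs t ht'
      have hH0 := hHpos t ht'
      have e : (H' t * (T + ε - t) ^ K - H t * (K * (T + ε - t) ^ (K - 1) * (-1))) /
          ((T + ε - t) ^ K) ^ 2 * Real.exp (C * t) + H t / (T + ε - t) ^ K *
          (Real.exp (C * t) * (C * 1)) = Real.exp (C * t) / (T + ε - t) ^ K *
          (H' t + (K / (T + ε - t) + C) * H t) := by
        rcases K with _ | K
        · simp; ring
        · rw [Nat.add_sub_cancel]
          field_simp
          ring
      rw [e]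
      refine mul_nonneg (by positivity) ?_
      have h3 := h2 t ht'
      have h4 : D t ≤ N * H t / (T + ε - t) := by
        rw [le_div_iff₀ hst]
        linarith [hfreq t ht']
      have h5 : C * (1 + N) / (T + ε - t) * H t ≤ K / (T + ε - t) * H t := by gcongr
      have h6 : C * D t ≤ C * (N * H t / (T + ε - t)) := mul_le_mul_of_nonneg_left h4 hC
      have h7 : C * (1 + N) / (T + ε - t) * H t =
          C / (T + ε - t) * H t + C * (N * H t / (T + ε - t)) := by ring
      linarith
  have hfin := hmono h0T hTT hT.le
  simp only [L, mul_zero, Real.exp_zero, mul_one, sub_zero, add_sub_cancel_left] at hfin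
  have hH0 := hHpos 0 h0T
  have h3 : H 0 / (T + 1) ^ K ≤ H 0 / (T + ε) ^ K := by gcongr
  have h4 := h3.trans hfin
  rw [div_mul_eq_mul_div, le_div_iff₀ (by positivity)] at h4
  rw [Real.exp_neg]
  have h5 : (Real.exp (C * T))⁻¹ * (H 0 / (T + 1) ^ K * ε ^ K) ≤
      (Real.exp (C * T))⁻¹ * (H T * Real.exp (C * T)) := by gcongr
  calc _ = (Real.exp (C * T))⁻¹ * (H 0 / (T + 1) ^ K * ε ^ K) := by ring
    _ ≤ _ := h5
    _ = H T := by field_simp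

section RectIntegrals

variable {x₀ x₁ T : ℝ} {f g : ℝ × ℝ → ℝ}

local notation "S" => rect x₀ x₁ T

theorem ContinuousOn.slice (hf : ContinuousOn f S) {t : ℝ} (ht : t ∈ Icc 0 T) :
    ContinuousOn (fun x => f (x, t)) (Icc x₀ x₁) :=
  hf.comp (f := fun x => (x, t)) (by fun_prop) fun _ hx => ⟨hx, ht⟩

theorem ContinuousOn.intervalIntegrable_slice (hx : x₀ ≤ x₁) (hf : ContinuousOn f S) {t : ℝ}
    (ht : t ∈ Icc 0 T) : IntervalIntegrable (fun x => f (x, t)) volume x₀ x₁ := by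
  apply ContinuousOn.intervalIntegrable
  rw [uIcc_of_le hx]
  exact hf.slice ht

theorem integral_pdx (hx : x₀ < x₁) (hT : 0 < T) (hf : ContDiffOn ℝ ∞ f S) {t : ℝ}
    (ht : t ∈ Icc 0 T) : ∫ x in x₀..x₁, pdx S f (x, t) = f (x₁, t) - f (x₀, t) :=
  intervalIntegral.integral_eq_sub_of_hasDerivAt_of_le hx.le (hf.continuousOn.slice ht)
    (fun x hxm => (hf.hasDerivWithinAt_pdx (x := x) (t := t)
      ⟨Ioo_subset_Icc_self hxm, ht⟩).hasDerivAt (Icc_mem_nhds hxm.1 hxm.2))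
    ((hf.pdx hx hT).continuousOn.intervalIntegrable_slice hx.le ht)

theorem hasDerivWithinAt_integral_slice (hx : x₀ < x₁) (hT : 0 < T) (hf : ContDiffOn ℝ ∞ f S)
    {t : ℝ} (ht : t ∈ Icc 0 T) : HasDerivWithinAt (fun t => ∫ x in x₀..x₁, f (x, t))
      (∫ x in x₀..x₁, pdt S f (x, t)) (Icc 0 T) t := by
  have hswap : MapsTo (fun y : ℝ × ℝ => (y.2, y.1)) (Icc 0 T ×ˢ Icc x₀ x₁) S :=
    fun y hy => ⟨hy.2, hy.1⟩
  have key := hasFDerivWithinAt_integral_param (E := ℝ) (G := ℝ) (convex_Icc 0 T) hx.le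
    (g := fun t x => f (x, t))
    (g' := fun t x => ContinuousLinearMap.toSpanSingleton ℝ (pdt S f (x, t)))
    (fun t ht x hxm => (hf.hasDerivWithinAt_pdt (x := x) (t := t) ⟨hxm, ht⟩).hasFDerivWithinAt)
    (hf.continuousOn.comp (f := fun y : ℝ × ℝ => (y.2, y.1)) (by fun_prop) hswap)
    (by
      have h1 : ContinuousOn (fun y : ℝ × ℝ => pdt S f (y.2, y.1)) (Icc 0 T ×ˢ Icc x₀ x₁) :=
        (hf.pdt hx hT).continuousOn.comp (f := fun y : ℝ × ℝ => (y.2, y.1)) (by fun_prop) hswap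
      exact (ContinuousLinearMap.toSpanSingletonCLE (𝕜 := ℝ) (E := ℝ)).continuous.comp_continuousOn
        h1) ht
  have h2 := key.hasDerivWithinAt
  refine h2.congr_deriv ?_
  rw [ContinuousLinearMap.intervalIntegral_apply]
  · simp
  · apply ContinuousOn.intervalIntegrable
    rw [uIcc_of_le hx.le]
    exact (ContinuousLinearMap.toSpanSingletonCLE (𝕜 := ℝ) (E := ℝ)).continuous.comp_continuousOn
      ((hf.pdt hx hT).continuousOn.slice ht)

end RectIntegrals

/-- Smooth `w` on the rectangle together with the arclength density `α`, an arclength coordinate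
`ρ` and the arclength derivative `p` of `w`. -/
structure ArclengthData (x₀ x₁ T : ℝ) (w α ρ p : ℝ × ℝ → ℝ) : Prop where
  hx : x₀ < x₁
  hT : 0 < T
  sol : ContDiffOn ℝ ∞ w (rect x₀ x₁ T)
  density : ContDiffOn ℝ ∞ α (rect x₀ x₁ T)
  coord : ContDiffOn ℝ ∞ ρ (rect x₀ x₁ T)
  slope : ContDiffOn ℝ ∞ p (rect x₀ x₁ T)
  pos : ∀ z ∈ rect x₀ x₁ T, 0 < α z
  pdx_coord : ∀ z ∈ rect x₀ x₁ T, pdx (rect x₀ x₁ T) ρ z = α z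
  pdx_sol : ∀ z ∈ rect x₀ x₁ T, pdx (rect x₀ x₁ T) w z = α z * p z

/-- The (unnormalized) backward Gaussian weight `exp (-ρ² / (4 * s))`, where `s = T + ε - t`. -/
noncomputable def gaussWeight (T ε : ℝ) (ρ : ℝ × ℝ → ℝ) (z : ℝ × ℝ) : ℝ :=
  Real.exp (-(ρ z ^ 2 / (4 * (T + ε - z.2))))

/-- The drift `ρ_t + ρ / (2 * s)` of the Gaussian weight. -/
noncomputable def gaussDrift (x₀ x₁ T ε : ℝ) (ρ : ℝ × ℝ → ℝ) (z : ℝ × ℝ) : ℝ :=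
  pdt (rect x₀ x₁ T) ρ z + ρ z / (2 * (T + ε - z.2))

/-- The derivative of `w` along the drift. -/
noncomputable def driftDeriv (x₀ x₁ T ε : ℝ) (w ρ p : ℝ × ℝ → ℝ) (z : ℝ × ℝ) : ℝ :=
  pdt (rect x₀ x₁ T) w z - gaussDrift x₀ x₁ T ε ρ z * p z

/-- The Ornstein-Uhlenbeck operator associated with the Gaussian weight, applied to `w`. -/
noncomputable def gaussLaplace (x₀ x₁ T ε : ℝ) (α ρ p : ℝ × ℝ → ℝ) (z : ℝ × ℝ) : ℝ :=
  pdx (rect x₀ x₁ T) p z / α z - ρ z * p z / (2 * (T + ε - z.2))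

namespace ArclengthData

variable {x₀ x₁ T ε : ℝ} {w α ρ p : ℝ × ℝ → ℝ}

local notation "S" => rect x₀ x₁ T
local notation "G" => gaussWeight T ε ρ
local notation "κ" => gaussDrift x₀ x₁ T ε ρ
local notation "Y" => driftDeriv x₀ x₁ T ε w ρ p
local notation "A" => gaussLaplace x₀ x₁ T ε α ρ p

theorem remaining_pos (hε : 0 < ε) {z : ℝ × ℝ} (hz : z ∈ S) : 0 < T + ε - z.2 := by
  linarith [hz.2.2]

theorem contDiffOn_weight (h : ArclengthData x₀ x₁ T w α ρ p) (hε : 0 < ε) :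
    ContDiffOn ℝ ∞ G S := by
  unfold gaussWeight
  exact (((h.coord.pow 2).div (by fun_prop) fun z hz =>
    (mul_pos four_pos (remaining_pos hε hz)).ne').neg).exp

theorem contDiffOn_drift (h : ArclengthData x₀ x₁ T w α ρ p) (hε : 0 < ε) :
    ContDiffOn ℝ ∞ κ S := by
  unfold gaussDrift
  exact (h.coord.pdt h.hx h.hT).add (h.coord.div (by fun_prop) fun z hz =>
    (mul_pos two_pos (remaining_pos hε hz)).ne')

theorem contDiffOn_driftDeriv (h : ArclengthData x₀ x₁ T w α ρ p) (hε : 0 < ε) :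
    ContDiffOn ℝ ∞ Y S :=
  (h.sol.pdt h.hx h.hT).sub ((h.contDiffOn_drift hε).mul h.slope)

theorem contDiffOn_laplace (h : ArclengthData x₀ x₁ T w α ρ p) (hε : 0 < ε) :
    ContDiffOn ℝ ∞ A S := by
  unfold gaussLaplace
  exact ((h.slope.pdx h.hx h.hT).div h.density fun z hz => (h.pos z hz).ne').sub
    ((h.coord.mul h.slope).div (by fun_prop) fun z hz =>
      (mul_pos two_pos (remaining_pos hε hz)).ne')

variable {x t : ℝ}

theorem hasDerivWithinAt_weight_fst (h : ArclengthData x₀ x₁ T w α ρ p) (hε : 0 < ε)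
    (hz : (x, t) ∈ S) : HasDerivWithinAt (fun y => G (y, t))
      (G (x, t) * (-(ρ (x, t) * α (x, t) / (2 * (T + ε - t))))) (Icc x₀ x₁) x := by
  have hs : 0 < T + ε - t := remaining_pos hε hz
  have h1 := h.coord.hasDerivWithinAt_pdx hz
  rw [h.pdx_coord _ hz] at h1
  refine (((h1.fun_pow 2).div_const (4 * (T + ε - t))).fun_neg.exp).congr_deriv ?_
  unfold gaussWeight
  simp only
  field_simp
  push_cast
  ring

theorem hasDerivWithinAt_weight_snd (h : ArclengthData x₀ x₁ T w α ρ p) (hε : 0 < ε)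
    (hz : (x, t) ∈ S) : HasDerivWithinAt (fun τ => G (x, τ))
      (G (x, t) * (-(ρ (x, t) * pdt S ρ (x, t) / (2 * (T + ε - t))) -
        ρ (x, t) ^ 2 / (4 * (T + ε - t) ^ 2))) (Icc 0 T) t := by
  have hs : 0 < T + ε - t := remaining_pos hε hz
  have h1 := h.coord.hasDerivWithinAt_pdt hz
  have h2 : HasDerivWithinAt (fun τ => 4 * (T + ε - τ)) (4 * (-1)) (Icc 0 T) t :=
    ((hasDerivWithinAt_id t _).const_sub (T + ε)).const_mul 4
  refine ((((h1.fun_pow 2).fun_div h2 (by positivity)).fun_neg).exp).congr_deriv ?_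
  unfold gaussWeight
  simp only
  field_simp
  push_cast
  ring

theorem hasDerivWithinAt_drift (h : ArclengthData x₀ x₁ T w α ρ p)
    (hz : (x, t) ∈ S) : HasDerivWithinAt (fun y => κ (y, t))
      (pdt S α (x, t) + α (x, t) / (2 * (T + ε - t))) (Icc x₀ x₁) x := by
  have h1 := h.coord.hasDerivWithinAt_pdx hz
  have h2 := (h.coord.pdt h.hx h.hT).hasDerivWithinAt_pdx hz
  rw [pdx_pdt_comm h.hx h.hT h.coord hz, pdt_congr h.pdx_coord hz] at h2
  rw [h.pdx_coord _ hz] at h1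
  exact h2.fun_add (h1.div_const (2 * (T + ε - t)))

theorem hasDerivWithinAt_driftDeriv (h : ArclengthData x₀ x₁ T w α ρ p)
    (hz : (x, t) ∈ S) : HasDerivWithinAt (fun y => Y (y, t))
      ((pdt S α (x, t) * p (x, t) + α (x, t) * pdt S p (x, t)) -
        ((pdt S α (x, t) + α (x, t) / (2 * (T + ε - t))) * p (x, t) +
          κ (x, t) * pdx S p (x, t))) (Icc x₀ x₁) x := by
  have h2 := (h.sol.pdt h.hx h.hT).hasDerivWithinAt_pdx hz
  have h3 : pdt S (fun z => α z * p z) (x, t) =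
      pdt S α (x, t) * p (x, t) + α (x, t) * pdt S p (x, t) :=
    pdt_eq_of_hasDerivWithinAt h.hT (h.density.mul h.slope) hz
      ((h.density.hasDerivWithinAt_pdt hz).fun_mul (h.slope.hasDerivWithinAt_pdt hz))
  rw [pdx_pdt_comm h.hx h.hT h.sol hz, pdt_congr h.pdx_sol hz, h3] at h2
  exact h2.fun_sub ((h.hasDerivWithinAt_drift hz).fun_mul (h.slope.hasDerivWithinAt_pdx hz))

/-- Evolution of the weighted mass density. -/
theorem pdt_mass (h : ArclengthData x₀ x₁ T w α ρ p) (hε : 0 < ε) (hz : (x, t) ∈ S) :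
    pdt S (fun z => w z ^ 2 * α z * G z) (x, t) =
      2 * (w (x, t) * Y (x, t) * α (x, t) * G (x, t)) -
      w (x, t) ^ 2 * α (x, t) * G (x, t) / (2 * (T + ε - t)) +
      pdx S (fun z => w z ^ 2 * κ z * G z) (x, t) := by
  have hs : 0 < T + ε - t := remaining_pos hε hz
  have hG := h.contDiffOn_weight hε
  have e1 := pdt_eq_of_hasDerivWithinAt h.hT (((h.sol.pow 2).mul h.density).mul hG) hz
    (((((h.sol.hasDerivWithinAt_pdt hz).fun_pow 2).fun_mul
      (h.density.hasDerivWithinAt_pdt hz))).fun_mul (h.hasDerivWithinAt_weight_snd hε hz))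
  have e2 := pdx_eq_of_hasDerivWithinAt h.hx (((h.sol.pow 2).mul (h.contDiffOn_drift hε)).mul hG) hz
    (((((h.sol.hasDerivWithinAt_pdx hz).fun_pow 2).fun_mul
      (h.hasDerivWithinAt_drift hz))).fun_mul (h.hasDerivWithinAt_weight_fst hε hz))
  rw [e1, e2, h.pdx_sol _ hz]
  simp only [driftDeriv, gaussDrift]
  field_simp
  push_cast
  ring

/-- The weighted integration by parts identity. -/
theorem pdx_flux (h : ArclengthData x₀ x₁ T w α ρ p) (hε : 0 < ε) (hz : (x, t) ∈ S) :
    pdx S (fun z => w z * p z * G z) (x, t) = p (x, t) ^ 2 * α (x, t) * G (x, t) +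
      w (x, t) * A (x, t) * α (x, t) * G (x, t) := by
  have hs : 0 < T + ε - t := remaining_pos hε hz
  have hα := h.pos _ hz
  have e1 := pdx_eq_of_hasDerivWithinAt h.hx ((h.sol.mul h.slope).mul (h.contDiffOn_weight hε)) hz
    (((h.sol.hasDerivWithinAt_pdx hz).fun_mul (h.slope.hasDerivWithinAt_pdx hz)).fun_mul
      (h.hasDerivWithinAt_weight_fst hε hz))
  rw [e1, h.pdx_sol _ hz]
  simp only [gaussLaplace]
  field_simp
  ring

/-- Evolution of the weighted energy density. -/
theorem pdt_energy (h : ArclengthData x₀ x₁ T w α ρ p) (hε : 0 < ε) (hz : (x, t) ∈ S) :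
    pdt S (fun z => p z ^ 2 * α z * G z) (x, t) =
      -2 * (Y (x, t) * A (x, t) * α (x, t) * G (x, t)) +
      p (x, t) ^ 2 * α (x, t) * G (x, t) / (2 * (T + ε - t)) +
      pdx S (fun z => p z ^ 2 * κ z * G z + 2 * (p z * Y z * G z)) (x, t) := by
  have hs : 0 < T + ε - t := remaining_pos hε hz
  have hα := h.pos _ hz
  have hG := h.contDiffOn_weight hε
  have hY := h.contDiffOn_driftDeriv hε
  have e1 := pdt_eq_of_hasDerivWithinAt h.hT (((h.slope.pow 2).mul h.density).mul hG) hz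
    (((((h.slope.hasDerivWithinAt_pdt hz).fun_pow 2).fun_mul
      (h.density.hasDerivWithinAt_pdt hz))).fun_mul (h.hasDerivWithinAt_weight_snd hε hz))
  have e2 := pdx_eq_of_hasDerivWithinAt h.hx ((((h.slope.pow 2).mul (h.contDiffOn_drift hε)).mul
    hG).add (contDiffOn_const.mul ((h.slope.mul hY).mul hG))) hz
    ((((((h.slope.hasDerivWithinAt_pdx hz).fun_pow 2).fun_mul
      (h.hasDerivWithinAt_drift hz))).fun_mul (h.hasDerivWithinAt_weight_fst hε hz)).fun_add
      ((((h.slope.hasDerivWithinAt_pdx hz).fun_mul (h.hasDerivWithinAt_driftDeriv hz)).fun_mul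
        (h.hasDerivWithinAt_weight_fst hε hz)).const_mul 2))
  rw [e1, e2]
  simp only [gaussLaplace, driftDeriv, gaussDrift]
  field_simp
  push_cast
  ring

end ArclengthData

theorem integral_linear_comb {f g : ℝ → ℝ} {u v : ℝ} (c d : ℝ)
    (hf : IntervalIntegrable f volume u v) (hg : IntervalIntegrable g volume u v) :
    ∫ x in u..v, (c * f x + d * g x) = c * (∫ x in u..v, f x) + d * ∫ x in u..v, g x := by
  rw [intervalIntegral.integral_add (hf.const_mul c) (hg.const_mul d),
    intervalIntegral.integral_const_mul, intervalIntegral.integral_const_mul]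

/-- Weighted Cauchy-Schwarz inequality for continuous functions. -/
theorem integral_cauchy_schwarz {f g k : ℝ → ℝ} {u v : ℝ} (huv : u ≤ v)
    (hf : ContinuousOn f (Icc u v)) (hg : ContinuousOn g (Icc u v)) (hk : ContinuousOn k (Icc u v))
    (hk0 : ∀ x ∈ Icc u v, 0 ≤ k x) (hpos : 0 < ∫ x in u..v, f x ^ 2 * k x) :
    (∫ x in u..v, f x * g x * k x) ^ 2 ≤
      (∫ x in u..v, f x ^ 2 * k x) * ∫ x in u..v, g x ^ 2 * k x := by
  have hintegrable : ∀ {h : ℝ → ℝ}, ContinuousOn h (Icc u v) → IntervalIntegrable h volume u v := by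
    intro h hh
    apply ContinuousOn.intervalIntegrable
    rwa [uIcc_of_le huv]
  set a := ∫ x in u..v, f x ^ 2 * k x with ha
  set b := ∫ x in u..v, f x * g x * k x with hb
  have h0 : 0 ≤ ∫ x in u..v, (a * g x - b * f x) ^ 2 * k x :=
    intervalIntegral.integral_nonneg huv fun x hx => mul_nonneg (sq_nonneg _) (hk0 x hx)
  have h1 : ∫ x in u..v, (a * g x - b * f x) ^ 2 * k x =
      a ^ 2 * (∫ x in u..v, g x ^ 2 * k x) + 1 * (-(2 * a * b) * b + b ^ 2 * a) := by
    rw [hb, ha, ← integral_linear_comb _ _ (hintegrable (by fun_prop)) (hintegrable (by fun_prop)), ← ha, ← hb,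
      ← integral_linear_comb _ _ (hintegrable (by fun_prop)) (hintegrable (by fun_prop))]
    refine intervalIntegral.integral_congr fun x _ => ?_
    ring
  rw [h1] at h0
  have h2 : 0 ≤ a * (a * (∫ x in u..v, g x ^ 2 * k x) - b ^ 2) := by linarith
  linarith [nonneg_of_mul_nonneg_right h2 hpos]

theorem weighted_integral_estimates {w p Y A k : ℝ → ℝ} {u v M : ℝ} (huv : u ≤ v)
    (hw : ContinuousOn w (Icc u v)) (hp : ContinuousOn p (Icc u v)) (hY : ContinuousOn Y (Icc u v))
    (hA : ContinuousOn A (Icc u v)) (hk : ContinuousOn k (Icc u v))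
    (hk0 : ∀ x ∈ Icc u v, 0 ≤ k x) (hM : 0 ≤ M)
    (hf : ∀ x ∈ Icc u v, |Y x - A x| ≤ M * (|w x| + |p x|))
    (hpos : 0 < ∫ x in u..v, w x ^ 2 * k x) :
    (((∫ x in u..v, w x * Y x * k x) + ∫ x in u..v, w x * A x * k x) / 2) ^ 2 ≤
        (∫ x in u..v, w x ^ 2 * k x) *
          ((∫ x in u..v, Y x * A x * k x) + (∫ x in u..v, (Y x - A x) ^ 2 * k x) / 4) ∧
      (∫ x in u..v, (Y x - A x) ^ 2 * k x) ≤
        2 * M ^ 2 * ((∫ x in u..v, w x ^ 2 * k x) + ∫ x in u..v, p x ^ 2 * k x) ∧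
      (∫ x in u..v, w x * A x * k x) - (∫ x in u..v, w x * Y x * k x) ≤
        2 * M * ((∫ x in u..v, w x ^ 2 * k x) + ∫ x in u..v, p x ^ 2 * k x) := by
  have hintegrable : ∀ {f : ℝ → ℝ}, ContinuousOn f (Icc u v) → IntervalIntegrable f volume u v := by
    intro f hf
    apply ContinuousOn.intervalIntegrable
    rwa [uIcc_of_le huv]
  have bound : ∀ {F : ℝ → ℝ} (c : ℝ), ContinuousOn F (Icc u v) →
      (∀ x ∈ Icc u v, F x ≤ c * (w x ^ 2 + p x ^ 2)) →
      ∫ x in u..v, F x * k x ≤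
        c * ((∫ x in u..v, w x ^ 2 * k x) + ∫ x in u..v, p x ^ 2 * k x) := by
    intro F c hF hFc
    rw [mul_add, ← integral_linear_comb _ _ (hintegrable (by fun_prop)) (hintegrable (by fun_prop))]
    refine intervalIntegral.integral_mono_on huv (hintegrable (by fun_prop)) (hintegrable (by fun_prop))
      fun x hxm => ?_
    have := mul_le_mul_of_nonneg_right (hFc x hxm) (hk0 x hxm)
    linarith
  refine ⟨?_, ?_, ?_⟩
  · have hcs := integral_cauchy_schwarz (g := fun x => (Y x + A x) / 2) huv hw (by fun_prop) hk hk0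
      hpos
    have c1 : ∫ x in u..v, w x * ((Y x + A x) / 2) * k x =
        1 / 2 * (∫ x in u..v, w x * Y x * k x) + 1 / 2 * ∫ x in u..v, w x * A x * k x := by
      rw [← integral_linear_comb _ _ (hintegrable (by fun_prop)) (hintegrable (by fun_prop))]
      refine intervalIntegral.integral_congr fun x _ => ?_
      ring
    have c2 : ∫ x in u..v, ((Y x + A x) / 2) ^ 2 * k x =
        1 * (∫ x in u..v, Y x * A x * k x) + 1 / 4 * ∫ x in u..v, (Y x - A x) ^ 2 * k x := by
      rw [← integral_linear_comb _ _ (hintegrable (by fun_prop)) (hintegrable (by fun_prop))]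
      refine intervalIntegral.integral_congr fun x _ => ?_
      ring
    rw [c1, c2] at hcs
    convert hcs using 2 <;> ring
  · refine bound (F := fun x => (Y x - A x) ^ 2) (2 * M ^ 2) (by fun_prop) fun x hxm => ?_
    have e2 : |Y x - A x| ^ 2 ≤ (M * (|w x| + |p x|)) ^ 2 := by
      have := hf x hxm
      gcongr
    rw [sq_abs] at e2
    refine e2.trans ?_
    rw [mul_pow, mul_comm 2, mul_assoc]
    refine mul_le_mul_of_nonneg_left ?_ (sq_nonneg M)
    rw [← sq_abs (w _), ← sq_abs (p _)]
    nlinarith [sq_nonneg (|w x| - |p x|)]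
  · have e : ∀ a b : ℝ, a - b = 1 * a + (-1) * b := fun a b => by ring
    rw [e, ← integral_linear_comb _ _ (hintegrable (by fun_prop)) (hintegrable (by fun_prop))]
    refine le_trans (le_of_eq ?_) (bound (F := fun x => w x * (A x - Y x)) (2 * M) (by fun_prop)
      fun x hxm => ?_)
    · refine intervalIntegral.integral_congr fun x _ => ?_
      ring
    · have e1 := hf x hxm
      rw [abs_sub_comm] at e1
      have e2 : |w x * (A x - Y x)| ≤ |w x| * (M * (|w x| + |p x|)) := by
        rw [abs_mul]
        gcongr
      refine (le_abs_self _).trans (e2.trans ?_)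
      rw [← sq_abs (w _), ← sq_abs (p _)]
      have e3 : |w x| * (|w x| + |p x|) ≤ 2 * (|w x| ^ 2 + |p x| ^ 2) := by
        nlinarith [sq_nonneg (|w x| - |p x|)]
      linarith [mul_le_mul_of_nonneg_left e3 hM]

theorem frequency_ineq_algebra {s R H D zY zA YA ff B₀ B₁ B₂ M L : ℝ} (hs : 0 < s) (hsR : s ≤ R)
    (hH : 0 < H) (hD : 0 ≤ D) (hM : 0 ≤ M) (hL : 0 ≤ L) (hB₀ : D + zA = B₀)
    (hcs : ((zY + zA) / 2) ^ 2 ≤ H * (YA + ff / 4)) (hff : ff ≤ M * (H + D))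
    (h0 : |B₀| ≤ L * H) (h1 : |B₁| ≤ L * H) (h2 : |B₂| ≤ L * H) :
    s * (-2 * YA + D / (2 * s) + B₂) * H - D * H - s * D * (2 * zY - H / (2 * s) + B₁) ≤
      (M * (R + 1) + L * (R + 3)) * H * (H + s * D) := by
  have e : s * (-2 * YA + D / (2 * s) + B₂) * H - D * H - s * D * (2 * zY - H / (2 * s) + B₁) =
      s * (-2 * YA * H - 2 * D * zY + B₂ * H - D * B₁) := by
    field_simp
    ring
  rw [e]
  have h0' := abs_le.1 h0
  have h1' := abs_le.1 h1
  have h2' := abs_le.1 h2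
  have k1 : -2 * YA * H - 2 * D * zY ≤ ff * H / 2 + 2 * B₀ * D := by
    subst hB₀
    nlinarith [sq_nonneg ((zY - zA) / 2 + (D + zA))]
  have k2 : B₂ * H ≤ L * H * H := mul_le_mul_of_nonneg_right h2'.2 hH.le
  have k3 : -(D * B₁) ≤ D * (L * H) := by nlinarith
  have k4 : B₀ * D ≤ L * H * D := mul_le_mul_of_nonneg_right h0'.2 hD
  have k5 : ff * H ≤ M * (H + D) * H := mul_le_mul_of_nonneg_right hff hH.le
  have k6 : -2 * YA * H - 2 * D * zY + B₂ * H - D * B₁ ≤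
      H * (M * (H + D) + L * H + 3 * L * D) := by
    nlinarith [mul_nonneg (mul_nonneg hM (add_nonneg hH.le hD)) hH.le]
  refine (mul_le_mul_of_nonneg_left k6 hs.le).trans ?_
  have k7 : s * H ≤ R * H := mul_le_mul_of_nonneg_right hsR hH.le
  have k8 : 0 ≤ s * D := by positivity
  have hR : 0 ≤ R := hs.le.trans hsR
  have k9 : s * (M * (H + D) + L * H + 3 * L * D) ≤
      (M * (R + 1) + L * (R + 3)) * (H + s * D) := by
    nlinarith [mul_le_mul_of_nonneg_left k7 hM, mul_le_mul_of_nonneg_left k7 hL,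
      mul_nonneg (mul_nonneg hM hR) k8, mul_nonneg (mul_nonneg hL hR) k8, mul_nonneg hM hH.le,
      mul_nonneg hL hH.le]
  calc _ = H * (s * (M * (H + D) + L * H + 3 * L * D)) := by ring
    _ ≤ H * ((M * (R + 1) + L * (R + 3)) * (H + s * D)) := mul_le_mul_of_nonneg_left k9 hH.le
    _ = _ := by ring

/-- The mass `∫ w² α G dx` at time `t`. -/
noncomputable def gaussMass (x₀ x₁ T ε : ℝ) (w α ρ : ℝ × ℝ → ℝ) (t : ℝ) : ℝ :=
  ∫ x in x₀..x₁, w (x, t) ^ 2 * α (x, t) * gaussWeight T ε ρ (x, t)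

namespace ArclengthData

variable {x₀ x₁ T ε : ℝ} {w α ρ p : ℝ × ℝ → ℝ}

local notation "S" => rect x₀ x₁ T
local notation "G" => gaussWeight T ε ρ
local notation "κ" => gaussDrift x₀ x₁ T ε ρ
local notation "Y" => driftDeriv x₀ x₁ T ε w ρ p
local notation "A" => gaussLaplace x₀ x₁ T ε α ρ p
local notation "mass" => gaussMass x₀ x₁ T ε w α ρ
local notation "energy" => gaussMass x₀ x₁ T ε p α ρ

variable {t : ℝ}

theorem hasDerivWithinAt_mass (h : ArclengthData x₀ x₁ T w α ρ p) (hε : 0 < ε)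
    (ht : t ∈ Icc 0 T) : HasDerivWithinAt mass
      (2 * (∫ x in x₀..x₁, w (x, t) * Y (x, t) * α (x, t) * G (x, t)) -
        mass t / (2 * (T + ε - t)) +
        (w (x₁, t) ^ 2 * κ (x₁, t) * G (x₁, t) - w (x₀, t) ^ 2 * κ (x₀, t) * G (x₀, t)))
      (Icc 0 T) t := by
  have hG := h.contDiffOn_weight hε
  have hK := h.contDiffOn_drift hε
  have hY := h.contDiffOn_driftDeriv hε
  have hf : ContDiffOn ℝ ∞ (fun z => w z ^ 2 * α z * G z) S := ((h.sol.pow 2).mul h.density).mul hG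
  have hB : ContDiffOn ℝ ∞ (fun z => w z ^ 2 * κ z * G z) S := ((h.sol.pow 2).mul hK).mul hG
  have hq : ContDiffOn ℝ ∞ (fun z => w z * Y z * α z * G z) S :=
    ((h.sol.mul hY).mul h.density).mul hG
  refine (hasDerivWithinAt_integral_slice h.hx h.hT hf ht).congr_deriv ?_
  have i1 := hf.continuousOn.intervalIntegrable_slice h.hx.le ht
  have i2 := (hB.pdx h.hx h.hT).continuousOn.intervalIntegrable_slice h.hx.le ht
  have i3 := hq.continuousOn.intervalIntegrable_slice h.hx.le ht
  rw [← integral_pdx h.hx h.hT hB ht, gaussMass, ← intervalIntegral.integral_const_mul,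
    ← intervalIntegral.integral_div, ← intervalIntegral.integral_sub (i3.const_mul 2)
      (i1.div_const _), ← intervalIntegral.integral_add ((i3.const_mul 2).sub (i1.div_const _)) i2]
  refine intervalIntegral.integral_congr fun x hxm => ?_
  rw [uIcc_of_le h.hx.le] at hxm
  exact h.pdt_mass hε ⟨hxm, ht⟩

theorem energy_add_integral (h : ArclengthData x₀ x₁ T w α ρ p) (hε : 0 < ε)
    (ht : t ∈ Icc 0 T) :
    energy t + (∫ x in x₀..x₁, w (x, t) * A (x, t) * α (x, t) * G (x, t)) =
      w (x₁, t) * p (x₁, t) * G (x₁, t) - w (x₀, t) * p (x₀, t) * G (x₀, t) := by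
  have hG := h.contDiffOn_weight hε
  have hA := h.contDiffOn_laplace hε
  have hf : ContDiffOn ℝ ∞ (fun z => p z ^ 2 * α z * G z) S :=
    ((h.slope.pow 2).mul h.density).mul hG
  have hB : ContDiffOn ℝ ∞ (fun z => w z * p z * G z) S := (h.sol.mul h.slope).mul hG
  have hq : ContDiffOn ℝ ∞ (fun z => w z * A z * α z * G z) S :=
    ((h.sol.mul hA).mul h.density).mul hG
  rw [← integral_pdx h.hx h.hT hB ht, gaussMass, ← intervalIntegral.integral_add
    (hf.continuousOn.intervalIntegrable_slice h.hx.le ht)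
    (hq.continuousOn.intervalIntegrable_slice h.hx.le ht)]
  refine intervalIntegral.integral_congr fun x hxm => ?_
  rw [uIcc_of_le h.hx.le] at hxm
  exact (h.pdx_flux hε ⟨hxm, ht⟩).symm

theorem hasDerivWithinAt_energy (h : ArclengthData x₀ x₁ T w α ρ p) (hε : 0 < ε)
    (ht : t ∈ Icc 0 T) : HasDerivWithinAt energy
      (-2 * (∫ x in x₀..x₁, Y (x, t) * A (x, t) * α (x, t) * G (x, t)) +
        energy t / (2 * (T + ε - t)) +
        ((p (x₁, t) ^ 2 * κ (x₁, t) * G (x₁, t) + 2 * (p (x₁, t) * Y (x₁, t) * G (x₁, t))) -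
          (p (x₀, t) ^ 2 * κ (x₀, t) * G (x₀, t) + 2 * (p (x₀, t) * Y (x₀, t) * G (x₀, t)))))
      (Icc 0 T) t := by
  have hG := h.contDiffOn_weight hε
  have hK := h.contDiffOn_drift hε
  have hY := h.contDiffOn_driftDeriv hε
  have hA := h.contDiffOn_laplace hε
  have hf : ContDiffOn ℝ ∞ (fun z => p z ^ 2 * α z * G z) S :=
    ((h.slope.pow 2).mul h.density).mul hG
  have hB : ContDiffOn ℝ ∞ (fun z => p z ^ 2 * κ z * G z + 2 * (p z * Y z * G z)) S :=
    (((h.slope.pow 2).mul hK).mul hG).add (contDiffOn_const.mul ((h.slope.mul hY).mul hG))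
  have hq : ContDiffOn ℝ ∞ (fun z => Y z * A z * α z * G z) S :=
    ((hY.mul hA).mul h.density).mul hG
  refine (hasDerivWithinAt_integral_slice h.hx h.hT hf ht).congr_deriv ?_
  have i1 := hf.continuousOn.intervalIntegrable_slice h.hx.le ht
  have i2 := (hB.pdx h.hx h.hT).continuousOn.intervalIntegrable_slice h.hx.le ht
  have i3 := hq.continuousOn.intervalIntegrable_slice h.hx.le ht
  rw [← integral_pdx h.hx h.hT hB ht, gaussMass, ← intervalIntegral.integral_const_mul,
    ← intervalIntegral.integral_div, ← intervalIntegral.integral_add (i3.const_mul (-2))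
      (i1.div_const _),
      ← intervalIntegral.integral_add ((i3.const_mul (-2)).add (i1.div_const _)) i2]
  refine intervalIntegral.integral_congr fun x hxm => ?_
  rw [uIcc_of_le h.hx.le] at hxm
  exact h.pdt_energy hε ⟨hxm, ht⟩

theorem weight_pos (z : ℝ × ℝ) : 0 < G z := Real.exp_pos _

theorem mass_nonneg (h : ArclengthData x₀ x₁ T w α ρ p) (v : ℝ × ℝ → ℝ) (ht : t ∈ Icc 0 T) :
    0 ≤ gaussMass x₀ x₁ T ε v α ρ t :=
  intervalIntegral.integral_nonneg h.hx.le fun _ hxm =>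
    mul_nonneg (mul_nonneg (sq_nonneg _) (h.pos _ ⟨hxm, ht⟩).le) (weight_pos _).le

/-- Differential inequalities for the mass and the energy, in the shape required by
`frequency_lower_bound`. -/
theorem frequency_ineqs (h : ArclengthData x₀ x₁ T w α ρ p) (hε : 0 < ε) (hε1 : ε ≤ 1)
    (ht : t ∈ Icc 0 T) {M L : ℝ} (hM : 0 ≤ M) (hL : 0 ≤ L)
    (hf : ∀ z ∈ S, |Y z - A z| ≤ M * (|w z| + |p z|)) (hpos : 0 < mass t)
    (h0 : |w (x₁, t) * p (x₁, t) * G (x₁, t) - w (x₀, t) * p (x₀, t) * G (x₀, t)| ≤ L * mass t)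
    (h1 : |w (x₁, t) ^ 2 * κ (x₁, t) * G (x₁, t) - w (x₀, t) ^ 2 * κ (x₀, t) * G (x₀, t)| ≤
      L * mass t)
    (h2 : |(p (x₁, t) ^ 2 * κ (x₁, t) * G (x₁, t) + 2 * (p (x₁, t) * Y (x₁, t) * G (x₁, t))) -
      (p (x₀, t) ^ 2 * κ (x₀, t) * G (x₀, t) + 2 * (p (x₀, t) * Y (x₀, t) * G (x₀, t)))| ≤
      L * mass t) :
    ∃ H' D', HasDerivWithinAt mass H' (Icc 0 T) t ∧ HasDerivWithinAt energy D' (Icc 0 T) t ∧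
      (T + ε - t) * D' * mass t - energy t * mass t - (T + ε - t) * energy t * H' ≤
        (2 * M ^ 2 * (T + 2) + L * (T + 4)) * mass t * (mass t + (T + ε - t) * energy t) ∧
      -((2 + 4 * M) * energy t + (4 * M + 3 * L + 1 / (T + ε - t)) * mass t) ≤ H' := by
  have hs : 0 < T + ε - t := by linarith [ht.2]
  have hsR : T + ε - t ≤ T + 1 := by linarith [ht.1]
  have hGs := (h.contDiffOn_weight hε).continuousOn.slice ht
  have hYs := (h.contDiffOn_driftDeriv hε).continuousOn.slice ht
  have hAs := (h.contDiffOn_laplace hε).continuousOn.slice ht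
  have hws := h.sol.continuousOn.slice ht
  have hps := h.slope.continuousOn.slice ht
  have hαs := h.density.continuousOn.slice ht
  have hD0 : 0 ≤ energy t := h.mass_nonneg p ht
  have hB0 := h.energy_add_integral hε ht
  have hest := weighted_integral_estimates (k := fun x => α (x, t) * G (x, t)) h.hx.le hws hps
    hYs hAs (hαs.mul hGs)
    (fun x hxm => (mul_pos (h.pos _ ⟨hxm, ht⟩) (weight_pos _)).le) hM
    (fun x hxm => hf (x, t) ⟨hxm, ht⟩) (by simpa only [gaussMass, mul_assoc] using hpos)
  simp only [← mul_assoc] at hest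
  obtain ⟨hcs, hff, hzf⟩ := hest
  refine ⟨_, _, h.hasDerivWithinAt_mass hε ht, h.hasDerivWithinAt_energy hε ht, ?_, ?_⟩
  · refine (frequency_ineq_algebra hs hsR hpos hD0 (by positivity) hL hB0 hcs hff h0 h1 h2).trans
      (le_of_eq ?_)
    ring
  · have h0' := (abs_le.1 h0).1
    have h1' := (abs_le.1 h1).1
    have e1 : mass t / (2 * (T + ε - t)) ≤ 1 / (T + ε - t) * mass t := by
      rw [div_mul_eq_mul_div, one_mul]
      exact div_le_div_of_nonneg_left hpos.le hs (by linarith)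
    change _ ≤ 2 * M * (mass t + energy t) at hzf
    have e2 : 0 ≤ M * energy t := mul_nonneg hM hD0
    have e3 : 0 ≤ M * mass t := mul_nonneg hM hpos.le
    have e4 : 0 ≤ L * mass t := mul_nonneg hL hpos.le
    linarith

end ArclengthData

theorem exists_lower_bound_near_edge {x₀ x₁ T e : ℝ} {w : ℝ × ℝ → ℝ} (hT : 0 ≤ T)
    (hw : ContinuousOn w (rect x₀ x₁ T)) (he : e ∈ Icc x₀ x₁) (hne : ∀ t ∈ Icc 0 T, w (e, t) ≠ 0) :
    ∃ η > 0, ∃ m > 0, ∀ t ∈ Icc 0 T, ∀ x ∈ Icc x₀ x₁, |x - e| < η → m ≤ |w (x, t)| := by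
  have hwe : ContinuousOn (fun t => |w (e, t)|) (Icc 0 T) :=
    (hw.comp (f := fun t => (e, t)) (by fun_prop) fun t ht => ⟨he, ht⟩).abs
  obtain ⟨t₀, ht₀, hmin⟩ := isCompact_Icc.exists_isMinOn ⟨0, ⟨le_rfl, hT⟩⟩ hwe
  have hm : 0 < |w (e, t₀)| := abs_pos.2 (hne t₀ ht₀)
  obtain ⟨δ, hδ, hu⟩ := Metric.uniformContinuousOn_iff.1
    ((isCompact_rect x₀ x₁ T).uniformContinuousOn_of_continuous hw) (|w (e, t₀)| / 2) (half_pos hm)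
  refine ⟨δ, hδ, |w (e, t₀)| / 2, half_pos hm, fun t ht x hxm hxe => ?_⟩
  have h1 := hu (x, t) ⟨hxm, ht⟩ (e, t) ⟨he, ht⟩
    (by simpa [Prod.dist_eq, Real.dist_eq, hδ] using hxe)
  have h2 : |w (e, t₀)| ≤ |w (e, t)| := hmin ht
  rw [Real.dist_eq, abs_sub_comm] at h1
  linarith [abs_sub_abs_le_abs_sub (w (e, t)) (w (x, t))]

namespace ArclengthData

variable {x₀ x₁ T ε : ℝ} {w α ρ p : ℝ × ℝ → ℝ}

local notation "S" => rect x₀ x₁ T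
local notation "G" => gaussWeight T ε ρ
local notation "κ" => gaussDrift x₀ x₁ T ε ρ
local notation "Y" => driftDeriv x₀ x₁ T ε w ρ p
local notation "A" => gaussLaplace x₀ x₁ T ε α ρ p
local notation "mass" => gaussMass x₀ x₁ T ε w α ρ
local notation "energy" => gaussMass x₀ x₁ T ε p α ρ

variable {t : ℝ}

theorem exists_density_lower_bound (h : ArclengthData x₀ x₁ T w α ρ p) :
    ∃ m > 0, ∀ z ∈ S, m ≤ α z := by
  obtain ⟨z, hz, hmin⟩ := (isCompact_rect x₀ x₁ T).exists_isMinOn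
    ⟨(x₀, 0), ⟨left_mem_Icc.2 h.hx.le, left_mem_Icc.2 h.hT.le⟩⟩ h.density.continuousOn
  exact ⟨α z, h.pos z hz, fun y hy => hmin hy⟩

theorem coord_sub_ge (h : ArclengthData x₀ x₁ T w α ρ p) {m : ℝ} (hm : ∀ z ∈ S, m ≤ α z)
    (ht : t ∈ Icc 0 T) {x y : ℝ} (hxm : x ∈ Icc x₀ x₁) (hym : y ∈ Icc x₀ x₁) (hxy : x ≤ y) :
    m * (y - x) ≤ ρ (y, t) - ρ (x, t) := by
  have hd : ∀ x ∈ interior (Icc x₀ x₁), HasDerivAt (fun x => ρ (x, t)) (α (x, t)) x := by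
    intro x hxi
    rw [interior_Icc] at hxi
    have hz : (x, t) ∈ S := ⟨Ioo_subset_Icc_self hxi, ht⟩
    rw [← h.pdx_coord _ hz]
    exact (h.coord.hasDerivWithinAt_pdx hz).hasDerivAt (Icc_mem_nhds hxi.1 hxi.2)
  exact (convex_Icc x₀ x₁).mul_sub_le_image_sub_of_le_deriv (h.coord.continuousOn.slice ht)
    (fun x hxi => (hd x hxi).differentiableAt.differentiableWithinAt)
    (fun x hxi => by
      rw [(hd x hxi).deriv]
      exact hm _ ⟨interior_subset hxi, ht⟩) x hxm y hym hxy

theorem weight_le_mass_of_interval (h : ArclengthData x₀ x₁ T w α ρ p) {u v e m d : ℝ}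
    (hu : x₀ ≤ u) (huv : u < v) (hv : v ≤ x₁) (hm : 0 < m) (hd : 0 < d)
    (hw : ∀ t ∈ Icc 0 T, ∀ x ∈ Icc u v, m ≤ |w (x, t)|) (hα : ∀ z ∈ S, m ≤ α z)
    (hρ : ∀ t ∈ Icc 0 T, ∀ x ∈ Icc u v, ρ (x, t) ^ 2 + d ≤ ρ (e, t) ^ 2) :
    ∃ C > 0, ∀ ε, 0 < ε → ∀ t ∈ Icc 0 T,
      (1 + 1 / (T + ε - t)) * gaussWeight T ε ρ (e, t) ≤ C * gaussMass x₀ x₁ T ε w α ρ t := by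
  have hvu : 0 < v - u := sub_pos.2 huv
  refine ⟨(1 + 4 / d) / (m ^ 2 * m * (v - u)), by positivity, fun ε hε t ht => ?_⟩
  have hs : 0 < T + ε - t := by linarith [ht.2]
  set s := T + ε - t with hsdef
  have hweight : ∀ x ∈ Icc u v,
      gaussWeight T ε ρ (e, t) * (1 + d / (4 * s)) ≤ gaussWeight T ε ρ (x, t) := by
    intro x hxm
    have h1 : 1 + d / (4 * s) ≤ Real.exp (d / (4 * s)) := by
      rw [add_comm]
      exact Real.add_one_le_exp _
    calc gaussWeight T ε ρ (e, t) * (1 + d / (4 * s))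
        ≤ gaussWeight T ε ρ (e, t) * Real.exp (d / (4 * s)) :=
          mul_le_mul_of_nonneg_left h1 (weight_pos _).le
      _ ≤ gaussWeight T ε ρ (x, t) := by
          unfold gaussWeight
          rw [← Real.exp_add, Real.exp_le_exp]
          have h2 : (ρ (x, t) ^ 2 + d) / (4 * s) ≤ ρ (e, t) ^ 2 / (4 * s) := by
            have := hρ t ht x hxm
            gcongr
          rw [add_div] at h2
          linarith
  have hcont : ContinuousOn (fun z => w z ^ 2 * α z * gaussWeight T ε ρ z) S :=
    ((h.sol.continuousOn.pow 2).mul h.density.continuousOn).mul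
      (h.contDiffOn_weight hε).continuousOn
  have hintegrable := hcont.intervalIntegrable_slice h.hx.le ht
  have hsub : Icc u v ⊆ Icc x₀ x₁ := Icc_subset_Icc hu hv
  have hlow : m ^ 2 * m * (gaussWeight T ε ρ (e, t) * (1 + d / (4 * s))) * (v - u) ≤
      gaussMass x₀ x₁ T ε w α ρ t := by
    have h1 : ∫ _ in u..v, m ^ 2 * m * (gaussWeight T ε ρ (e, t) * (1 + d / (4 * s))) ≤
        ∫ x in u..v, w (x, t) ^ 2 * α (x, t) * gaussWeight T ε ρ (x, t) := by
      refine intervalIntegral.integral_mono_on huv.le intervalIntegrable_const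
        (hintegrable.mono_set ?_) fun x hxm => ?_
      · rw [uIcc_of_le huv.le, uIcc_of_le h.hx.le]
        exact hsub
      · have e1 : m ^ 2 ≤ w (x, t) ^ 2 := by
          rw [← sq_abs (w _)]
          have := hw t ht x hxm
          gcongr
        have e2 : m ≤ α (x, t) := hα _ ⟨hsub hxm, ht⟩
        have e3 := hweight x hxm
        have e4 : 0 < gaussWeight T ε ρ (e, t) := weight_pos _
        gcongr
        exact mul_nonneg (sq_nonneg _) (hm.le.trans e2)
    rw [intervalIntegral.integral_const, smul_eq_mul, mul_comm] at h1
    refine h1.trans (intervalIntegral.integral_mono_interval hu huv.le hv ?_ hintegrable)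
    filter_upwards [ae_restrict_mem measurableSet_Ioc] with x hxm
    exact mul_nonneg (mul_nonneg (sq_nonneg _) (h.pos _ ⟨Ioc_subset_Icc_self hxm, ht⟩).le)
      (weight_pos _).le
  have hpoly : 1 + 1 / s ≤ (1 + 4 / d) * (1 + d / (4 * s)) := by
    have : (1 + 4 / d) * (1 + d / (4 * s)) = 1 + 1 / s + (4 / d + d / (4 * s)) := by
      field_simp
      ring
    rw [this]
    have : 0 < 4 / d + d / (4 * s) := by positivity
    linarith
  have hc : 0 < m ^ 2 * m * (v - u) := by positivity
  rw [div_mul_eq_mul_div, le_div_iff₀ hc]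
  calc (1 + 1 / s) * gaussWeight T ε ρ (e, t) * (m ^ 2 * m * (v - u))
      ≤ (1 + 4 / d) * (1 + d / (4 * s)) * gaussWeight T ε ρ (e, t) * (m ^ 2 * m * (v - u)) := by
        have := (weight_pos (T := T) (ε := ε) (ρ := ρ) (e, t)).le
        gcongr
    _ = (1 + 4 / d) * (m ^ 2 * m * (gaussWeight T ε ρ (e, t) * (1 + d / (4 * s))) * (v - u)) := by
        ring
    _ ≤ (1 + 4 / d) * gaussMass x₀ x₁ T ε w α ρ t := by gcongr

/-- If `w` does not vanish on the lateral boundary, the weight at the lateral boundary is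
controlled by the mass, even with an additional factor `1 / s`. -/
theorem exists_weight_le_mass (h : ArclengthData x₀ x₁ T w α ρ p) {x' : ℝ} (hx' : x' ∈ Ioo x₀ x₁)
    (hρ : ∀ t ∈ Icc 0 T, ρ (x', t) = 0) (hw₀ : ∀ t ∈ Icc 0 T, w (x₀, t) ≠ 0)
    (hw₁ : ∀ t ∈ Icc 0 T, w (x₁, t) ≠ 0) :
    ∃ C > 0, ∀ ε, 0 < ε → ∀ t ∈ Icc 0 T, ∀ e ∈ ({x₀, x₁} : Set ℝ),
      (1 + 1 / (T + ε - t)) * gaussWeight T ε ρ (e, t) ≤ C * gaussMass x₀ x₁ T ε w α ρ t := by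
  obtain ⟨m, hm, hα⟩ := h.exists_density_lower_bound
  obtain ⟨η₀, hη₀, m₀, hm₀, hl₀⟩ := exists_lower_bound_near_edge h.hT.le h.sol.continuousOn
    (left_mem_Icc.2 h.hx.le) hw₀
  obtain ⟨η₁, hη₁, m₁, hm₁, hl₁⟩ := exists_lower_bound_near_edge h.hT.le h.sol.continuousOn
    (right_mem_Icc.2 h.hx.le) hw₁
  set r := min (min η₀ η₁) (min (x' - x₀) (x₁ - x')) with hr
  have hr0 : 0 < r := lt_min (lt_min hη₀ hη₁) (lt_min (sub_pos.2 hx'.1) (sub_pos.2 hx'.2))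
  have hrη₀ : r ≤ η₀ := (min_le_left _ _).trans (min_le_left _ _)
  have hrη₁ : r ≤ η₁ := (min_le_left _ _).trans (min_le_right _ _)
  have hrx₀ : r ≤ x' - x₀ := (min_le_right _ _).trans (min_le_left _ _)
  have hrx₁ : r ≤ x₁ - x' := (min_le_right _ _).trans (min_le_right _ _)
  set m' := min m (min m₀ m₁) with hm'
  have hm'0 : 0 < m' := lt_min hm (lt_min hm₀ hm₁)
  have hm'm : m' ≤ m := min_le_left _ _
  have hm'm₀ : m' ≤ m₀ := (min_le_right _ _).trans (min_le_left _ _)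
  have hm'm₁ : m' ≤ m₁ := (min_le_right _ _).trans (min_le_right _ _)
  have hα' : ∀ z ∈ S, m' ≤ α z := fun z hz => hm'm.trans (hα z hz)
  have hx'm := Ioo_subset_Icc_self hx'
  have hmr : 0 < m' * (r / 3) := by positivity
  obtain ⟨C₀, hC₀, H₀⟩ := h.weight_le_mass_of_interval (u := x₀ + r / 3) (v := x₀ + r / 2) (e := x₀)
    (d := (m' * (r / 3)) ^ 2) (by linarith) (by linarith) (by linarith) hm'0 (by positivity)
    (fun t ht x hxm => hm'm₀.trans (hl₀ t ht x ⟨by linarith [hxm.1], by linarith [hxm.2]⟩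
      (by rw [abs_lt]; constructor <;> linarith [hxm.1, hxm.2]))) hα'
    (fun t ht x hxm => by
      have hxI : x ∈ Icc x₀ x₁ := ⟨by linarith [hxm.1], by linarith [hxm.2]⟩
      have e1 := h.coord_sub_ge hα' ht (left_mem_Icc.2 h.hx.le) hxI (by linarith [hxm.1])
      have e2 := h.coord_sub_ge hα' ht hxI hx'm (by linarith [hxm.2])
      rw [hρ t ht] at e2
      have e3 : m' * (r / 3) ≤ m' * (x - x₀) :=
        mul_le_mul_of_nonneg_left (by linarith [hxm.1]) hm'0.le
      have e4 : 0 ≤ m' * (x' - x) := mul_nonneg hm'0.le (by linarith [hxm.2])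
      nlinarith)
  obtain ⟨C₁, hC₁, H₁⟩ := h.weight_le_mass_of_interval (u := x₁ - r / 2) (v := x₁ - r / 3) (e := x₁)
    (d := (m' * (r / 3)) ^ 2) (by linarith) (by linarith) (by linarith) hm'0 (by positivity)
    (fun t ht x hxm => hm'm₁.trans (hl₁ t ht x ⟨by linarith [hxm.1], by linarith [hxm.2]⟩
      (by rw [abs_lt]; constructor <;> linarith [hxm.1, hxm.2]))) hα'
    (fun t ht x hxm => by
      have hxI : x ∈ Icc x₀ x₁ := ⟨by linarith [hxm.1], by linarith [hxm.2]⟩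
      have e1 := h.coord_sub_ge hα' ht hxI (right_mem_Icc.2 h.hx.le) (by linarith [hxm.2])
      have e2 := h.coord_sub_ge hα' ht hx'm hxI (by linarith [hxm.1])
      rw [hρ t ht] at e2
      have e3 : m' * (r / 3) ≤ m' * (x₁ - x) :=
        mul_le_mul_of_nonneg_left (by linarith [hxm.2]) hm'0.le
      have e4 : 0 ≤ m' * (x - x') := mul_nonneg hm'0.le (by linarith [hxm.1])
      nlinarith)
  refine ⟨max C₀ C₁, lt_max_of_lt_left hC₀, fun ε hε t ht e he => ?_⟩
  have h0 : 0 ≤ gaussMass x₀ x₁ T ε w α ρ t := h.mass_nonneg w ht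
  rcases he with rfl | rfl
  · exact (H₀ ε hε t ht).trans (mul_le_mul_of_nonneg_right (le_max_left _ _) h0)
  · exact (H₁ ε hε t ht).trans (mul_le_mul_of_nonneg_right (le_max_right _ _) h0)

end ArclengthData

namespace ArclengthData

variable {x₀ x₁ T ε : ℝ} {w α ρ p : ℝ × ℝ → ℝ}

local notation "S" => rect x₀ x₁ T
local notation "G[" ε "]" => gaussWeight T ε ρ
local notation "κ[" ε "]" => gaussDrift x₀ x₁ T ε ρ
local notation "Y[" ε "]" => driftDeriv x₀ x₁ T ε w ρ p
local notation "A[" ε "]" => gaussLaplace x₀ x₁ T ε α ρ p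
local notation "mass[" ε "]" => gaussMass x₀ x₁ T ε w α ρ
local notation "energy[" ε "]" => gaussMass x₀ x₁ T ε p α ρ

variable {t : ℝ}

theorem weight_le_one (hε : 0 < ε) {z : ℝ × ℝ} (hz : z ∈ S) : G[ε] z ≤ 1 := by
  unfold gaussWeight
  rw [Real.exp_le_one_iff, neg_nonpos]
  have := remaining_pos hε hz
  positivity

theorem mass_le (h : ArclengthData x₀ x₁ T w α ρ p) (hε : 0 < ε) {v : ℝ × ℝ → ℝ}
    (hv : ContinuousOn v S) (ht : t ∈ Icc 0 T) {C : ℝ}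
    (hC : ∀ x ∈ Icc x₀ x₁, v (x, t) ^ 2 * α (x, t) * G[ε] (x, t) ≤ C) :
    gaussMass x₀ x₁ T ε v α ρ t ≤ (x₁ - x₀) * C := by
  have hcont : ContinuousOn (fun z => v z ^ 2 * α z * G[ε] z) S :=
    ((hv.pow 2).mul h.density.continuousOn).mul
      (h.contDiffOn_weight hε).continuousOn
  have := intervalIntegral.integral_mono_on h.hx.le
    (hcont.intervalIntegrable_slice h.hx.le ht) intervalIntegrable_const hC
  rwa [intervalIntegral.integral_const, smul_eq_mul] at this

theorem boundary_terms_le {w p k y g s B : ℝ} (hs : 0 < s) (hg : 0 ≤ g) (hB : 1 ≤ B)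
    (hw : |w| ≤ B) (hp : |p| ≤ B) (hk : |k| ≤ B * (1 + 1 / s))
    (hy : |y| ≤ 2 * B ^ 2 * (1 + 1 / s)) :
    |w * p * g| ≤ 5 * B ^ 3 * ((1 + 1 / s) * g) ∧ |w ^ 2 * k * g| ≤ 5 * B ^ 3 * ((1 + 1 / s) * g) ∧
      |p ^ 2 * k * g + 2 * (p * y * g)| ≤ 5 * B ^ 3 * ((1 + 1 / s) * g) := by
  have hq : 1 ≤ 1 + 1 / s := by
    have : 0 < 1 / s := by positivity
    linarith
  set q := 1 + 1 / s with hqdef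
  have hB0 : 0 ≤ B := by linarith
  have hq0 : 0 ≤ q := by linarith
  have hcube : 0 ≤ B ^ 3 * (q * g) := by positivity
  refine ⟨?_, ?_, ?_⟩
  · rw [abs_mul, abs_mul, abs_of_nonneg hg]
    calc |w| * |p| * g ≤ B * B * g := by gcongr
      _ ≤ B * B * (B * q) * g := by
          have : 1 ≤ B * q := one_le_mul_of_one_le_of_one_le hB hq
          have := mul_le_mul_of_nonneg_left this (mul_nonneg (mul_nonneg hB0 hB0) hg)
          linarith
      _ = B ^ 3 * (q * g) := by ring
      _ ≤ _ := by linarith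
  · rw [abs_mul, abs_mul, abs_of_nonneg hg, abs_pow]
    calc |w| ^ 2 * |k| * g ≤ B ^ 2 * (B * q) * g := by gcongr
      _ = B ^ 3 * (q * g) := by ring
      _ ≤ _ := by linarith
  · refine (abs_add_le _ _).trans ?_
    rw [abs_mul, abs_mul, abs_mul, abs_mul, abs_mul, abs_of_nonneg hg, abs_pow, abs_two]
    calc |p| ^ 2 * |k| * g + 2 * (|p| * |y| * g)
        ≤ B ^ 2 * (B * q) * g + 2 * (B * (2 * B ^ 2 * q) * g) := by gcongr
      _ = _ := by ring

set_option maxHeartbeats 1000000 in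
theorem exists_mass_lower_bound (h : ArclengthData x₀ x₁ T w α ρ p) {x' M : ℝ}
    (hx' : x' ∈ Ioo x₀ x₁) (hρ : ∀ t ∈ Icc 0 T, ρ (x', t) = 0)
    (hw₀ : ∀ t ∈ Icc 0 T, w (x₀, t) ≠ 0) (hw₁ : ∀ t ∈ Icc 0 T, w (x₁, t) ≠ 0) (hM : 0 ≤ M)
    (hf : ∀ z ∈ S, |pdt S w z - pdt S ρ z * p z - pdx S p z / α z| ≤ M * (|w z| + |p z|)) :
    ∃ K : ℕ, ∃ c > 0, ∀ ε, 0 < ε → ε ≤ 1 → c * ε ^ K ≤ mass[ε] T := by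
  obtain ⟨C, hC, hCm⟩ := h.exists_weight_le_mass hx' hρ hw₀ hw₁
  obtain ⟨B₁, hB₁0, hB₁⟩ := exists_bound_on_rect h.sol.continuousOn
  obtain ⟨B₂, hB₂0, hB₂⟩ := exists_bound_on_rect h.slope.continuousOn
  obtain ⟨B₃, hB₃0, hB₃⟩ := exists_bound_on_rect (h.sol.pdt h.hx h.hT).continuousOn
  obtain ⟨B₄, hB₄0, hB₄⟩ := exists_bound_on_rect (h.coord.pdt h.hx h.hT).continuousOn
  obtain ⟨B₅, hB₅0, hB₅⟩ := exists_bound_on_rect h.coord.continuousOn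
  obtain ⟨B₆, hB₆0, hB₆⟩ := exists_bound_on_rect h.density.continuousOn
  set B := 1 + B₁ + B₂ + B₃ + B₄ + B₅ + B₆ with hBdef
  have hB1 : 1 ≤ B := by linarith
  have hB0 : 0 ≤ B := by linarith
  set L := 2 * (5 * B ^ 3 * C) with hL
  have hL0 : 0 ≤ L := by positivity
  set c₀ := Real.exp (-(B ^ 2 / (4 * T))) / C with hc₀
  have hc₀0 : 0 < c₀ := by positivity
  set N₀ := (T + 1) * ((x₁ - x₀) * (B ^ 2 * B)) / c₀ with hN₀
  have hT := h.hT
  have hx := h.hx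
  have hlen : 0 ≤ x₁ - x₀ := by linarith
  have hN₀0 : 0 ≤ N₀ := by positivity
  set Q := (2 * M ^ 2 * (T + 2) + L * (T + 4)) + (2 + 4 * M) + (4 * M + 3 * L) with hQ
  have hQ1 : 2 * M ^ 2 * (T + 2) + L * (T + 4) ≤ Q := by linarith
  have hM2 : 0 ≤ 2 * M ^ 2 * (T + 2) + L * (T + 4) := by positivity
  have hQ2 : 2 + 4 * M ≤ Q := by linarith
  have hQ3 : 4 * M + 3 * L ≤ Q := by linarith
  have hQ4 : 1 ≤ Q := by linarith
  obtain ⟨K, c, hc, hfreq⟩ := frequency_lower_bound hT (C := Q) (N₀ := N₀) (by linarith) hN₀0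
  refine ⟨K, c * c₀, by positivity, fun ε hε hε1 => ?_⟩
  have hpos : ∀ t ∈ Icc 0 T, 0 < mass[ε] t := by
    intro t ht
    have e1 := hCm ε hε t ht x₀ (by simp)
    have hs : 0 < T + ε - t := by linarith [ht.2]
    have e2 : 0 < (1 + 1 / (T + ε - t)) * G[ε] (x₀, t) := mul_pos (by positivity) (weight_pos _)
    exact pos_of_mul_pos_right (e2.trans_le e1) hC.le
  have hedge : ∀ t ∈ Icc 0 T, ∀ e ∈ ({x₀, x₁} : Set ℝ),
      |w (e, t) * p (e, t) * G[ε] (e, t)| ≤ L / 2 * mass[ε] t ∧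
      |w (e, t) ^ 2 * κ[ε] (e, t) * G[ε] (e, t)| ≤ L / 2 * mass[ε] t ∧
      |p (e, t) ^ 2 * κ[ε] (e, t) * G[ε] (e, t) + 2 * (p (e, t) * Y[ε] (e, t) * G[ε] (e, t))| ≤
        L / 2 * mass[ε] t := by
    intro t ht e he
    have hs : 0 < T + ε - t := by linarith [ht.2]
    have hz : (e, t) ∈ S := by
      refine ⟨?_, ht⟩
      rcases he with rfl | rfl
      exacts [left_mem_Icc.2 hx.le, right_mem_Icc.2 hx.le]
    have e1 := hB₁ _ hz
    have e2 := hB₂ _ hz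
    have e3 := hB₃ _ hz
    have e4 := hB₄ _ hz
    have e5 := hB₅ _ hz
    have hκ : |κ[ε] (e, t)| ≤ B * (1 + 1 / (T + ε - t)) := by
      unfold gaussDrift
      refine (abs_add_le _ _).trans ?_
      rw [abs_div, abs_of_pos (mul_pos two_pos hs), mul_add, mul_one, mul_one_div]
      have : |ρ (e, t)| / (2 * (T + ε - t)) ≤ B / (T + ε - t) :=
        div_le_div₀ hB0 (by linarith) hs (by linarith)
      linarith
    have hY : |Y[ε] (e, t)| ≤ 2 * B ^ 2 * (1 + 1 / (T + ε - t)) := by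
      have hq : 1 ≤ 1 + 1 / (T + ε - t) := by
        have : 0 < 1 / (T + ε - t) := by positivity
        linarith
      unfold driftDeriv
      refine (abs_sub _ _).trans ?_
      rw [abs_mul]
      have f1 : |κ[ε] (e, t)| * |p (e, t)| ≤ B * (1 + 1 / (T + ε - t)) * B :=
        mul_le_mul hκ (by linarith) (abs_nonneg _) (by positivity)
      have f2 : B ≤ B * (B * (1 + 1 / (T + ε - t))) :=
        le_mul_of_one_le_right hB0 (one_le_mul_of_one_le_of_one_le hB1 hq)
      linarith
    have hL2 : 5 * B ^ 3 * ((1 + 1 / (T + ε - t)) * G[ε] (e, t)) ≤ L / 2 * mass[ε] t := by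
      have := mul_le_mul_of_nonneg_left (hCm ε hε t ht e he) (by positivity : 0 ≤ 5 * B ^ 3)
      linarith
    obtain ⟨k1, k2, k3⟩ := boundary_terms_le hs (weight_pos (T := T) (ε := ε) (ρ := ρ) (e, t)).le
      hB1 (by linarith : |w (e, t)| ≤ B) (by linarith : |p (e, t)| ≤ B) hκ hY
    exact ⟨k1.trans hL2, k2.trans hL2, k3.trans hL2⟩
  have hYA : ∀ z ∈ S, |Y[ε] z - A[ε] z| ≤ M * (|w z| + |p z|) := by
    intro z hz
    have : Y[ε] z - A[ε] z = pdt S w z - pdt S ρ z * p z - pdx S p z / α z := by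
      unfold driftDeriv gaussLaplace gaussDrift
      ring
    rw [this]
    exact hf z hz
  have hderiv : ∀ t ∈ Icc 0 T, ∃ H' D', HasDerivWithinAt mass[ε] H' (Icc 0 T) t ∧
      HasDerivWithinAt energy[ε] D' (Icc 0 T) t ∧
      (T + ε - t) * D' * mass[ε] t - energy[ε] t * mass[ε] t - (T + ε - t) * energy[ε] t * H' ≤
        (2 * M ^ 2 * (T + 2) + L * (T + 4)) * mass[ε] t * (mass[ε] t + (T + ε - t) * energy[ε] t) ∧
      -((2 + 4 * M) * energy[ε] t + (4 * M + 3 * L + 1 / (T + ε - t)) * mass[ε] t) ≤ H' := by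
    intro t ht
    obtain ⟨a1, a2, a3⟩ := hedge t ht x₁ (by simp)
    obtain ⟨b1, b2, b3⟩ := hedge t ht x₀ (by simp)
    exact h.frequency_ineqs hε hε1 ht hM hL0 hYA (hpos t ht)
      ((abs_sub _ _).trans (by linarith)) ((abs_sub _ _).trans (by linarith))
      ((abs_sub _ _).trans (by linarith))
  choose! H' D' hH' hD' hineq hlow using hderiv
  have h0T : (0 : ℝ) ∈ Icc 0 T := left_mem_Icc.2 hT.le
  have hmass0 : c₀ ≤ mass[ε] 0 := by
    have e1 := hCm ε hε 0 h0T x₀ (by simp)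
    have hs : 0 < T + ε - 0 := by linarith
    have hz : (x₀, (0 : ℝ)) ∈ S := ⟨left_mem_Icc.2 hx.le, h0T⟩
    have e2 : Real.exp (-(B ^ 2 / (4 * T))) ≤ G[ε] (x₀, 0) := by
      unfold gaussWeight
      rw [Real.exp_le_exp, neg_le_neg_iff]
      have : ρ (x₀, 0) ^ 2 ≤ B ^ 2 := by
        rw [← sq_abs (ρ _)]
        have := hB₅ _ hz
        gcongr
        linarith
      exact div_le_div₀ (by positivity) this (by positivity) (by simp only; linarith)
    have e3 : G[ε] (x₀, 0) ≤ (1 + 1 / (T + ε - 0)) * G[ε] (x₀, 0) :=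
      le_mul_of_one_le_left (weight_pos _).le (by
        have : 0 < 1 / (T + ε - 0) := by positivity
        linarith)
    rw [hc₀, div_le_iff₀ hC]
    linarith
  have henergy0 : energy[ε] 0 ≤ (x₁ - x₀) * (B ^ 2 * B) := by
    refine h.mass_le hε h.slope.continuousOn h0T fun x hxm => ?_
    have hz : (x, (0 : ℝ)) ∈ S := ⟨hxm, h0T⟩
    have e1 : p (x, 0) ^ 2 ≤ B ^ 2 := by
      rw [← sq_abs (p _)]
      have := hB₂ _ hz
      gcongr
      linarith
    have e2 : α (x, 0) ≤ B := by linarith [le_abs_self (α (x, 0)), hB₆ _ hz]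
    have e3 := h.pos _ hz
    calc p (x, 0) ^ 2 * α (x, 0) * G[ε] (x, 0) ≤ p (x, 0) ^ 2 * α (x, 0) * 1 :=
          mul_le_mul_of_nonneg_left (weight_le_one hε hz) (by positivity)
      _ ≤ B ^ 2 * B := by
          rw [mul_one]
          gcongr
  have hfin := hfreq ε hε hε1 mass[ε] energy[ε] H' D' hH' hD' hpos (fun t ht => h.mass_nonneg p ht)
    (fun t ht => (hineq t ht).trans (by
      have e1 := (hpos t ht).le
      have e2 : 0 ≤ energy[ε] t := h.mass_nonneg p ht
      have hs : 0 < T + ε - t := by linarith [ht.2]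
      gcongr))
    (fun t ht => le_trans (by
      have e1 := (hpos t ht).le
      have e2 : 0 ≤ energy[ε] t := h.mass_nonneg p ht
      have hs : 0 < T + ε - t := by linarith [ht.2]
      rw [neg_le_neg_iff]
      gcongr) (hlow t ht))
    (by
      have e2 : 0 ≤ energy[ε] 0 := h.mass_nonneg p h0T
      calc (T + ε) * energy[ε] 0 ≤ (T + 1) * ((x₁ - x₀) * (B ^ 2 * B)) := by gcongr
        _ = N₀ * c₀ := by rw [hN₀]; field_simp
        _ ≤ N₀ * mass[ε] 0 := by gcongr)
  refine le_trans ?_ hfin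
  gcongr

theorem exists_mass_upper_bound (h : ArclengthData x₀ x₁ T w α ρ p) {x' C : ℝ}
    (hx' : x' ∈ Icc x₀ x₁) (hρ : ρ (x', T) = 0) (n : ℕ)
    (hw : ∀ x ∈ Icc x₀ x₁, |w (x, T)| ≤ C * |x - x'| ^ n) :
    ∃ C' > 0, ∀ ε, 0 < ε → mass[ε] T ≤ C' * ε ^ n := by
  obtain ⟨m, hm, hα⟩ := h.exists_density_lower_bound
  obtain ⟨B, hB0, hB⟩ := exists_bound_on_rect h.density.continuousOn
  have hTT : T ∈ Icc 0 T := right_mem_Icc.2 h.hT.le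
  have hlen : 0 < x₁ - x₀ := sub_pos.2 h.hx
  set Q := C ^ 2 * B * ((4 / m ^ 2) ^ n * n.factorial) with hQ
  have hQ0 : 0 ≤ Q := by positivity
  refine ⟨(x₁ - x₀) * (Q + 1), by positivity, fun ε hε => ?_⟩
  have key : mass[ε] T ≤ (x₁ - x₀) * (Q * ε ^ n) := by
    refine h.mass_le hε h.sol.continuousOn hTT fun x hxm => ?_
    have hz : (x, T) ∈ S := ⟨hxm, hTT⟩
    have hρx : m ^ 2 * (x - x') ^ 2 ≤ ρ (x, T) ^ 2 := by
      rw [← mul_pow, sq_le_sq]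
      rcases le_total x x' with hle | hle
      · have := h.coord_sub_ge hα hTT hxm hx' hle
        rw [hρ] at this
        rw [abs_of_nonpos (mul_nonpos_of_nonneg_of_nonpos hm.le (by linarith))]
        exact le_trans (by linarith) (neg_le_abs _)
      · have := h.coord_sub_ge hα hTT hx' hxm hle
        rw [hρ] at this
        rw [abs_of_nonneg (mul_nonneg hm.le (by linarith))]
        exact le_trans (by linarith) (le_abs_self _)
    set v := m ^ 2 * (x - x') ^ 2 / (4 * ε) with hv
    have hv0 : 0 ≤ v := by positivity
    have hG : G[ε] (x, T) ≤ Real.exp (-v) := by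
      unfold gaussWeight
      rw [Real.exp_le_exp, neg_le_neg_iff, hv]
      have : T + ε - (x, T).2 = ε := by simp
      rw [this]
      gcongr
    have hw2 : w (x, T) ^ 2 ≤ C ^ 2 * ((4 / m ^ 2) ^ n * ε ^ n * v ^ n) := by
      rw [← sq_abs (w _)]
      calc |w (x, T)| ^ 2 ≤ (C * |x - x'| ^ n) ^ 2 := by
            have := hw x hxm
            gcongr
        _ = C ^ 2 * ((x - x') ^ 2) ^ n := by
            rw [mul_pow, ← sq_abs (x - x'), ← pow_mul, ← pow_mul, mul_comm n]
        _ = _ := by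
            rw [← mul_pow, ← mul_pow]
            congr 2
            rw [hv]
            field_simp
    have hvn : v ^ n * Real.exp (-v) ≤ n.factorial := by
      have := Real.pow_div_factorial_le_exp v hv0 n
      rw [div_le_iff₀ (by positivity)] at this
      rw [Real.exp_neg, ← div_eq_mul_inv, div_le_iff₀ (Real.exp_pos _)]
      linarith
    have hαB : α (x, T) ≤ B := (le_abs_self _).trans (hB _ hz)
    have hα0 := (h.pos _ hz).le
    calc w (x, T) ^ 2 * α (x, T) * G[ε] (x, T)
        ≤ C ^ 2 * ((4 / m ^ 2) ^ n * ε ^ n * v ^ n) * B * Real.exp (-v) := by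
          have := (weight_pos (T := T) (ε := ε) (ρ := ρ) (x, T)).le
          gcongr
      _ = C ^ 2 * B * (4 / m ^ 2) ^ n * ε ^ n * (v ^ n * Real.exp (-v)) := by ring
      _ ≤ C ^ 2 * B * (4 / m ^ 2) ^ n * ε ^ n * n.factorial := by gcongr
      _ = Q * ε ^ n := by rw [hQ]; ring
  refine key.trans ?_
  have : 0 ≤ (x₁ - x₀) * ε ^ n := by positivity
  linarith

/-- Strong unique continuation for `ArclengthData`: the order of vanishing in `x` is finite. -/
theorem not_vanishing_order (h : ArclengthData x₀ x₁ T w α ρ p) {x' M : ℝ}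
    (hx' : x' ∈ Ioo x₀ x₁) (hρ : ∀ t ∈ Icc 0 T, ρ (x', t) = 0)
    (hw₀ : ∀ t ∈ Icc 0 T, w (x₀, t) ≠ 0) (hw₁ : ∀ t ∈ Icc 0 T, w (x₁, t) ≠ 0) (hM : 0 ≤ M)
    (hf : ∀ z ∈ S, |pdt S w z - pdt S ρ z * p z - pdx S p z / α z| ≤ M * (|w z| + |p z|)) :
    ∃ n : ℕ, ∀ C, ∃ x ∈ Icc x₀ x₁, C * |x - x'| ^ n < |w (x, T)| := by
  obtain ⟨K, c, hc, hlow⟩ := h.exists_mass_lower_bound hx' hρ hw₀ hw₁ hM hf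
  refine ⟨K + 1, fun C => ?_⟩
  by_contra! hcon
  obtain ⟨C', hC', hup⟩ := h.exists_mass_upper_bound (Ioo_subset_Icc_self hx')
    (hρ T (right_mem_Icc.2 h.hT.le)) (K + 1) hcon
  set ε := min 1 (c / (2 * C')) with hεdef
  have hε : 0 < ε := lt_min one_pos (by positivity)
  have h1 := (hlow ε hε (min_le_left _ _)).trans (hup ε hε)
  rw [pow_succ, mul_comm (ε ^ K), ← mul_assoc] at h1
  have h2 : c ≤ C' * ε := le_of_mul_le_mul_right h1 (by positivity)
  have h3 : C' * ε ≤ C' * (c / (2 * C')) := by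
    gcongr
    exact min_le_right _ _
  have h4 : C' * (c / (2 * C')) = c / 2 := by field_simp
  linarith

end ArclengthData

section Restrict

variable {x₀ x₁ T t' : ℝ} {f : ℝ × ℝ → ℝ}

theorem rect_subset_rect (ht' : t' ≤ T) : rect x₀ x₁ t' ⊆ rect x₀ x₁ T :=
  prod_mono Subset.rfl (Icc_subset_Icc_right ht')

theorem pdx_restrict (hx : x₀ < x₁) (ht' : t' ≤ T) (hf : ContDiffOn ℝ ∞ f (rect x₀ x₁ T)) :
    EqOn (pdx (rect x₀ x₁ t') f) (pdx (rect x₀ x₁ T) f) (rect x₀ x₁ t') := fun z hz =>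
  pdx_eq_of_hasDerivWithinAt hx (hf.mono (rect_subset_rect ht')) (x := z.1) (t := z.2) hz
    (hf.hasDerivWithinAt_pdx (rect_subset_rect ht' hz))

theorem pdt_restrict (ht'0 : 0 < t') (ht' : t' ≤ T) (hf : ContDiffOn ℝ ∞ f (rect x₀ x₁ T)) :
    EqOn (pdt (rect x₀ x₁ t') f) (pdt (rect x₀ x₁ T) f) (rect x₀ x₁ t') := fun z hz =>
  pdt_eq_of_hasDerivWithinAt ht'0 (hf.mono (rect_subset_rect ht')) (x := z.1) (t := z.2) hz
    ((hf.hasDerivWithinAt_pdt (rect_subset_rect ht' hz)).mono (Icc_subset_Icc_right ht'))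

theorem pdx_iterate_restrict (hx : x₀ < x₁) (hT : 0 < T) (ht' : t' ≤ T)
    (hf : ContDiffOn ℝ ∞ f (rect x₀ x₁ T)) (k : ℕ) :
    EqOn ((pdx (rect x₀ x₁ t'))^[k] f) ((pdx (rect x₀ x₁ T))^[k] f) (rect x₀ x₁ t') := by
  induction k with
  | zero => exact fun _ _ => rfl
  | succ k ih =>
    rw [Function.iterate_succ_apply', Function.iterate_succ_apply']
    exact (pdx_congr ih).trans (pdx_restrict hx ht' (hf.pdx_iterate hx hT k))

end Restrict

section Primitive

variable {x₀ x₁ T : ℝ}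

local notation "S" => rect x₀ x₁ T

/-- Space primitives of smooth functions on the rectangle are smooth. -/
theorem exists_primitive_rect {α : ℝ × ℝ → ℝ} (hx : x₀ < x₁) (hT : 0 < T)
    (hα : ContDiffOn ℝ ∞ α S) {x' : ℝ} (hx' : x' ∈ Icc x₀ x₁) :
    ∃ ρ : ℝ × ℝ → ℝ, ContDiffOn ℝ ∞ ρ S ∧ (∀ z ∈ S, pdx S ρ z = α z) ∧ ∀ t, ρ (x', t) = 0 := by
  have hmaps : ∀ z : (ℝ × ℝ) × ℝ, z ∈ S ×ˢ Icc (0 : ℝ) 1 →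
      (x' + (z.1.1 - x') * z.2, z.1.2) ∈ S := by
    rintro ⟨⟨x, t⟩, θ⟩ ⟨⟨hxm, htm⟩, hθ⟩
    refine ⟨?_, htm⟩
    have := (convex_Icc x₀ x₁).add_smul_sub_mem hx' hxm hθ
    simpa [mul_comm] using this
  have hsm : ContDiffOn ℝ ∞ (fun z : ℝ × ℝ =>
      ∫ θ in (0 : ℝ)..1, α (x' + (z.1 - x') * θ, z.2)) S := by
    refine contDiffOn_integral_param (convex_rect _ _ _) (uniqueDiffOn_rect hx hT) one_pos ?_
    exact hα.comp (f := fun z : (ℝ × ℝ) × ℝ => (x' + (z.1.1 - x') * z.2, z.1.2))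
      (by fun_prop) hmaps
  set ρ : ℝ × ℝ → ℝ := fun z => (z.1 - x') * ∫ θ in (0 : ℝ)..1, α (x' + (z.1 - x') * θ, z.2)
    with hρ
  have hρsm : ContDiffOn ℝ ∞ ρ S := ContDiffOn.mul (by fun_prop) hsm
  have hρint : ∀ x t, ρ (x, t) = ∫ y in x'..x, α (y, t) := by
    intro x t
    have := intervalIntegral.smul_integral_comp_add_mul (a := 0) (b := 1)
      (fun y => α (y, t)) (x - x') x'
    simpa [hρ] using this
  refine ⟨ρ, hρsm, ?_, fun t => by simp [hρ]⟩
  rintro ⟨x, t⟩ hz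
  refine pdx_eq_of_hasDerivWithinAt hx hρsm hz ?_
  simp only [hρint]
  have hcont : ContinuousOn (fun y => α (y, t)) (Icc x₀ x₁) := hα.continuousOn.slice hz.2
  have : Fact (x ∈ Icc x₀ x₁) := ⟨hz.1⟩
  refine intervalIntegral.integral_hasDerivWithinAt_right (s := Icc x₀ x₁) (t := Icc x₀ x₁) ?_
    (hcont.stronglyMeasurableAtFilter_nhdsWithin measurableSet_Icc x) (hcont x hz.1)
  exact (hcont.mono (ordConnected_Icc.uIcc_subset hx' hz.1)).intervalIntegrable

end Primitive

namespace LinearParabolic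

variable {x₀ x₁ T : ℝ} {w a b c : ℝ × ℝ → ℝ}

local notation "S" => rect x₀ x₁ T

theorem restrict (H : LinearParabolic x₀ x₁ T w a b c) {t' : ℝ} (ht'0 : 0 < t') (ht' : t' ≤ T) :
    LinearParabolic x₀ x₁ t' w a b c where
  hx := H.hx
  hT := ht'0
  sol := H.sol.mono (rect_subset_rect ht')
  coeff_a := H.coeff_a.mono (rect_subset_rect ht')
  coeff_b := H.coeff_b.mono (rect_subset_rect ht')
  coeff_c := H.coeff_c.mono (rect_subset_rect ht')
  pos z hz := H.pos z (rect_subset_rect ht' hz)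
  eqn z hz := by
    rw [pdt_restrict ht'0 ht' H.sol hz, pdx_restrict H.hx ht' H.sol hz,
      show pdx (rect x₀ x₁ t') (pdx (rect x₀ x₁ t') w) z = pdx S (pdx S w) z from
        pdx_iterate_restrict H.hx H.hT ht' H.sol 2 hz]
    exact H.eqn z (rect_subset_rect ht' hz)

/-- Finite vanishing order at the final time. -/
theorem exists_pdx_iterate_ne_zero_final (H : LinearParabolic x₀ x₁ T w a b c)
    (hw₀ : ∀ t ∈ Icc 0 T, w (x₀, t) ≠ 0) (hw₁ : ∀ t ∈ Icc 0 T, w (x₁, t) ≠ 0) {x' : ℝ}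
    (hx' : x' ∈ Ioo x₀ x₁) : ∃ k, (pdx S)^[k] w (x', T) ≠ 0 := by
  have hx := H.hx
  have hT := H.hT
  set α : ℝ × ℝ → ℝ := fun z => (√(a z))⁻¹ with hαdef
  have hα : ContDiffOn ℝ ∞ α S :=
    (H.coeff_a.sqrt fun z hz => (H.pos z hz).ne').inv fun z hz =>
      (Real.sqrt_pos.2 (H.pos z hz)).ne'
  have hαpos : ∀ z ∈ S, 0 < α z := fun z hz => inv_pos.2 (Real.sqrt_pos.2 (H.pos z hz))
  have hαa : ∀ z ∈ S, a z * α z ^ 2 = 1 := fun z hz => by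
    rw [hαdef, inv_pow, Real.sq_sqrt (H.pos z hz).le, mul_inv_cancel₀ (H.pos z hz).ne']
  obtain ⟨ρ, hρ, hρx, hρ0⟩ := exists_primitive_rect hx hT hα (Ioo_subset_Icc_self hx')
  set p : ℝ × ℝ → ℝ := fun z => pdx S w z / α z with hpdef
  have hp : ContDiffOn ℝ ∞ p S := (H.sol.pdx hx hT).div hα fun z hz => (hαpos z hz).ne'
  have hpα : ∀ z ∈ S, pdx S w z = α z * p z := fun z hz =>
    (mul_div_cancel₀ _ (hαpos z hz).ne').symm
  have h : ArclengthData x₀ x₁ T w α ρ p := ⟨hx, hT, H.sol, hα, hρ, hp, hαpos, hρx, hpα⟩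
  set q : ℝ × ℝ → ℝ := fun z => pdx S α z / α z ^ 2 + b z * α z - pdt S ρ z with hq
  have hqc : ContinuousOn q S :=
    (((hα.pdx hx hT).div (hα.pow 2) fun z hz => (pow_pos (hαpos z hz) 2).ne').add
      (H.coeff_b.mul hα) |>.sub (hρ.pdt hx hT)).continuousOn
  obtain ⟨M₁, hM₁0, hM₁⟩ := exists_bound_on_rect hqc
  obtain ⟨M₂, hM₂0, hM₂⟩ := exists_bound_on_rect H.coeff_c.continuousOn
  have hf : ∀ z ∈ S, |pdt S w z - pdt S ρ z * p z - pdx S p z / α z| ≤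
      (M₁ + M₂) * (|w z| + |p z|) := by
    intro z hz
    have hαz := (hαpos z hz).ne'
    have hxx : pdx S (pdx S w) z = pdx S α z * p z + α z * pdx S p z := by
      rw [pdx_congr (g := fun z => α z * p z) hpα hz, pdx_mul hx hα hp hz]
    have haz : a z = 1 / α z ^ 2 := by rw [eq_div_iff (pow_ne_zero 2 hαz), hαa z hz]
    have hid : pdt S w z - pdt S ρ z * p z - pdx S p z / α z = q z * p z + c z * w z := by
      rw [H.eqn z hz, hxx, hpα z hz, haz, hq]
      field_simp
      ring
    rw [hid]
    refine (abs_add_le _ _).trans ?_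
    rw [abs_mul, abs_mul]
    have e1 := mul_le_mul_of_nonneg_right (hM₁ z hz) (abs_nonneg (p z))
    have e2 := mul_le_mul_of_nonneg_right (hM₂ z hz) (abs_nonneg (w z))
    have e3 : 0 ≤ M₁ * |w z| := by positivity
    have e4 : 0 ≤ M₂ * |p z| := by positivity
    linarith
  obtain ⟨n, hn⟩ := h.not_vanishing_order hx' (fun t _ => hρ0 t) hw₀ hw₁ (by positivity) hf
  by_contra! hcon
  have hTT : T ∈ Icc 0 T := right_mem_Icc.2 hT.le
  obtain ⟨C, -, hC⟩ := H.parOrder_pdx_iterate (z₀ := (x', T)) (k := n)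
    ⟨Ioo_subset_Icc_self hx', hTT⟩ (fun i _ => hcon i) 0
  obtain ⟨x, hxm, hlt⟩ := hn C
  have := hC (x, T) ⟨hxm, hTT⟩
  simp only [parDist, sub_self, abs_zero, Real.sqrt_zero, add_zero, Function.iterate_zero, id,
    Nat.sub_zero] at this
  linarith

/-- A solution that does not vanish on the lateral boundary has finite vanishing order in space at
every interior point at positive times. -/
theorem exists_pdx_iterate_ne_zero (H : LinearParabolic x₀ x₁ T w a b c)
    (hw₀ : ∀ t ∈ Icc 0 T, w (x₀, t) ≠ 0) (hw₁ : ∀ t ∈ Icc 0 T, w (x₁, t) ≠ 0) {x' t' : ℝ}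
    (hx' : x' ∈ Ioo x₀ x₁) (ht' : t' ∈ Ioc 0 T) : ∃ k, (pdx S)^[k] w (x', t') ≠ 0 := by
  have hsub : Icc 0 t' ⊆ Icc 0 T := Icc_subset_Icc_right ht'.2
  obtain ⟨k, hk⟩ := (H.restrict ht'.1 ht'.2).exists_pdx_iterate_ne_zero_final
    (fun t ht => hw₀ t (hsub ht)) (fun t ht => hw₁ t (hsub ht)) hx'
  refine ⟨k, ?_⟩
  rwa [pdx_iterate_restrict H.hx H.hT ht'.2 H.sol k
    ⟨Ioo_subset_Icc_self hx', right_mem_Icc.2 ht'.1.le⟩] at hk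

end LinearParabolic

section Linearization

variable {x₀ x₁ T : ℝ} {Φ : ℝ × ℝ × ℝ × ℝ × ℝ → ℝ}

local notation "S" => rect x₀ x₁ T

/-- The domain of the nonlinearity: arbitrary `2`-jets over points of the rectangle. -/
def jetDomain (x₀ x₁ T : ℝ) : Set (ℝ × ℝ × ℝ × ℝ × ℝ) :=
  univ ×ˢ univ ×ˢ univ ×ˢ Icc x₀ x₁ ×ˢ Icc 0 T

local notation "D" => jetDomain x₀ x₁ T

theorem uniqueDiffOn_jetDomain (hx : x₀ < x₁) (hT : 0 < T) : UniqueDiffOn ℝ D :=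
  uniqueDiffOn_univ.prod (uniqueDiffOn_univ.prod (uniqueDiffOn_univ.prod
    (uniqueDiffOn_rect hx hT)))

theorem mem_jetDomain {r p q : ℝ} {z : ℝ × ℝ} (hz : z ∈ S) : (r, p, q, z) ∈ D :=
  ⟨trivial, trivial, trivial, hz⟩

/-- The difference of two solutions of a fully nonlinear parabolic equation solves a linear
parabolic equation. -/
theorem exists_linearParabolic (hx : x₀ < x₁) (hT : 0 < T) (hΦ : ContDiffOn ℝ ∞ Φ D)
    (hpos : ∀ y ∈ D, 0 < fderivWithin ℝ Φ D y (1, 0)) {u v : ℝ × ℝ → ℝ}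
    (hu : ContDiffOn ℝ ∞ u S) (hv : ContDiffOn ℝ ∞ v S)
    (hueq : ∀ z ∈ S, pdt S u z = Φ (pdx S (pdx S u) z, pdx S u z, u z, z))
    (hveq : ∀ z ∈ S, pdt S v z = Φ (pdx S (pdx S v) z, pdx S v z, v z, z)) :
    ∃ a b c, LinearParabolic x₀ x₁ T (fun z => u z - v z) a b c := by
  have hux := hu.pdx hx hT
  have hvx := hv.pdx hx hT
  have huxx := hux.pdx hx hT
  have hvxx := hvx.pdx hx hT
  set γ : ℝ × ℝ → ℝ → ℝ × ℝ × ℝ × ℝ × ℝ := fun z θ =>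
    (pdx S (pdx S v) z + θ * (pdx S (pdx S u) z - pdx S (pdx S v) z),
      pdx S v z + θ * (pdx S u z - pdx S v z), v z + θ * (u z - v z), z) with hγ
  have hγD : ∀ z ∈ S, ∀ θ, γ z θ ∈ D := fun z hz θ => mem_jetDomain hz
  have lift : ∀ {f : ℝ × ℝ → ℝ}, ContDiffOn ℝ ∞ f S →
      ContDiffOn ℝ ∞ (fun y : (ℝ × ℝ) × ℝ => f y.1) (S ×ˢ Icc (0 : ℝ) 1) := fun hf =>
    hf.comp contDiffOn_fst fun _ hy => hy.1
  have segment : ∀ {f g : ℝ × ℝ → ℝ}, ContDiffOn ℝ ∞ f S → ContDiffOn ℝ ∞ g S →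
      ContDiffOn ℝ ∞ (fun y : (ℝ × ℝ) × ℝ => g y.1 + y.2 * (f y.1 - g y.1))
        (S ×ˢ Icc (0 : ℝ) 1) := fun hf hg =>
    (lift hg).add (contDiffOn_snd.mul ((lift hf).sub (lift hg)))
  have hγsm : ContDiffOn ℝ ∞ (Function.uncurry γ) (S ×ˢ Icc (0 : ℝ) 1) :=
    (segment huxx hvxx).prodMk ((segment hux hvx).prodMk
      ((segment hu hv).prodMk contDiffOn_fst))
  have hdΦ : ContDiffOn ℝ ∞ (fderivWithin ℝ Φ D) D :=
    hΦ.fderivWithin (uniqueDiffOn_jetDomain hx hT) (by simp)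
  have hgsm : ∀ e, ContDiffOn ℝ ∞ (Function.uncurry fun z θ => fderivWithin ℝ Φ D (γ z θ) e)
      (S ×ˢ Icc (0 : ℝ) 1) := fun e =>
    (hdΦ.comp hγsm fun y hy => hγD y.1 hy.1 y.2).clm_apply contDiffOn_const
  have hcoeff : ∀ e, ContDiffOn ℝ ∞
      (fun z => ∫ θ in (0 : ℝ)..1, fderivWithin ℝ Φ D (γ z θ) e) S := fun e =>
    contDiffOn_integral_param (convex_rect _ _ _) (uniqueDiffOn_rect hx hT) one_pos (hgsm e)
  have hintegrable : ∀ z ∈ S, ∀ e, IntervalIntegrable (fun θ => fderivWithin ℝ Φ D (γ z θ) e)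
      volume 0 1 := fun z hz e => intervalIntegrable_section zero_le_one (hgsm e).continuousOn hz
  refine ⟨fun z => ∫ θ in (0 : ℝ)..1, fderivWithin ℝ Φ D (γ z θ) (1, 0),
    fun z => ∫ θ in (0 : ℝ)..1, fderivWithin ℝ Φ D (γ z θ) (0, 1, 0),
    fun z => ∫ θ in (0 : ℝ)..1, fderivWithin ℝ Φ D (γ z θ) (0, 0, 1, 0),
    hx, hT, hu.sub hv, hcoeff _, hcoeff _, hcoeff _, fun z hz => ?_, fun z hz => ?_⟩
  · exact intervalIntegral.intervalIntegral_pos_of_pos_on (hintegrable z hz _)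
      (fun θ _ => hpos _ (hγD z hz θ)) one_pos
  · rw [pdt_sub hT hu hv hz, pdx_congr (fun y hy => pdx_sub hx hu hv hy) hz,
      pdx_sub hx hux hvx hz, pdx_sub hx hu hv hz, hueq z hz, hveq z hz]
    set r := pdx S (pdx S u) z - pdx S (pdx S v) z
    set p := pdx S u z - pdx S v z
    set q := u z - v z
    have hderiv : ∀ θ, HasDerivAt (fun θ => Φ (γ z θ))
        (fderivWithin ℝ Φ D (γ z θ) (r, p, q, 0)) θ := by
      intro θ
      have line : ∀ c d : ℝ, HasDerivAt (fun θ => c + θ * d) d θ := fun c d => by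
        simpa using ((hasDerivAt_id θ).mul_const d).const_add c
      have hd : HasDerivAt (γ z) (r, p, q, 0) θ :=
        (line _ _).prodMk ((line _ _).prodMk ((line _ _).prodMk (hasDerivAt_const θ z)))
      have := (hΦ.differentiableOn (by simp) _ (hγD z hz θ)).hasFDerivWithinAt
        |>.comp_hasDerivWithinAt (s := univ) θ hd.hasDerivWithinAt fun θ _ => hγD z hz θ
      rwa [hasDerivWithinAt_univ] at this
    have hsplit : ∀ θ, fderivWithin ℝ Φ D (γ z θ) (r, p, q, 0) =
        fderivWithin ℝ Φ D (γ z θ) (1, 0) * r + fderivWithin ℝ Φ D (γ z θ) (0, 1, 0) * p +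
          fderivWithin ℝ Φ D (γ z θ) (0, 0, 1, 0) * q := by
      intro θ
      have : ((r, p, q, 0) : ℝ × ℝ × ℝ × ℝ × ℝ) =
          r • (1, 0) + p • (0, 1, 0) + q • (0, 0, 1, 0) := by
        simp
      rw [this]
      simp only [map_add, map_smul, smul_eq_mul]
      ring
    have hftc := intervalIntegral.integral_eq_sub_of_hasDerivAt (fun θ _ => hderiv θ)
      (hintegrable z hz (r, p, q, 0))
    have h1 : γ z 1 = (pdx S (pdx S u) z, pdx S u z, u z, z) := by simp [hγ]
    have h0 : γ z 0 = (pdx S (pdx S v) z, pdx S v z, v z, z) := by simp [hγ]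
    rw [h1, h0] at hftc
    rw [← hftc]
    simp only [hsplit]
    rw [intervalIntegral.integral_add
        (((hintegrable z hz _).mul_const r).add ((hintegrable z hz _).mul_const p)) ((hintegrable z hz _).mul_const q),
      intervalIntegral.integral_add ((hintegrable z hz _).mul_const r) ((hintegrable z hz _).mul_const p),
      intervalIntegral.integral_mul_const, intervalIntegral.integral_mul_const,
      intervalIntegral.integral_mul_const]

end Linearization

/-- A function on the line that locally does not increase to the right and locally does not
decrease to the left is antitone. -/
theorem le_of_eventually_le_nhdsGT_of_eventually_le_nhdsLT {N : ℝ → ℕ} {s t : ℝ} (hst : s ≤ t)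
    (hr : ∀ r ∈ Ico s t, ∀ᶠ q in 𝓝[>] r, N q ≤ N r)
    (hl : ∀ r ∈ Ioc s t, ∀ᶠ q in 𝓝[<] r, N r ≤ N q) : N t ≤ N s := by
  set A := {r ∈ Icc s t | ∀ q ∈ Icc s r, N q ≤ N s} with hA
  have hsA : s ∈ A := ⟨left_mem_Icc.2 hst, fun q hq => by rw [le_antisymm hq.2 hq.1]⟩
  have hbdd : BddAbove A := ⟨t, fun r hr => hr.1.2⟩
  set c := sSup A with hc
  have hsc : s ≤ c := le_csSup hbdd hsA
  have hct : c ≤ t := csSup_le ⟨s, hsA⟩ fun r hr => hr.1.2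
  have hlt : ∀ q ∈ Ico s c, N q ≤ N s := by
    intro q hq
    obtain ⟨r, hrA, hqr⟩ := exists_lt_of_lt_csSup ⟨s, hsA⟩ hq.2
    exact hrA.2 q ⟨hq.1, hqr.le⟩
  have hcs : N c ≤ N s := by
    rcases hsc.eq_or_lt with h | h
    · rw [← h]
    · obtain ⟨q, hq, hqc⟩ := ((hl c ⟨h, hct⟩).and (Ioo_mem_nhdsLT h)).exists
      exact hq.trans (hlt q ⟨hqc.1.le, hqc.2⟩)
  have hle : ∀ q ∈ Icc s c, N q ≤ N s := by
    intro q hq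
    rcases hq.2.eq_or_lt with h | h
    · rwa [h]
    · exact hlt q ⟨hq.1, h⟩
  rcases hct.eq_or_lt with h | h
  · rwa [← h]
  · exfalso
    obtain ⟨e, he, hsub⟩ := (mem_nhdsGT_iff_exists_Ioc_subset).1 (hr c ⟨hsc, h⟩)
    have hce : c < min e t := lt_min he h
    have : min e t ∈ A := by
      refine ⟨⟨hsc.trans hce.le, min_le_right _ _⟩, fun q hq => ?_⟩
      rcases le_or_gt q c with hqc | hqc
      · exact hle q ⟨hq.1, hqc⟩
      · exact le_trans (hsub ⟨hqc, hq.2.trans (min_le_left _ _)⟩) hcs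
    exact absurd (le_csSup hbdd this) (not_le.2 hce)

/-- The zero set in space at time `t`. -/
def zerosAt (x₀ x₁ : ℝ) (w : ℝ × ℝ → ℝ) (t : ℝ) : Set ℝ := {x ∈ Icc x₀ x₁ | w (x, t) = 0}

namespace LinearParabolic

variable {x₀ x₁ T : ℝ} {w a b c : ℝ × ℝ → ℝ} {t' x' : ℝ}

local notation "S" => rect x₀ x₁ T
local notation "Z" => zerosAt x₀ x₁ w

theorem mem_Ioo_of_mem_zerosAt (hw₀ : ∀ t ∈ Icc 0 T, w (x₀, t) ≠ 0)
    (hw₁ : ∀ t ∈ Icc 0 T, w (x₁, t) ≠ 0) (ht' : t' ∈ Icc 0 T) (hx' : x' ∈ Z t') :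
    x' ∈ Ioo x₀ x₁ := by
  obtain ⟨hxm, hzero⟩ := hx'
  refine ⟨lt_of_le_of_ne hxm.1 ?_, lt_of_le_of_ne hxm.2 ?_⟩
  · rintro rfl
    exact hw₀ t' ht' hzero
  · rintro rfl
    exact hw₁ t' ht' hzero

theorem exists_order (H : LinearParabolic x₀ x₁ T w a b c)
    (hw₀ : ∀ t ∈ Icc 0 T, w (x₀, t) ≠ 0) (hw₁ : ∀ t ∈ Icc 0 T, w (x₁, t) ≠ 0)
    (ht' : t' ∈ Ioc 0 T) (hx' : x' ∈ Z t') :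
    ∃ k, 1 ≤ k ∧ (∀ i < k, (pdx S)^[i] w (x', t') = 0) ∧ (pdx S)^[k] w (x', t') ≠ 0 ∧
      (pdx S w (x', t') = 0 → 2 ≤ k) := by
  classical
  have hex := H.exists_pdx_iterate_ne_zero hw₀ hw₁
    (mem_Ioo_of_mem_zerosAt hw₀ hw₁ (Ioc_subset_Icc_self ht') hx') ht'
  have hspec := Nat.find_spec hex
  have h1 : 1 ≤ Nat.find hex := by
    rw [Nat.one_le_iff_ne_zero]
    intro h0
    rw [h0] at hspec
    exact hspec hx'.2
  refine ⟨Nat.find hex, h1, fun i hi => not_not.1 (Nat.find_min hex hi), hspec, fun hd => ?_⟩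
  refine lt_of_le_of_ne h1 fun heq => ?_
  rw [← heq] at hspec
  exact hspec hd

theorem exists_eventually_subsingleton (H : LinearParabolic x₀ x₁ T w a b c)
    (hw₀ : ∀ t ∈ Icc 0 T, w (x₀, t) ≠ 0) (hw₁ : ∀ t ∈ Icc 0 T, w (x₁, t) ≠ 0)
    (ht' : t' ∈ Ioc 0 T) (hx' : x' ∈ Z t') :
    ∃ ρ > 0, ∀ᶠ t in 𝓝[≥] t', t ≤ T → (Z t ∩ Metric.ball x' ρ).Subsingleton := by
  obtain ⟨k, hk1, hk, hκ, -⟩ := H.exists_order hw₀ hw₁ ht' hx'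
  obtain ⟨ρ, hρ, hsub⟩ := H.subsingleton_zeros_after (z₀ := (x', t'))
    ⟨hx'.1, Ioc_subset_Icc_self ht'⟩ hk hk1 hκ
  refine ⟨ρ, hρ, ?_⟩
  filter_upwards [Ico_mem_nhdsGE (show t' < t' + ρ by linarith)] with t ht htT
  refine (hsub t ⟨ht'.1.le.trans ht.1, htT⟩ ht.1 ht.2).anti ?_
  rintro x ⟨⟨hxm, hzero⟩, hball⟩
  exact ⟨hxm, hball, hzero⟩

theorem eventually_exists_zeros_before (H : LinearParabolic x₀ x₁ T w a b c)
    (hw₀ : ∀ t ∈ Icc 0 T, w (x₀, t) ≠ 0) (hw₁ : ∀ t ∈ Icc 0 T, w (x₁, t) ≠ 0)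
    (ht' : t' ∈ Ioc 0 T) (hx' : x' ∈ Z t') :
    ∀ᶠ ε in 𝓝[>] 0, ∀ᶠ t in 𝓝[<] t', ∃ x ∈ Z t, ∃ y ∈ Z t, |x - x'| < ε ∧ |y - x'| < ε ∧
      (pdx S w (x', t') = 0 → x < y) := by
  obtain ⟨k, hk1, hk, hκ, hk2⟩ := H.exists_order hw₀ hw₁ ht' hx'
  obtain ⟨ρ, hρ, hzeros⟩ := H.exists_zeros_before (z₀ := (x', t'))
    ⟨hx'.1, Ioc_subset_Icc_self ht'⟩
    (mem_Ioo_of_mem_zerosAt hw₀ hw₁ (Ioc_subset_Icc_self ht') hx') hk hk1 hκ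
  filter_upwards [Ioo_mem_nhdsGT hρ] with ε hε
  obtain ⟨δ, hδ, hδz⟩ := hzeros ε hε.1 hε.2
  filter_upwards [Ioo_mem_nhdsLT (show t' - δ < t' by linarith), Ioo_mem_nhdsLT ht'.1]
    with t ht htpos
  obtain ⟨x, hxm, y, hym, hx, hy, hwx, hwy, hlt⟩ :=
    hδz t ⟨htpos.1.le, htpos.2.le.trans ht'.2⟩ ht.1 ht.2
  exact ⟨x, ⟨hxm, hwx⟩, y, ⟨hym, hwy⟩, hx, hy, fun h => hlt (hk2 h)⟩

theorem finite_zerosAt (H : LinearParabolic x₀ x₁ T w a b c)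
    (hw₀ : ∀ t ∈ Icc 0 T, w (x₀, t) ≠ 0) (hw₁ : ∀ t ∈ Icc 0 T, w (x₁, t) ≠ 0)
    (ht' : t' ∈ Ioc 0 T) : (Z t').Finite := by
  have hcont : ContinuousOn (fun x => w (x, t')) (Icc x₀ x₁) :=
    H.sol.continuousOn.slice (Ioc_subset_Icc_self ht')
  have hcompact : IsCompact (Z t') :=
    isCompact_Icc.of_isClosed_subset
      (hcont.preimage_isClosed_of_isClosed isClosed_Icc isClosed_singleton) fun _ hx => hx.1
  refine hcompact.induction_on finite_empty (fun _ _ hst ht => ht.subset hst)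
    (fun _ _ => Finite.union) fun x hx => ?_
  obtain ⟨ρ, hρ, hev⟩ := H.exists_eventually_subsingleton hw₀ hw₁ ht' hx
  exact ⟨Z t' ∩ Metric.ball x ρ, inter_mem self_mem_nhdsWithin
    (mem_nhdsWithin_of_mem_nhds (Metric.ball_mem_nhds x hρ)),
    (hev.self_of_nhdsWithin self_mem_Ici ht'.2).finite⟩

/-- Zeros at nearby times stay close to the zeros at a given time. -/
theorem eventually_zerosAt_subset (H : LinearParabolic x₀ x₁ T w a b c) (ht' : t' ∈ Icc 0 T)
    {V : Set ℝ} (hV : IsOpen V) (hsub : Z t' ⊆ V) : ∀ᶠ t in 𝓝 t', t ∈ Icc 0 T → Z t ⊆ V := by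
  set B : Set (ℝ × ℝ) := {z ∈ S | z.1 ∈ Vᶜ ∧ w z = 0} with hB
  have hBc : IsCompact B := by
    refine (isCompact_rect x₀ x₁ T).of_isClosed_subset ?_ fun _ hz => hz.1
    have h1 : IsClosed (S ∩ w ⁻¹' {0}) := H.sol.continuousOn.preimage_isClosed_of_isClosed
      (isCompact_rect x₀ x₁ T).isClosed isClosed_singleton
    have h2 : IsClosed ((Prod.fst : ℝ × ℝ → ℝ) ⁻¹' Vᶜ) := hV.isClosed_compl.preimage continuous_fst
    convert h1.inter h2 using 1
    ext z
    simp only [hB, mem_ofPred_eq, mem_inter_iff, mem_preimage, mem_singleton_iff]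
    tauto
  have hclosed : IsClosed (Prod.snd '' B) := (hBc.image continuous_snd).isClosed
  have hnot : t' ∉ Prod.snd '' B := by
    rintro ⟨⟨x, t⟩, ⟨hz, hxV, hzero⟩, rfl⟩
    exact hxV (hsub ⟨hz.1, hzero⟩)
  filter_upwards [hclosed.isOpen_compl.mem_nhds hnot] with t ht htm x hx
  by_contra hxV
  exact ht ⟨(x, t), ⟨⟨hx.1, htm⟩, hxV, hx.2⟩, rfl⟩

theorem eventually_ncard_le_after (H : LinearParabolic x₀ x₁ T w a b c)
    (hw₀ : ∀ t ∈ Icc 0 T, w (x₀, t) ≠ 0) (hw₁ : ∀ t ∈ Icc 0 T, w (x₁, t) ≠ 0)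
    (ht' : t' ∈ Ioc 0 T) : ∀ᶠ t in 𝓝[≥] t', t ≤ T → (Z t).ncard ≤ (Z t').ncard := by
  have hfin := H.finite_zerosAt hw₀ hw₁ ht'
  have hloc := fun x (hx : x ∈ Z t') => H.exists_eventually_subsingleton hw₀ hw₁ ht' hx
  choose! ρ hρ hev using hloc
  have hsub := H.eventually_zerosAt_subset (Ioc_subset_Icc_self ht')
    (V := ⋃ x ∈ Z t', Metric.ball x (ρ x)) (isOpen_biUnion fun _ _ => Metric.isOpen_ball)
    fun x hx => mem_biUnion hx (Metric.mem_ball_self (hρ x hx))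
  filter_upwards [(eventually_all_finite hfin).2 hev, mem_nhdsWithin_of_mem_nhds hsub,
    self_mem_nhdsWithin] with t hss hcover htt' htT
  have hcov : ∀ y ∈ Z t, ∃ x ∈ Z t', y ∈ Metric.ball x (ρ x) := fun y hy => by
    simpa using hcover ⟨ht'.1.le.trans htt', htT⟩ hy
  choose! f hf hfball using hcov
  refine ncard_le_ncard_of_injOn f hf (fun y hy y' hy' heq => ?_) hfin
  exact hss (f y) (hf y hy) htT ⟨hy, hfball y hy⟩ ⟨hy', heq ▸ hfball y' hy'⟩

theorem eventually_ncard_le_before (H : LinearParabolic x₀ x₁ T w a b c)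
    (hw₀ : ∀ t ∈ Icc 0 T, w (x₀, t) ≠ 0) (hw₁ : ∀ t ∈ Icc 0 T, w (x₁, t) ≠ 0)
    (ht' : t' ∈ Ioc 0 T) : ∀ᶠ t in 𝓝[<] t', (Z t').ncard ≤ (Z t).ncard ∧
      ∀ x ∈ Z t', pdx S w (x, t') = 0 → (Z t').ncard < (Z t).ncard := by
  have hfin := H.finite_zerosAt hw₀ hw₁ ht'
  have hbefore : ∀ᶠ ε in 𝓝[>] (0 : ℝ), ∀ x' ∈ Z t', ∀ᶠ t in 𝓝[<] t', ∃ x ∈ Z t, ∃ y ∈ Z t,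
      |x - x'| < ε ∧ |y - x'| < ε ∧ (pdx S w (x', t') = 0 → x < y) :=
    (eventually_all_finite hfin).2 fun x hx => H.eventually_exists_zeros_before hw₀ hw₁ ht' hx
  have hsep : ∀ᶠ ε in 𝓝[>] (0 : ℝ), ∀ x ∈ Z t', ∀ y ∈ Z t', x ≠ y → 2 * ε < |x - y| := by
    refine (eventually_all_finite hfin).2 fun x _ => (eventually_all_finite hfin).2 fun y _ => ?_
    rcases eq_or_ne x y with hxy | hxy
    · exact Eventually.of_forall fun ε h => absurd hxy h
    · filter_upwards [Ioo_mem_nhdsGT (half_pos (abs_pos.2 (sub_ne_zero.2 hxy)))] with ε hε _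
      linarith [hε.2]
  obtain ⟨ε, hε, hsepε⟩ := (hbefore.and hsep).exists
  have hclose : ∀ x ∈ Z t', ∀ y ∈ Z t', ∀ q, |q - x| < ε → |q - y| < ε → x = y := by
    intro x hx y hy q hqx hqy
    by_contra hne
    have h1 := hsepε x hx y hy hne
    have h2 := abs_sub_le x q y
    rw [abs_sub_comm x q] at h2
    linarith
  filter_upwards [(eventually_all_finite hfin).2 hε, Ioo_mem_nhdsLT ht'.1] with t ht htm
  have hfint : (Z t).Finite := H.finite_zerosAt hw₀ hw₁ ⟨htm.1, htm.2.le.trans ht'.2⟩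
  choose! f hf g hg hfx hgx hfg using ht
  have hinj : InjOn f (Z t') := fun x hx y hy heq =>
    hclose x hx y hy (f x) (hfx x hx) (heq ▸ hfx y hy)
  refine ⟨ncard_le_ncard_of_injOn f hf hinj hfint, fun x hx htan => ?_⟩
  have hnot : g x ∉ f '' Z t' := by
    rintro ⟨y, hy, heq⟩
    have hxy : y = x := hclose y hy x hx (g x) (heq ▸ hfx y hy) (hgx x hx)
    rw [hxy] at heq
    exact (hfg x hx htan).ne heq
  calc (Z t').ncard < (insert (g x) (f '' Z t')).ncard := by
        rw [ncard_insert_of_notMem hnot (hfin.image f), hinj.ncard_image]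
        exact Nat.lt_succ_self _
    _ ≤ (Z t).ncard := ncard_le_ncard
        (insert_subset (hg x hx) (image_subset_iff.2 hf)) hfint

theorem ncard_zerosAt_le (H : LinearParabolic x₀ x₁ T w a b c)
    (hw₀ : ∀ t ∈ Icc 0 T, w (x₀, t) ≠ 0) (hw₁ : ∀ t ∈ Icc 0 T, w (x₁, t) ≠ 0) {s t : ℝ}
    (hs : 0 < s) (hst : s ≤ t) (ht : t ≤ T) : (Z t).ncard ≤ (Z s).ncard := by
  refine le_of_eventually_le_nhdsGT_of_eventually_le_nhdsLT (N := fun t => (Z t).ncard) hst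
    (fun r hr => ?_) fun r hr => ?_
  · filter_upwards [nhdsWithin_mono r Ioi_subset_Ici_self
      (H.eventually_ncard_le_after hw₀ hw₁ ⟨hs.trans_le hr.1, hr.2.le.trans ht⟩),
      Ioo_mem_nhdsGT hr.2] with q hq hqm
    exact hq (hqm.2.le.trans ht)
  · exact (H.eventually_ncard_le_before hw₀ hw₁ ⟨hs.trans hr.1, hr.2.trans ht⟩).mono
      fun _ hq => hq.1

/-- A multiple zero strictly decreases the number of zeros. -/
theorem ncard_zerosAt_lt (H : LinearParabolic x₀ x₁ T w a b c)
    (hw₀ : ∀ t ∈ Icc 0 T, w (x₀, t) ≠ 0) (hw₁ : ∀ t ∈ Icc 0 T, w (x₁, t) ≠ 0)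
    (hx' : x' ∈ Z t') (htan : pdx S w (x', t') = 0) {t₁ t₂ : ℝ} (h₁ : 0 < t₁) (h₁' : t₁ < t')
    (h₂' : t' ≤ t₂) (h₂ : t₂ ≤ T) : (Z t₂).ncard < (Z t₁).ncard := by
  obtain ⟨q, hq, hqm⟩ := ((H.eventually_ncard_le_before hw₀ hw₁
    ⟨h₁.trans h₁', h₂'.trans h₂⟩).and (Ioo_mem_nhdsLT h₁')).exists
  calc (Z t₂).ncard ≤ (Z t').ncard := H.ncard_zerosAt_le hw₀ hw₁ (h₁.trans h₁') h₂' h₂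
    _ < (Z q).ncard := hq.2 x' hx' htan
    _ ≤ (Z t₁).ncard := H.ncard_zerosAt_le hw₀ hw₁ h₁ hqm.1.le (hqm.2.le.trans (h₂'.trans h₂))

end LinearParabolic

/-- Intersection-counting theorem: for two solutions of a
fully nonlinear parabolic equation in one space dimension which do not intersect
on the lateral boundary, the set of intersections is finite for positive times,
and a tangential intersection strictly decreases the number of intersections. -/
theorem intersection_counting
    (x₀ x₁ T : ℝ) (hx : x₀ < x₁) (hT : 0 < T)
    (F Fr : ℝ → ℝ → ℝ → ℝ → ℝ → ℝ)
    (hF_smooth : ContDiffOn ℝ (⊤ : ℕ∞)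
      (fun z : ℝ × ℝ × ℝ × ℝ × ℝ => F z.1 z.2.1 z.2.2.1 z.2.2.2.1 z.2.2.2.2)
      (Set.univ ×ˢ Set.univ ×ˢ Set.univ ×ˢ Set.Icc x₀ x₁ ×ˢ Set.Icc 0 T))
    (hFr : ∀ r p q : ℝ, ∀ x ∈ Set.Icc x₀ x₁, ∀ t ∈ Set.Icc (0:ℝ) T,
      HasDerivAt (fun r' => F r' p q x t) (Fr r p q x t) r)
    (hFr_pos : ∀ r p q : ℝ, ∀ x ∈ Set.Icc x₀ x₁, ∀ t ∈ Set.Icc (0:ℝ) T,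
      0 < Fr r p q x t)
    (u ut ux uxx v vt vx vxx : ℝ → ℝ → ℝ)
    (hu_smooth : ContDiffOn ℝ (⊤ : ℕ∞) (fun z : ℝ × ℝ => u z.1 z.2)
      (Set.Icc x₀ x₁ ×ˢ Set.Icc 0 T))
    (hv_smooth : ContDiffOn ℝ (⊤ : ℕ∞) (fun z : ℝ × ℝ => v z.1 z.2)
      (Set.Icc x₀ x₁ ×ˢ Set.Icc 0 T))
    (hut : ∀ x ∈ Set.Icc x₀ x₁, ∀ t ∈ Set.Icc (0:ℝ) T,
      HasDerivWithinAt (fun s => u x s) (ut x t) (Set.Icc 0 T) t)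
    (hux : ∀ x ∈ Set.Icc x₀ x₁, ∀ t ∈ Set.Icc (0:ℝ) T,
      HasDerivWithinAt (fun y => u y t) (ux x t) (Set.Icc x₀ x₁) x)
    (huxx : ∀ x ∈ Set.Icc x₀ x₁, ∀ t ∈ Set.Icc (0:ℝ) T,
      HasDerivWithinAt (fun y => ux y t) (uxx x t) (Set.Icc x₀ x₁) x)
    (hvt : ∀ x ∈ Set.Icc x₀ x₁, ∀ t ∈ Set.Icc (0:ℝ) T,
      HasDerivWithinAt (fun s => v x s) (vt x t) (Set.Icc 0 T) t)
    (hvx : ∀ x ∈ Set.Icc x₀ x₁, ∀ t ∈ Set.Icc (0:ℝ) T,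
      HasDerivWithinAt (fun y => v y t) (vx x t) (Set.Icc x₀ x₁) x)
    (hvxx : ∀ x ∈ Set.Icc x₀ x₁, ∀ t ∈ Set.Icc (0:ℝ) T,
      HasDerivWithinAt (fun y => vx y t) (vxx x t) (Set.Icc x₀ x₁) x)
    (hu_pde : ∀ x ∈ Set.Icc x₀ x₁, ∀ t ∈ Set.Icc (0:ℝ) T,
      ut x t = F (uxx x t) (ux x t) (u x t) x t)
    (hv_pde : ∀ x ∈ Set.Icc x₀ x₁, ∀ t ∈ Set.Icc (0:ℝ) T,
      vt x t = F (vxx x t) (vx x t) (v x t) x t)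
    (hlat : ∀ t ∈ Set.Icc (0:ℝ) T, u x₀ t ≠ v x₀ t ∧ u x₁ t ≠ v x₁ t) :
    (∀ t ∈ Set.Ioc (0:ℝ) T,
      {x ∈ Set.Icc x₀ x₁ | u x t = v x t}.Finite) ∧
    (∀ t' ∈ Set.Ioo (0:ℝ) T, ∀ x' ∈ Set.Ioo x₀ x₁,
      u x' t' = v x' t' → ux x' t' = vx x' t' →
      ∀ t₁ t₂ : ℝ, 0 < t₁ → t₁ < t' → t' < t₂ → t₂ ≤ T →
        {x ∈ Set.Icc x₀ x₁ | u x t₂ = v x t₂}.ncard <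
          {x ∈ Set.Icc x₀ x₁ | u x t₁ = v x t₁}.ncard) := by
  have hderivs : ∀ {f ft fx fxx : ℝ → ℝ → ℝ},
      ContDiffOn ℝ ∞ (fun z : ℝ × ℝ => f z.1 z.2) (rect x₀ x₁ T) →
      (∀ x ∈ Icc x₀ x₁, ∀ t ∈ Icc 0 T, HasDerivWithinAt (fun s => f x s) (ft x t) (Icc 0 T) t) →
      (∀ x ∈ Icc x₀ x₁, ∀ t ∈ Icc 0 T,
        HasDerivWithinAt (fun y => f y t) (fx x t) (Icc x₀ x₁) x) →
      (∀ x ∈ Icc x₀ x₁, ∀ t ∈ Icc 0 T,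
        HasDerivWithinAt (fun y => fx y t) (fxx x t) (Icc x₀ x₁) x) →
      (∀ z ∈ rect x₀ x₁ T, pdt (rect x₀ x₁ T) (fun z => f z.1 z.2) z = ft z.1 z.2) ∧
      (∀ z ∈ rect x₀ x₁ T, pdx (rect x₀ x₁ T) (fun z => f z.1 z.2) z = fx z.1 z.2) ∧
      ∀ z ∈ rect x₀ x₁ T,
        pdx (rect x₀ x₁ T) (pdx (rect x₀ x₁ T) (fun z => f z.1 z.2)) z = fxx z.1 z.2 := by
    intro f ft fx fxx hf hft hfx hfxx
    have h1 : ∀ z ∈ rect x₀ x₁ T, pdx (rect x₀ x₁ T) (fun z => f z.1 z.2) z = fx z.1 z.2 :=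
      fun z hz => pdx_eq_of_hasDerivWithinAt hx hf hz (hfx z.1 hz.1 z.2 hz.2)
    refine ⟨fun z hz => pdt_eq_of_hasDerivWithinAt hT hf hz (hft z.1 hz.1 z.2 hz.2), h1,
      fun z hz => pdx_eq_of_hasDerivWithinAt hx (hf.pdx hx hT) hz ?_⟩
    exact (hfxx z.1 hz.1 z.2 hz.2).congr (fun y hy => h1 (y, z.2) ⟨hy, hz.2⟩) (h1 z hz)
  obtain ⟨hut', hux', huxx'⟩ := hderivs hu_smooth hut hux huxx
  obtain ⟨hvt', hvx', hvxx'⟩ := hderivs hv_smooth hvt hvx hvxx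
  have hpos : ∀ y ∈ jetDomain x₀ x₁ T,
      0 < fderivWithin ℝ (fun z : ℝ × ℝ × ℝ × ℝ × ℝ => F z.1 z.2.1 z.2.2.1 z.2.2.2.1 z.2.2.2.2)
        (jetDomain x₀ x₁ T) y (1, 0) := by
    rintro ⟨r, p, q, x, t⟩ hy
    have hz : (x, t) ∈ rect x₀ x₁ T := hy.2.2.2
    have hline : HasDerivAt (fun r' : ℝ => ((r', p, q, x, t) : ℝ × ℝ × ℝ × ℝ × ℝ)) (1, 0) r :=
      (hasDerivAt_id r).prodMk (hasDerivAt_const r (p, q, x, t))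
    have hcomp := (hF_smooth.differentiableOn (by simp) _ hy).hasFDerivWithinAt
      |>.comp_hasDerivWithinAt (s := univ) r hline.hasDerivWithinAt fun r' _ => mem_jetDomain hz
    rw [hasDerivWithinAt_univ] at hcomp
    exact (hFr_pos r p q x hz.1 t hz.2).trans_eq ((hFr r p q x hz.1 t hz.2).unique hcomp)
  obtain ⟨a, b, c, H⟩ := exists_linearParabolic hx hT hF_smooth hpos hu_smooth hv_smooth
    (fun z hz => by
      rw [hut' z hz, hux' z hz, huxx' z hz]
      exact hu_pde z.1 hz.1 z.2 hz.2)
    (fun z hz => by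
      rw [hvt' z hz, hvx' z hz, hvxx' z hz]
      exact hv_pde z.1 hz.1 z.2 hz.2)
  have hw₀ : ∀ t ∈ Icc 0 T, u x₀ t - v x₀ t ≠ 0 := fun t ht => sub_ne_zero.2 (hlat t ht).1
  have hw₁ : ∀ t ∈ Icc 0 T, u x₁ t - v x₁ t ≠ 0 := fun t ht => sub_ne_zero.2 (hlat t ht).2
  have hZ : ∀ t, {x ∈ Icc x₀ x₁ | u x t = v x t} =
      zerosAt x₀ x₁ (fun z => u z.1 z.2 - v z.1 z.2) t := fun t => by
    simp only [zerosAt, sub_eq_zero]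
  simp only [hZ]
  refine ⟨fun t ht => H.finite_zerosAt hw₀ hw₁ ht, ?_⟩
  intro t' ht' x' hx' huv huvx t₁ t₂ h₁ h₁' h₂' h₂
  have hz : (x', t') ∈ rect x₀ x₁ T := ⟨Ioo_subset_Icc_self hx', Ioo_subset_Icc_self ht'⟩
  refine H.ncard_zerosAt_lt hw₀ hw₁ (x' := x') (t' := t') ⟨hz.1, sub_eq_zero.2 huv⟩ ?_
    h₁ h₁' h₂'.le h₂
  rw [pdx_sub hx hu_smooth hv_smooth hz, hux' _ hz, hvx' _ hz]
  exact sub_eq_zero.2 huvx
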